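/- Let K be a pure 3-dimensional simplicial complex with K = L ∪ P, where L and P are pure 3-dimensional subcomplexes of K. Suppose P = v∗D is the join of a vertex v with a triangulated 2-disk D not containing v (so P is generated by the tetrahedra t∪{v} for t a triangle of D, and its boundary is ∂P = D ∪ (v∗∂D), where ∂D is the subcomplex generated by the edges of D contained in exactly one triangle of D). Suppose further that L ∩ P is a triangulated 2-disk fully contained in ∂P. Then K shells down to L. -/

import Mathlib

/-!
STATEMENT 12 (Lemma 6.1): if K = L ∪ P where P = v ∗ D is a cone over a
triangulated 2-disk D and L ∩ P is a 2-disk contained in ∂P, then K shells down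
to L.
-/

open scoped Classical

namespace PaperFormal

variable {V : Type*}

/-- `K` is a finite abstract simplicial complex. -/
def IsComplex (K : Set (Finset V)) : Prop :=
  (∀ σ ∈ K, σ ≠ ∅) ∧ ∀ σ ∈ K, ∀ τ : Finset V, τ ⊆ σ → τ ≠ ∅ → τ ∈ K

/-- A facet is an inclusion-maximal face. -/
def IsFacet (K : Set (Finset V)) (σ : Finset V) : Prop :=
  σ ∈ K ∧ ∀ τ ∈ K, σ ⊆ τ → σ = τ

/-- `K` is pure of dimension `d`. -/
def PureDim (K : Set (Finset V)) (d : ℕ) : Prop :=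
  K.Nonempty ∧ ∀ σ, IsFacet K σ → σ.card = d + 1

/-- `K[θ_1,…,θ_m]` for the list `l = [θ_1,…,θ_m]`. -/
def generatedByL (K : Set (Finset V)) (l : List (Finset V)) : Set (Finset V) :=
  {τ ∈ K | ∃ θ ∈ l, τ ⊆ θ}

/-- The subcomplex of `K` generated by the faces in `S`. -/
def generatedBy (K S : Set (Finset V)) : Set (Finset V) :=
  {τ ∈ K | ∃ θ ∈ S, τ ⊆ θ}

/-- The shelling-down condition for the first `k` entries of `l`. -/
def DownSteps (K : Set (Finset V)) (d : ℕ) (l : List (Finset V)) (k : ℕ) : Prop :=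
  ∀ i, i < k →
    PureDim (generatedByL K [l.getD i ∅] ∩ generatedByL K (l.drop (i + 1))) (d - 1)

/-- The first `k` entries of `l` (which enumerates all facets of `K`) form a
shelling down of `K`. -/
def IsShellingDown (K : Set (Finset V)) (d : ℕ) (l : List (Finset V)) (k : ℕ) : Prop :=
  l.Nodup ∧ (∀ σ, σ ∈ l ↔ IsFacet K σ) ∧ k + 1 ≤ l.length ∧ DownSteps K d l k

/-- `K` shells down to the subcomplex `L`. -/
def ShellsDownTo (K : Set (Finset V)) (d : ℕ) (L : Set (Finset V)) : Prop :=
  ∃ l k, IsShellingDown K d l k ∧ L = generatedByL K (l.drop k)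

/-- The boundary of a pure `d`-dimensional complex `K`. -/
def bdry (K : Set (Finset V)) (d : ℕ) : Set (Finset V) :=
  generatedBy K {σ : Finset V | σ ∈ K ∧ σ.card = d ∧
    ∃! F, F ∈ K ∧ F.card = d + 1 ∧ σ ⊆ F}

/-- The join `v ∗ D` of a vertex `v` (not in any face of `D`) with `D`: its
faces are the faces of `D`, the sets `σ ∪ {v}` for `σ ∈ D`, and `{v}`. -/
def cone [DecidableEq V] (v : V) (D : Set (Finset V)) : Set (Finset V) :=
  D ∪ (insert v '' D) ∪ {{v}}

/-- The polyhedron of a collection of geometric faces. -/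
def poly {N : ℕ} (S : Set (Finset (EuclideanSpace ℝ (Fin N)))) :
    Set (EuclideanSpace ℝ (Fin N)) :=
  ⋃ σ ∈ S, convexHull ℝ (σ : Set (EuclideanSpace ℝ (Fin N)))

/-- `S` is homeomorphic to the closed `d`-dimensional ball. -/
def IsBallSet {N : ℕ} (d : ℕ) (S : Set (EuclideanSpace ℝ (Fin N))) : Prop :=
  Nonempty (↥S ≃ₜ ↥(Metric.closedBall (0 : EuclideanSpace ℝ (Fin d)) 1))

section partA
open Topology Metric

theorem log_homotopy (H : C(unitInterval × Circle, ℂ)) (hH : ∀ p, H p ≠ 0)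
    (l : C(Circle, ℂ)) (hl : ∀ z, Complex.exp (l z) = H (0, z)) :
    ∃ l' : C(Circle, ℂ), ∀ z, Complex.exp (l' z) = H (1, z) := by
  have cov := Complex.isCoveringMap_exp
  let H' : C(unitInterval × Circle, {z : ℂ // z ≠ 0}) := ⟨fun p => ⟨H p, hH p⟩, by fun_prop⟩
  have h0 : ∀ a, H' (0, a) = ⟨Complex.exp (l a), Complex.exp_ne_zero _⟩ := by
    intro a
    apply Subtype.ext
    exact (hl a).symm
  refine ⟨(cov.liftHomotopy H' l h0).comp ⟨fun z => (1, z), by fun_prop⟩, fun z => ?_⟩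
  have := congrFun (cov.liftHomotopy_lifts H' l h0) (1, z)
  exact congrArg Subtype.val this

theorem iod (f : ℂ → ℂ) (r : ℝ) (hr : 0 < r) (hf : ContinuousOn f (closedBall 0 r))
    (inj : Set.InjOn f (closedBall 0 r)) : f '' closedBall 0 r ∈ 𝓝 (f 0) := by
  have mem : ∀ (s : ℝ) (z : Circle), 0 ≤ s → s ≤ 1 → ((s * r : ℝ) : ℂ) * z ∈ closedBall (0:ℂ) r := by
    intro s z h0 h1
    simp only [mem_closedBall, dist_zero_right, norm_mul, Circle.norm_coe, mul_one]
    rw [Complex.ofReal_mul, norm_mul, Complex.norm_real, Complex.norm_real, Real.norm_of_nonneg h0,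
      Real.norm_of_nonneg hr.le]
    nlinarith
  have h0mem : (0:ℂ) ∈ closedBall (0:ℂ) r := by simp [hr.le]
  have mem1 : ∀ z : Circle, (r : ℂ) * z ∈ closedBall (0:ℂ) r := by
    intro z; simpa using mem 1 z (by norm_num) (by norm_num)
  have cf1 : Continuous fun z : Circle => f ((r:ℂ) * z) :=
    hf.comp_continuous (by fun_prop) mem1
  have ne1 : ∀ z : Circle, f ((r:ℂ) * z) ≠ f 0 := by
    intro z h
    have := inj (mem1 z) h0mem h
    simp [hr.ne'] at this
  obtain ⟨δ, hδ, hδ'⟩ : ∃ δ > 0, ∀ z : Circle, δ ≤ ‖f ((r:ℂ) * z) - f 0‖ := by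
    obtain ⟨z0, hz0⟩ := Continuous.exists_forall_le_of_hasCompactMulSupport
      (f := fun z : Circle => ‖f ((r:ℂ) * z) - f 0‖) (cf1.sub continuous_const).norm (HasCompactMulSupport.of_compactSpace _)
    exact ⟨_, norm_pos_iff.2 (sub_ne_zero.2 (ne1 z0)), hz0⟩
  rw [Metric.mem_nhds_iff]
  refine ⟨δ, hδ, fun w hw => ?_⟩
  by_contra hwn
  have hwn' : ∀ z ∈ closedBall (0:ℂ) r, f z ≠ w := fun z hz h => hwn ⟨z, hz, h⟩
  rw [mem_ball, dist_eq_norm] at hw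
  -- first homotopy
  let H1 : C(unitInterval × Circle, ℂ) := ⟨fun p => f (((p.1 * r : ℝ) : ℂ) * p.2) - w, by
    refine Continuous.sub (hf.comp_continuous (by fun_prop) fun p => mem _ _ p.1.2.1 p.1.2.2) continuous_const⟩
  obtain ⟨l1, hl1⟩ := log_homotopy H1
    (fun p => sub_ne_zero.2 (hwn' _ (mem _ _ p.1.2.1 p.1.2.2)))
    (ContinuousMap.const _ (Complex.log (f 0 - w))) (by
      intro z
      simp only [ContinuousMap.const_apply]
      rw [Complex.exp_log (sub_ne_zero.2 (hwn' _ h0mem))]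
      simp [H1])
  let H2 : C(unitInterval × Circle, ℂ) :=
    ⟨fun p => f ((r : ℂ) * p.2) - ((1 - ((p.1 : ℝ) : ℂ)) * w + ((p.1 : ℝ) : ℂ) * f 0), by
      refine Continuous.sub (cf1.comp continuous_snd) (by fun_prop)⟩
  obtain ⟨l2, hl2⟩ := log_homotopy H2 (by
    intro p h
    have h' : f ((r : ℂ) * p.2) - f 0 = (1 - ((p.1 : ℝ) : ℂ)) * (w - f 0) := by
      have : f ((r : ℂ) * p.2) - ((1 - ((p.1 : ℝ) : ℂ)) * w + ((p.1 : ℝ) : ℂ) * f 0) = 0 := h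
      linear_combination this
    have h3 := hδ' p.2
    rw [h', norm_mul] at h3
    have h4 : ‖(1 - ((p.1 : ℝ) : ℂ))‖ ≤ 1 := by
      rw [← Complex.ofReal_one, ← Complex.ofReal_sub, Complex.norm_real, Real.norm_eq_abs, abs_le]
      have := p.1.2.1; have := p.1.2.2
      constructor <;> linarith
    nlinarith [norm_nonneg (w - f 0)]) l1 (by
      intro z; rw [hl1]; simp [H1, H2])
  -- third
  have memA : ∀ (s : ℝ) (z : Circle), 0 ≤ s → ((r / (1 + s) : ℝ) : ℂ) * z ∈ closedBall (0:ℂ) r := by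
    intro s z hs
    have := mem (1/(1+s)) z (by positivity) (by rw [div_le_one (by positivity)]; linarith)
    convert this using 3
    ring
  have memB : ∀ (s : ℝ) (z : Circle), 0 ≤ s → -(((s * r / (1 + s) : ℝ) : ℂ) * z) ∈ closedBall (0:ℂ) r := by
    intro s z hs
    have := mem (s/(1+s)) z (by positivity) (by rw [div_le_one (by positivity)]; linarith)
    rw [mem_closedBall, dist_zero_right] at this ⊢
    rw [norm_neg]
    convert this using 4
    ring
  have hne : ∀ p : unitInterval × Circle, (1 + (p.1 : ℝ)) ≠ 0 := by
    intro p; have := p.1.2.1; positivity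
  let H3 : C(unitInterval × Circle, ℂ) :=
    ⟨fun p => f (((r / (1 + (p.1:ℝ)) : ℝ) : ℂ) * p.2) - f (-((((p.1:ℝ) * r / (1 + (p.1:ℝ)) : ℝ) : ℂ) * p.2)), by
      refine Continuous.sub (hf.comp_continuous ?_ fun p => memA _ _ p.1.2.1)
        (hf.comp_continuous ?_ fun p => memB _ _ p.1.2.1)
      · refine Continuous.mul (Complex.continuous_ofReal.comp ?_) (by fun_prop)
        exact Continuous.div (by fun_prop) (by fun_prop) hne
      · refine Continuous.neg (Continuous.mul (Complex.continuous_ofReal.comp ?_) (by fun_prop))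
        exact Continuous.div (by fun_prop) (by fun_prop) hne⟩
  obtain ⟨l3, hl3⟩ := log_homotopy H3 (by
    intro p h
    have h1 := inj (memA _ p.2 p.1.2.1) (memB _ p.2 p.1.2.1) (sub_eq_zero.1 h)
    rw [← neg_mul] at h1
    have h2 := mul_right_cancel₀ (Circle.coe_ne_zero p.2) h1
    have h3 : r / (1 + (p.1:ℝ)) = -((p.1:ℝ) * r / (1 + (p.1:ℝ))) := by exact_mod_cast h2
    have h4 : 0 < r / (1 + (p.1:ℝ)) := by have := p.1.2.1; positivity
    have h5 : 0 ≤ (p.1:ℝ) * r / (1 + (p.1:ℝ)) := by have := p.1.2.1; positivity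
    linarith) l2 (by intro z; rw [hl2]; simp [H2, H3])
  have hl3' : ∀ z : Circle, Complex.exp (l3 z) = f ((r/2:ℝ) * z) - f (-((r/2:ℝ) * z)) := by
    intro z; rw [hl3]; simp only [H3, ContinuousMap.coe_mk]; norm_num
  have odd : ∀ z : Circle, Complex.exp (l3 (-z)) = - Complex.exp (l3 z) := by
    intro z
    rw [hl3', hl3']
    simp
  have key : ∀ z : Circle, ∃ n : ℤ, l3 (-z) - l3 z = n * (2 * Real.pi * Complex.I) + Real.pi * Complex.I := by
    intro z
    have : Complex.exp (l3 (-z)) = Complex.exp (l3 z + Real.pi * Complex.I) := by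
      rw [odd, Complex.exp_add, Complex.exp_pi_mul_I]; ring
    obtain ⟨n, hn⟩ := Complex.exp_eq_exp_iff_exists_int.1 this
    exact ⟨n, by rw [hn]; ring⟩
  choose n hn using key
  have him : ∀ z, (l3 (-z) - l3 z).im / (2 * Real.pi) - 1/2 = n z := by
    intro z
    rw [hn z]
    simp
    field_simp
    ring
  have hcont : Continuous n := by
    have : Continuous fun z => (n z : ℝ) := by
      simp_rw [← him]
      refine Continuous.sub (Continuous.div_const (Complex.continuous_im.comp ?_) _) continuous_const
      exact (l3.continuous.comp continuous_neg).sub l3.continuous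
    exact Int.isClosedEmbedding_coe_real.isEmbedding.continuous_iff.2 this
  have hconst : n 1 = n (-1) := PreconnectedSpace.constant inferInstance hcont
  have h1 := him 1
  have h2 := him (-1)
  rw [neg_neg, ← hconst, ← h1] at h2
  simp only [Complex.sub_im] at h2
  have h3 : (n 1 : ℝ) = -1/2 := by
    rw [← h1]
    simp only [Complex.sub_im]
    field_simp at h2 ⊢
    linarith
  have h4 : (2 * n 1 : ℤ) = -1 := by
    have : (2 * n 1 : ℝ) = -1 := by rw [h3]; ring
    exact_mod_cast this
  omega
end partA

section partB
open Topology Metric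

theorem cover_trivial {B ι : Type*} [TopologicalSpace B] (b0 : B)
    (H : C(unitInterval × B, B)) (H0 : ∀ b, H (0, b) = b0) (H1 : ∀ b, H (1, b) = b)
    (U : ι → Set B) (hU : ∀ x, IsOpen (U x)) (hcov : ∀ p, ∃ x, p ∈ U x)
    (c : ι → ι → ZMod 2) (hc0 : ∀ x, c x x = 0)
    (hc : ∀ x y z p, p ∈ U x → p ∈ U y → p ∈ U z → c x y + c y z = c x z) :
    ∃ g : ι → B → ZMod 2, (∀ x, ContinuousOn (g x) (U x)) ∧
      ∀ x y p, p ∈ U x → p ∈ U y → g y p = g x p + c x y := by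
  choose idx hidx using hcov
  let Z : FiberBundleCore ι B (ZMod 2) :=
    { baseSet := U
      isOpen_baseSet := hU
      indexAt := idx
      mem_baseSet_at := hidx
      coordChange := fun x y _ a => a + c x y
      coordChange_self := by intro i x _ v; simp [hc0]
      continuousOn_coordChange := by
        intro i j
        exact ((continuous_of_discreteTopology (f := fun a : ZMod 2 => a + c i j)).comp continuous_snd).continuousOn
      coordChange_comp := by
        intro i j k x hx v
        rw [add_assoc, hc i j k x hx.1.1 hx.1.2 hx.2] }
  have cov : IsCoveringMap (Bundle.TotalSpace.proj : Bundle.TotalSpace (ZMod 2) Z.Fiber → B) := FiberBundle.isCoveringMap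
  let e0 : Bundle.TotalSpace (ZMod 2) Z.Fiber := ⟨b0, (0 : ZMod 2)⟩
  let L := cov.liftHomotopy H (ContinuousMap.const B e0) (by intro a; rw [H0]; rfl)
  have hL : ∀ b, (L (1, b)).proj = b := by
    intro b
    have := congrFun (cov.liftHomotopy_lifts H (ContinuousMap.const B e0) (by intro a; rw [H0]; rfl)) (1, b)
    rw [H1] at this
    exact this
  refine ⟨fun x p => (Z.localTriv x (L (1, p))).2, ?_, ?_⟩
  · intro x
    refine continuous_snd.comp_continuousOn ?_
    refine (Z.localTriv x).continuousOn_toFun.comp ?_ ?_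
    · exact (L.continuous.comp (by fun_prop)).continuousOn
    · intro p hp
      exact (Z.mem_localTriv_source x _).2 (by show (L (1,p)).proj ∈ U x; rw [hL]; exact hp)
  · intro x y p hx hy
    simp only [Z.localTriv_apply]
    show (show ZMod 2 from (L (1,p)).snd) + c (idx (L (1,p)).proj) y = (show ZMod 2 from (L (1,p)).snd) + c (idx (L (1,p)).proj) x + c x y
    rw [add_assoc, hc _ x y p _ hx hy]
    have := hidx (L (1,p)).proj
    rwa [hL] at this ⊢
end partB

section comb
variable {V : Type*}

def Free (T : Finset (Finset V)) (e : Finset V) : Prop :=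
  e.card = 2 ∧ ∃ t ∈ T, e ⊆ t ∧ ∀ s ∈ T, e ⊆ s → s = t

structure Surf (T : Finset (Finset V)) : Prop where
  card3 : ∀ t ∈ T, t.card = 3
  ne : T.Nonempty
  deg2 : ∀ e : Finset V, e.card = 2 → ∀ r ∈ T, ∀ s ∈ T, ∀ t ∈ T, e ⊆ r → e ⊆ s → e ⊆ t →
    r = s ∨ r = t ∨ s = t
  star : ∀ (x : V) (p : Finset V → Prop),
    (∀ s ∈ T, ∀ t ∈ T, ∀ e : Finset V, e.card = 2 → x ∈ e → e ⊆ s → e ⊆ t → (p s ↔ p t)) →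
    ∀ s ∈ T, ∀ t ∈ T, x ∈ s → x ∈ t → (p s ↔ p t)
  dual : ∀ p : Finset V → Prop,
    (∀ s ∈ T, ∀ t ∈ T, ∀ e : Finset V, e.card = 2 → e ⊆ s → e ⊆ t → (p s ↔ p t)) →
    ∀ s ∈ T, ∀ t ∈ T, (p s ↔ p t)
  J : ∀ φ : Finset V → ZMod 2, (∀ t ∈ T, ∑ e ∈ t.powersetCard 2, φ e = 0) →
    (∀ e, Free T e → φ e = 0) →
    ∃ g : V → ZMod 2, (∀ t ∈ T, ∀ e : Finset V, e.card = 2 → e ⊆ t → φ e = ∑ x ∈ e, g x) ∧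
      ∀ e, Free T e → ∀ x ∈ e, g x = 0

theorem oddpar (Q : Finset (Finset V)) (c : V) (hQ : ∀ q ∈ Q, q.card = 3 ∧ c ∈ q) (a : V)
    (hac : a ≠ c) (ha : Odd (Q.filter (a ∈ ·)).card) :
    ∃ b, b ≠ a ∧ b ≠ c ∧ Odd (Q.filter (b ∈ ·)).card := by
  by_contra hcon
  push Not at hcon
  let N : Finset V := (Q.biUnion id).erase c
  have h1 : ∑ y ∈ N, (Q.filter (y ∈ ·)).card = ∑ q ∈ Q, (N.filter (· ∈ q)).card :=
    Finset.sum_card_bipartiteAbove_eq_sum_card_bipartiteBelow (fun (y : V) (q : Finset V) => y ∈ q)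
  have h2 : ∀ q ∈ Q, (N.filter (· ∈ q)).card = 2 := by
    intro q hq
    have : N.filter (· ∈ q) = q.erase c := by
      ext y
      simp only [N, Finset.mem_filter, Finset.mem_erase, Finset.mem_biUnion, id]
      constructor
      · rintro ⟨⟨h, -⟩, h'⟩; exact ⟨h, h'⟩
      · rintro ⟨h, h'⟩; exact ⟨⟨h, q, hq, h'⟩, h'⟩
    rw [this, Finset.card_erase_of_mem (hQ q hq).2, (hQ q hq).1]
  rw [Finset.sum_congr rfl h2] at h1
  have haN : a ∈ N := by
    obtain ⟨q, hq⟩ := Finset.card_pos.1 ha.pos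
    rw [Finset.mem_filter] at hq
    simp only [N, Finset.mem_erase, Finset.mem_biUnion, id]
    exact ⟨hac, q, hq⟩
  rw [← Finset.add_sum_erase _ _ haN] at h1
  have h3 : Even (∑ x ∈ N.erase a, (Q.filter (x ∈ ·)).card) := by
    refine Finset.even_sum _ fun y hy => ?_
    rw [Finset.mem_erase] at hy
    have := hcon y hy.1 (Finset.mem_erase.1 hy.2).1
    simpa using this
  simp only [Finset.sum_const, smul_eq_mul] at h1
  have : Even (Q.card * 2) := by simp
  rw [← h1] at this
  exact (Nat.not_even_iff_odd.2 (ha.add_even h3)) this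

theorem pair_card {x y : V} (h : x ≠ y) : ({x, y} : Finset V).card = 2 := Finset.card_pair h

theorem edge_of_mem {e : Finset V} {x : V} (he : e.card = 2) (hx : x ∈ e) :
    ∃ y, y ≠ x ∧ e = {x, y} := by
  obtain ⟨a, b, hab, rfl⟩ := Finset.card_eq_two.1 he
  simp only [Finset.mem_insert, Finset.mem_singleton] at hx
  rcases hx with rfl | rfl
  · exact ⟨b, hab.symm, rfl⟩
  · exact ⟨a, hab, Finset.pair_comm _ _⟩

theorem pair_sub {x y : V} {t : Finset V} : ({x, y} : Finset V) ⊆ t ↔ x ∈ t ∧ y ∈ t := by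
  simp [Finset.insert_subset_iff]

/-- degree at most two in counting form -/
theorem Surf.count {T : Finset (Finset V)} (hT : Surf T) {c z : V} (hz : z ≠ c) (Q : Finset (Finset V))
    (hQ : ∀ q ∈ Q, q ∈ T ∧ c ∈ q) : (Q.filter (z ∈ ·)).card ≤ 2 := by
  by_contra h
  push Not at h
  obtain ⟨r, hr, s, hs, t, ht, h1, h2, h3⟩ := Finset.two_lt_card.1 h
  simp only [Finset.mem_filter] at hr hs ht
  rcases hT.deg2 {z, c} (pair_card hz) r (hQ r hr.1).1 s (hQ s hs.1).1 t (hQ t ht.1).1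
    (pair_sub.2 ⟨hr.2, (hQ r hr.1).2⟩) (pair_sub.2 ⟨hs.2, (hQ s hs.1).2⟩)
    (pair_sub.2 ⟨ht.2, (hQ t ht.1).2⟩) with h | h | h <;> contradiction

theorem odd_le_two {n : ℕ} (h : Odd n) (h2 : n ≤ 2) : n = 1 := by
  obtain ⟨k, hk⟩ := h; omega

theorem fan {T : Finset (Finset V)} (hT : Surf T) {t s1 s2 : Finset V} {a b c : V}
    (ht : t ∈ T) (hab : a ≠ b) (hac : a ≠ c) (hbc : b ≠ c) (hte : t = {a, b, c})
    (hs1 : s1 ∈ T) (hs1t : s1 ≠ t) (ha1 : a ∈ s1) (hc1 : c ∈ s1)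
    (hs2 : s2 ∈ T) (hs2t : s2 ≠ t) (hb2 : b ∈ s2) (hc2 : c ∈ s2)
    (p : Finset V → Prop)
    (hp : ∀ r ∈ T.erase t, ∀ s ∈ T.erase t, ∀ e : Finset V, e.card = 2 → c ∈ e → e ⊆ r → e ⊆ s →
      (p r ↔ p s)) (hp1 : p s1) (hp2 : ¬ p s2) :
    ∃ e, Free T e ∧ c ∈ e ∧ ∃ q ∈ T, q ≠ t ∧ p q ∧ e ⊆ q := by
  have hat : a ∈ t := by simp [hte]
  have hbt : b ∈ t := by simp [hte]
  have hct : c ∈ t := by simp [hte]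
  let Q := (T.erase t).filter (fun q => c ∈ q ∧ p q)
  have memQ : ∀ q, q ∈ Q ↔ (q ≠ t ∧ q ∈ T) ∧ c ∈ q ∧ p q := by
    intro q; simp only [Q, Finset.mem_filter, Finset.mem_erase]
  have hQ1 : ∀ q ∈ Q, q.card = 3 ∧ c ∈ q := fun q hq =>
    ⟨hT.card3 q ((memQ q).1 hq).1.2, ((memQ q).1 hq).2.1⟩
  have hQ2 : ∀ q ∈ Q, q ∈ T ∧ c ∈ q := fun q hq =>
    ⟨((memQ q).1 hq).1.2, ((memQ q).1 hq).2.1⟩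
  have ha : (Q.filter (a ∈ ·)).card = 1 := by
    rw [Finset.card_eq_one]
    refine ⟨s1, ?_⟩
    ext q
    rw [Finset.mem_filter, Finset.mem_singleton, memQ]
    constructor
    · rintro ⟨⟨⟨h1, h2⟩, h3, h4⟩, h5⟩
      rcases hT.deg2 {a, c} (pair_card hac) q h2 s1 hs1 t ht (pair_sub.2 ⟨h5, h3⟩)
        (pair_sub.2 ⟨ha1, hc1⟩) (pair_sub.2 ⟨hat, hct⟩) with h | h | h
      · exact h
      · exact absurd h h1
      · exact absurd h hs1t
    · rintro rfl
      exact ⟨⟨⟨hs1t, hs1⟩, hc1, hp1⟩, ha1⟩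
  obtain ⟨z, hza, hzc, hz⟩ := oddpar Q c hQ1 a hac (by rw [ha]; exact odd_one)
  have hz1 := odd_le_two hz (hT.count hzc Q hQ2)
  obtain ⟨q, hq⟩ := Finset.card_eq_one.1 hz1
  have hqm : q ∈ Q.filter (z ∈ ·) := by rw [hq]; simp
  rw [Finset.mem_filter, memQ] at hqm
  obtain ⟨⟨⟨hqt, hqT⟩, hcq, hpq⟩, hzq⟩ := hqm
  have hzb : z ≠ b := by
    rintro rfl
    rcases hT.deg2 {z, c} (pair_card hzc) q hqT s2 hs2 t ht (pair_sub.2 ⟨hzq, hcq⟩)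
        (pair_sub.2 ⟨hb2, hc2⟩) (pair_sub.2 ⟨hbt, hct⟩) with h | h | h
    · exact hp2 (h ▸ hpq)
    · exact hqt h
    · exact hs2t h
  have hzt : z ∉ t := by rw [hte]; simp [hza, hzb, hzc]
  refine ⟨{z, c}, ⟨pair_card hzc, q, hqT, pair_sub.2 ⟨hzq, hcq⟩, ?_⟩, by simp, q, hqT, hqt, hpq,
    pair_sub.2 ⟨hzq, hcq⟩⟩
  intro s hs hse
  have hst : s ≠ t := fun h => hzt (h ▸ (pair_sub.1 hse).1)
  have hps : p s := (hp q (Finset.mem_erase.2 ⟨hqt, hqT⟩) s (Finset.mem_erase.2 ⟨hst, hs⟩) {z, c}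
    (pair_card hzc) (by simp) (pair_sub.2 ⟨hzq, hcq⟩) hse).1 hpq
  have : s ∈ Q.filter (z ∈ ·) := by
    rw [Finset.mem_filter, memQ]
    exact ⟨⟨⟨hst, hs⟩, (pair_sub.1 hse).2, hps⟩, (pair_sub.1 hse).1⟩
  rw [hq] at this
  simpa using this

theorem tri_of_edges {t e1 e2 : Finset V} {c : V} (ht : t.card = 3) (h1 : e1.card = 2)
    (h2 : e2.card = 2) (hc1 : c ∈ e1) (hc2 : c ∈ e2) (hs1 : e1 ⊆ t) (hs2 : e2 ⊆ t) (hne : e1 ≠ e2) :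
    ∃ a b, a ≠ b ∧ a ≠ c ∧ b ≠ c ∧ t = {a, b, c} ∧ e1 = {c, a} ∧ e2 = {c, b} := by
  obtain ⟨a, ha, rfl⟩ := edge_of_mem h1 hc1
  obtain ⟨b, hb, rfl⟩ := edge_of_mem h2 hc2
  have hab : a ≠ b := fun h => hne (by rw [h])
  refine ⟨a, b, hab, ha, hb, ?_, rfl, rfl⟩
  symm
  apply Finset.eq_of_subset_of_card_le
  · rw [pair_sub] at hs1 hs2
    simp [Finset.insert_subset_iff, hs1, hs2]
  · rw [ht, Finset.card_eq_three.2 ⟨a, b, c, hab, ha, hb, rfl⟩]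

theorem tri_decomp {t : Finset V} {c : V} (ht : t.card = 3) (hc : c ∈ t) :
    ∃ a b, a ≠ b ∧ a ≠ c ∧ b ≠ c ∧ t = {a, b, c} := by
  have : (t.erase c).card = 2 := by rw [Finset.card_erase_of_mem hc, ht]
  obtain ⟨a, b, hab, h⟩ := Finset.card_eq_two.1 this
  have ha : a ∈ t.erase c := by rw [h]; simp
  have hb : b ∈ t.erase c := by rw [h]; simp
  refine ⟨a, b, hab, Finset.ne_of_mem_erase ha, Finset.ne_of_mem_erase hb, ?_⟩
  rw [← Finset.insert_erase hc, h]
  ext; simp; tauto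

/-- any boundary vertex lies on a second boundary edge -/
theorem Surf.two_free {T : Finset (Finset V)} (hT : Surf T) {x y : V} (hxy : y ≠ x)
    (hf : Free T {x, y}) : ∃ z, z ≠ x ∧ z ≠ y ∧ Free T {x, z} := by
  let Q := T.filter (x ∈ ·)
  have memQ : ∀ q, q ∈ Q ↔ q ∈ T ∧ x ∈ q := by intro q; simp [Q]
  obtain ⟨-, t, ht, hst, hu⟩ := hf
  rw [pair_sub] at hst
  have ha : (Q.filter (y ∈ ·)).card = 1 := by
    rw [Finset.card_eq_one]
    refine ⟨t, ?_⟩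
    ext q
    rw [Finset.mem_filter, Finset.mem_singleton, memQ]
    constructor
    · rintro ⟨⟨h1, h2⟩, h3⟩
      exact hu q h1 (pair_sub.2 ⟨h2, h3⟩)
    · rintro rfl
      exact ⟨⟨ht, hst.1⟩, hst.2⟩
  obtain ⟨z, hzy, hzx, hz⟩ := oddpar Q x
    (fun q hq => ⟨hT.card3 q ((memQ q).1 hq).1, ((memQ q).1 hq).2⟩) y hxy (by rw [ha]; exact odd_one)
  have hz1 := odd_le_two hz (hT.count hzx Q fun q hq => (memQ q).1 hq)
  obtain ⟨q, hq⟩ := Finset.card_eq_one.1 hz1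
  have hqm : q ∈ Q.filter (z ∈ ·) := by rw [hq]; simp
  rw [Finset.mem_filter, memQ] at hqm
  refine ⟨z, hzx, hzy, pair_card hzx.symm, q, hqm.1.1, pair_sub.2 ⟨hqm.1.2, hqm.2⟩, ?_⟩
  intro s hs hse
  rw [pair_sub] at hse
  have : s ∈ Q.filter (z ∈ ·) := by
    rw [Finset.mem_filter, memQ]
    exact ⟨⟨hs, hse.1⟩, hse.2⟩
  rw [hq] at this
  simpa using this

theorem no3_aux (x : V) : ∀ (n : ℕ) (Q : Finset (Finset V)), Q.card = n →
    (∀ q ∈ Q, q.card = 3 ∧ x ∈ q) →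
    (∀ y, y ≠ x → ∀ r ∈ Q, ∀ s ∈ Q, ∀ t ∈ Q, y ∈ r → y ∈ s → y ∈ t → r = s ∨ r = t ∨ s = t) →
    (∀ p : Finset V → Prop, (∀ s ∈ Q, ∀ t ∈ Q, ∀ y, y ≠ x → y ∈ s → y ∈ t → (p s ↔ p t)) →
      ∀ s ∈ Q, ∀ t ∈ Q, (p s ↔ p t)) →
    ∀ y1 y2 y3, y1 ≠ x → y2 ≠ x → y3 ≠ x → y1 ≠ y2 → y1 ≠ y3 → y2 ≠ y3 →
    (∃ t ∈ Q, y1 ∈ t ∧ ∀ s ∈ Q, y1 ∈ s → s = t) → (∃ t ∈ Q, y2 ∈ t ∧ ∀ s ∈ Q, y2 ∈ s → s = t) →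
    (∃ t ∈ Q, y3 ∈ t ∧ ∀ s ∈ Q, y3 ∈ s → s = t) → False := by
  intro n
  induction n with
  | zero =>
    intro Q h0 _ _ _ y1 y2 y3 _ _ _ _ _ _ ⟨t, ht, _⟩
    rw [Finset.card_eq_zero.1 h0] at ht
    simp at ht
  | succ n ih =>
    intro Q hn hQ hdeg hconn y1 y2 y3 h1x h2x h3x h12 h13 h23 ⟨t1, ht1, hy1, hu1⟩ ⟨t2, ht2, hy2, hu2⟩
      ⟨t3, ht3, hy3, hu3⟩
    have hxt := (hQ t1 ht1).2
    obtain ⟨z, hz1, hzx, hte⟩ : ∃ z, z ≠ y1 ∧ z ≠ x ∧ t1 = {z, y1, x} := by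
      obtain ⟨a, b, hab, ha, hb, h⟩ := tri_decomp (hQ t1 ht1).1 hxt
      rw [h] at hy1
      simp only [Finset.mem_insert, Finset.mem_singleton] at hy1
      rcases hy1 with rfl | rfl | rfl
      · exact ⟨b, hab.symm, hb, by rw [h]; ext; simp; tauto⟩
      · exact ⟨a, hab, ha, h⟩
      · exact absurd rfl h1x
    have hzt : z ∈ t1 := by simp [hte]
    have hmem : ∀ y, y ∈ t1 → y ≠ x → y = z ∨ y = y1 := by
      intro y hy hyx
      rw [hte] at hy
      simp only [Finset.mem_insert, Finset.mem_singleton] at hy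
      tauto
    by_cases hfz : ∀ s ∈ Q, z ∈ s → s = t1
    · have hall := hconn (· = t1) (by
        have : ∀ s ∈ Q, ∀ t ∈ Q, ∀ y, y ≠ x → y ∈ s → y ∈ t → s = t1 → t = t1 := by
          rintro s hs t ht y hy hys hyt rfl
          rcases hmem y hys hy with rfl | rfl
          · exact hfz t ht hyt
          · exact hu1 t ht hyt
        intro s hs t ht y hy hys hyt
        exact ⟨this s hs t ht y hy hys hyt, this t ht s hs y hy hyt hys⟩)
      have e2 : t2 = t1 := (hall t2 ht2 t1 ht1).2 rfl
      have e3 : t3 = t1 := (hall t3 ht3 t1 ht1).2 rfl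
      subst e2
      have k2 := hmem y2 hy2 h2x
      have k3 := hmem y3 (e3 ▸ hy3) h3x
      grind
    · push Not at hfz
      obtain ⟨s0, hs0, hzs0, hs0t⟩ := hfz
      have hsz : ∀ s ∈ Q, z ∈ s → s ≠ t1 → s = s0 := by
        intro s hs hzs hst
        rcases hdeg z hzx s hs s0 hs0 t1 ht1 hzs hzs0 hzt with h | h | h
        · exact h
        · exact absurd h hst
        · exact absurd h hs0t
      have y2t : y2 ∉ t1 := by
        intro h
        rcases hmem y2 h h2x with rfl | rfl
        · exact hs0t ((hu2 s0 hs0 hzs0).trans (hu2 t1 ht1 hzt).symm)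
        · exact h12 rfl
      have y3t : y3 ∉ t1 := by
        intro h
        rcases hmem y3 h h3x with rfl | rfl
        · exact hs0t ((hu3 s0 hs0 hzs0).trans (hu3 t1 ht1 hzt).symm)
        · exact h13 rfl
      refine ih (Q.erase t1) (by rw [Finset.card_erase_of_mem ht1, hn]; rfl)
        (fun q hq => hQ q (Finset.mem_of_mem_erase hq))
        (fun y hy r hr s hs t ht => hdeg y hy r (Finset.mem_of_mem_erase hr) s
          (Finset.mem_of_mem_erase hs) t (Finset.mem_of_mem_erase ht)) ?_ z y2 y3 hzx h2x h3x
        (fun h => y2t (h ▸ hzt)) (fun h => y3t (h ▸ hzt)) h23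
        ⟨s0, Finset.mem_erase.2 ⟨hs0t, hs0⟩, hzs0, fun s hs hzs =>
          hsz s (Finset.mem_of_mem_erase hs) hzs (Finset.ne_of_mem_erase hs)⟩
        ⟨t2, Finset.mem_erase.2 ⟨fun h => y2t (h ▸ hy2), ht2⟩, hy2,
          fun s hs => hu2 s (Finset.mem_of_mem_erase hs)⟩
        ⟨t3, Finset.mem_erase.2 ⟨fun h => y3t (h ▸ hy3), ht3⟩, hy3,
          fun s hs => hu3 s (Finset.mem_of_mem_erase hs)⟩
      intro p hp s hs t ht
      have key := hconn (fun s => if s = t1 then p s0 else p s) (by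
        intro a ha b hb y hy hya hyb
        by_cases hs1 : a = t1
        · by_cases ht1' : b = t1
          · simp [hs1, ht1']
          · rw [hs1] at hya
            simp only [if_pos hs1, if_neg ht1']
            rcases hmem y hya hy with rfl | rfl
            · rw [hsz b hb hyb ht1']
            · exact absurd (hu1 b hb hyb) ht1'
        · by_cases ht1' : b = t1
          · rw [ht1'] at hyb
            simp only [if_pos ht1', if_neg hs1]
            rcases hmem y hyb hy with rfl | rfl
            · rw [hsz a ha hya hs1]
            · exact absurd (hu1 a ha hya) hs1
          · simp only [if_neg hs1, if_neg ht1']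
            exact hp a (Finset.mem_erase.2 ⟨hs1, ha⟩) b (Finset.mem_erase.2 ⟨ht1', hb⟩) y hy hya hyb)
        s (Finset.mem_of_mem_erase hs) t (Finset.mem_of_mem_erase ht)
      simpa only [if_neg (Finset.ne_of_mem_erase hs), if_neg (Finset.ne_of_mem_erase ht)] using key

theorem Surf.no3 {T : Finset (Finset V)} (hT : Surf T) {x y1 y2 y3 : V} (h1 : y1 ≠ x) (h2 : y2 ≠ x)
    (h3 : y3 ≠ x) (f1 : Free T {x, y1}) (f2 : Free T {x, y2}) (f3 : Free T {x, y3}) :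
    y1 = y2 ∨ y1 = y3 ∨ y2 = y3 := by
  by_contra hcon
  push Not at hcon
  have conv : ∀ y, y ≠ x → Free T {x, y} → ∃ t ∈ T.filter (x ∈ ·), y ∈ t ∧
      ∀ s ∈ T.filter (x ∈ ·), y ∈ s → s = t := by
    rintro y hy ⟨-, t, ht, hs, hu⟩
    rw [pair_sub] at hs
    refine ⟨t, Finset.mem_filter.2 ⟨ht, hs.1⟩, hs.2, fun s hs hys => ?_⟩
    rw [Finset.mem_filter] at hs
    exact hu s hs.1 (pair_sub.2 ⟨hs.2, hys⟩)
  refine no3_aux x _ (T.filter (x ∈ ·)) rfl (fun q hq => ?_) ?_ ?_ y1 y2 y3 h1 h2 h3 hcon.1 hcon.2.1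
    hcon.2.2 (conv _ h1 f1) (conv _ h2 f2) (conv _ h3 f3)
  · rw [Finset.mem_filter] at hq
    exact ⟨hT.card3 q hq.1, hq.2⟩
  · intro y hy r hr s hs t ht hyr hys hyt
    rw [Finset.mem_filter] at hr hs ht
    exact hT.deg2 {x, y} (pair_card hy.symm) r hr.1 s hs.1 t ht.1 (pair_sub.2 ⟨hr.2, hyr⟩)
      (pair_sub.2 ⟨hs.2, hys⟩) (pair_sub.2 ⟨ht.2, hyt⟩)
  · intro p hp s hs t ht
    rw [Finset.mem_filter] at hs ht
    refine hT.star x p ?_ s hs.1 t ht.1 hs.2 ht.2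
    intro s hs t ht e he hxe hes het
    obtain ⟨y, hy, rfl⟩ := edge_of_mem he hxe
    rw [pair_sub] at hes het
    exact hp s (Finset.mem_filter.2 ⟨hs, hes.1⟩) t (Finset.mem_filter.2 ⟨ht, het.1⟩) y hy hes.2 het.2

end comb

section comb2
variable {V : Type*}

theorem Pconst {T : Finset (Finset V)} (hT : Surf T) {t : Finset V} (ht : t ∈ T) (c : V)
    (hG : (∀ e : Finset V, e.card = 2 → e ⊆ t → c ∈ e → ∃ s ∈ T, s ≠ t ∧ e ⊆ s) →
      ∀ f, Free T f → c ∉ f)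
    (p : Finset V → Prop)
    (hp : ∀ r ∈ T.erase t, ∀ s ∈ T.erase t, ∀ e : Finset V, e.card = 2 → c ∈ e → e ⊆ r → e ⊆ s →
      (p r ↔ p s)) {e1 e2 s1 s2 : Finset V} (h1 : e1.card = 2) (h2 : e2.card = 2)
    (hc1 : c ∈ e1) (hc2 : c ∈ e2) (ht1 : e1 ⊆ t) (ht2 : e2 ⊆ t)
    (hs1 : s1 ∈ T.erase t) (hs2 : s2 ∈ T.erase t) (he1 : e1 ⊆ s1) (he2 : e2 ⊆ s2) :
    p s1 ↔ p s2 := by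
  by_cases hne : e1 = e2
  · subst hne
    exact hp s1 hs1 s2 hs2 e1 h1 hc1 he1 he2
  obtain ⟨a, b, hab, hac, hbc, hte, rfl, rfl⟩ :=
    tri_of_edges (hT.card3 t ht) h1 h2 hc1 hc2 ht1 ht2 hne
  rw [Finset.mem_erase] at hs1 hs2
  have hno := hG (by
    intro e he het hce
    obtain ⟨y, hy, rfl⟩ := edge_of_mem he hce
    have : y ∈ t := (pair_sub.1 het).2
    rw [hte] at this
    simp only [Finset.mem_insert, Finset.mem_singleton] at this
    rcases this with rfl | rfl | rfl
    · exact ⟨s1, hs1.2, hs1.1, he1⟩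
    · exact ⟨s2, hs2.2, hs2.1, he2⟩
    · exact absurd rfl hy)
  rw [pair_sub] at he1 he2
  constructor
  · intro hp1
    by_contra hp2
    obtain ⟨f, hf, hcf, -⟩ := fan hT ht hab hac hbc hte hs1.2 hs1.1 he1.2 he1.1 hs2.2 hs2.1 he2.2
      he2.1 p hp hp1 hp2
    exact hno f hf hcf
  · intro hp2
    by_contra hp1
    have hte' : t = {b, a, c} := by rw [hte]; ext; simp; tauto
    obtain ⟨f, hf, hcf, -⟩ := fan hT ht hab.symm hbc hac hte' hs2.2 hs2.1 he2.2
      he2.1 hs1.2 hs1.1 he1.2 he1.1 p hp hp2 hp1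
    exact hno f hf hcf

theorem edges_meet {t e1 e2 : Finset V} (ht : t.card = 3) (h1 : e1.card = 2) (h2 : e2.card = 2)
    (hs1 : e1 ⊆ t) (hs2 : e2 ⊆ t) : ∃ c, c ∈ e1 ∧ c ∈ e2 := by
  by_contra hcon
  push Not at hcon
  have hd : Disjoint e1 e2 := Finset.disjoint_left.2 hcon
  have := Finset.card_le_card (Finset.union_subset hs1 hs2)
  rw [Finset.card_union_of_disjoint hd] at this
  omega

structure Good (T : Finset (Finset V)) (t : Finset V) : Prop where
  mem : t ∈ T
  nf : ∃ e : Finset V, e.card = 2 ∧ e ⊆ t ∧ ∃ s ∈ T, s ≠ t ∧ e ⊆ s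
  hG : ∀ c ∈ t, (∀ e : Finset V, e.card = 2 → e ⊆ t → c ∈ e → ∃ s ∈ T, s ≠ t ∧ e ⊆ s) →
      ∀ f, Free T f → c ∉ f
  fr : (∃ e, Free T e ∧ e ⊆ t) ∨ ∀ e, ¬ Free T e

theorem zmod2_add_self (k : ZMod 2) : k + k = 0 := CharTwo.add_self_eq_zero k

theorem sum_pair' {g : V → ZMod 2} {x y : V} (h : x ≠ y) : ∑ z ∈ ({x, y} : Finset V), g z = g x + g y :=
  Finset.sum_pair h

theorem Surf.remove {T : Finset (Finset V)} (hT : Surf T) {t : Finset V} (hg : Good T t) :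
    Surf (T.erase t) := by
  have ht := hg.mem
  have sub : ∀ {s}, s ∈ T.erase t → s ∈ T := fun h => Finset.mem_of_mem_erase h
  have c3 := hT.card3 t ht
  refine ⟨fun s hs => hT.card3 s (sub hs), ?_, ?_, ?_, ?_, ?_⟩
  · obtain ⟨e, -, -, s, hs, hst, -⟩ := hg.nf
    exact ⟨s, Finset.mem_erase.2 ⟨hst, hs⟩⟩
  · intro e he r hr s hs t ht
    exact hT.deg2 e he r (sub hr) s (sub hs) t (sub ht)
  · intro x p hp s hs s' hs' hxs hxs'
    let p' : Finset V → Prop := fun r => if r = t then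
      (∃ s ∈ T.erase t, ∃ e : Finset V, e.card = 2 ∧ x ∈ e ∧ e ⊆ t ∧ e ⊆ s ∧ p s) else p r
    have pt : ∀ r, r ≠ t → (p' r ↔ p r) := fun r hr => by simp only [p', if_neg hr]
    have ptt : p' t ↔ (∃ s ∈ T.erase t, ∃ e : Finset V, e.card = 2 ∧ x ∈ e ∧ e ⊆ t ∧ e ⊆ s ∧ p s) := by
      simp only [p', if_true]
    have key : ∀ r ∈ T, r ≠ t → ∀ e : Finset V, e.card = 2 → x ∈ e → e ⊆ r → e ⊆ t → (p' r ↔ p' t) := by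
      intro r hr hrt e he hxe her het
      rw [pt r hrt, ptt]
      have hr' : r ∈ T.erase t := Finset.mem_erase.2 ⟨hrt, hr⟩
      constructor
      · intro h; exact ⟨r, hr', e, he, hxe, het, her, h⟩
      · rintro ⟨s, hs, e', he', hxe', het', hes, hps⟩
        exact (Pconst hT ht x (hg.hG x (het hxe)) p hp he he' hxe hxe' het het' hr' hs her hes).2 hps
    have := hT.star x p' (by
      intro r hr s hs e he hxe her hes
      by_cases hrt : r = t
      · by_cases hst : s = t
        · rw [hrt, hst]
        · rw [hrt] at her ⊢
          exact (key s hs hst e he hxe hes her).symm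
      · by_cases hst : s = t
        · rw [hst] at hes ⊢
          exact key r hr hrt e he hxe her hes
        · rw [pt r hrt, pt s hst]
          exact hp r (Finset.mem_erase.2 ⟨hrt, hr⟩) s (Finset.mem_erase.2 ⟨hst, hs⟩) e he hxe her hes)
      s (sub hs) s' (sub hs') hxs hxs'
    rwa [pt s (Finset.ne_of_mem_erase hs), pt s' (Finset.ne_of_mem_erase hs')] at this
  · intro p hp s hs s' hs'
    let p' : Finset V → Prop := fun r => if r = t then
      (∃ s ∈ T.erase t, ∃ e : Finset V, e.card = 2 ∧ e ⊆ t ∧ e ⊆ s ∧ p s) else p r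
    have pt : ∀ r, r ≠ t → (p' r ↔ p r) := fun r hr => by simp only [p', if_neg hr]
    have ptt : p' t ↔ (∃ s ∈ T.erase t, ∃ e : Finset V, e.card = 2 ∧ e ⊆ t ∧ e ⊆ s ∧ p s) := by
      simp only [p', if_true]
    have key : ∀ r ∈ T, r ≠ t → ∀ e : Finset V, e.card = 2 → e ⊆ r → e ⊆ t → (p' r ↔ p' t) := by
      intro r hr hrt e he her het
      rw [pt r hrt, ptt]
      have hr' : r ∈ T.erase t := Finset.mem_erase.2 ⟨hrt, hr⟩
      constructor
      · intro h; exact ⟨r, hr', e, he, het, her, h⟩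
      · rintro ⟨s, hs, e', he', het', hes, hps⟩
        obtain ⟨x, hxe, hxe'⟩ := edges_meet c3 he he' het het'
        exact (Pconst hT ht x (hg.hG x (het hxe)) p (fun r hr s hs e he _ => hp r hr s hs e he)
          he he' hxe hxe' het het' hr' hs her hes).2 hps
    have := hT.dual p' (by
      intro r hr s hs e he her hes
      by_cases hrt : r = t
      · by_cases hst : s = t
        · rw [hrt, hst]
        · rw [hrt] at her ⊢
          exact (key s hs hst e he hes her).symm
      · by_cases hst : s = t
        · rw [hst] at hes ⊢
          exact key r hr hrt e he her hes
        · rw [pt r hrt, pt s hst]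
          exact hp r (Finset.mem_erase.2 ⟨hrt, hr⟩) s (Finset.mem_erase.2 ⟨hst, hs⟩) e he her hes)
      s (sub hs) s' (sub hs')
    rwa [pt s (Finset.ne_of_mem_erase hs), pt s' (Finset.ne_of_mem_erase hs')] at this
  · intro φ hφ hfree
    have fr1 : ∀ e : Finset V, e.card = 2 → e ⊆ t → ∀ s ∈ T.erase t, e ⊆ s → Free (T.erase t) e := by
      intro e he het s hs hes
      refine ⟨he, s, hs, hes, fun r hr her => ?_⟩
      rcases hT.deg2 e he r (sub hr) s (sub hs) t ht her hes het with h | h | h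
      · exact h
      · exact absurd h (Finset.ne_of_mem_erase hr)
      · exact absurd h (Finset.ne_of_mem_erase hs)
    have fr2 : ∀ e : Finset V, ¬ e ⊆ t → (Free T e ↔ Free (T.erase t) e) := by
      intro e het
      constructor
      · rintro ⟨he, s, hs, hes, hu⟩
        exact ⟨he, s, Finset.mem_erase.2 ⟨fun h => het (h ▸ hes), hs⟩, hes, fun r hr => hu r (sub hr)⟩
      · rintro ⟨he, s, hs, hes, hu⟩
        exact ⟨he, s, sub hs, hes, fun r hr her => hu r (Finset.mem_erase.2 ⟨fun h => het (h ▸ her), hr⟩) her⟩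
    let φ' : Finset V → ZMod 2 := fun e => if e ⊆ t then 0 else φ e
    have eqφ : ∀ e : Finset V, e.card = 2 → ∀ s ∈ T.erase t, e ⊆ s → φ' e = φ e := by
      intro e he s hs hes
      by_cases het : e ⊆ t
      · simp only [φ', if_pos het]
        exact (hfree e (fr1 e he het s hs hes)).symm
      · simp only [φ', if_neg het]
    obtain ⟨g, hg1, hg2⟩ := hT.J φ' (by
      intro s hs
      by_cases hst : s = t
      · refine Finset.sum_eq_zero fun e he => ?_
        rw [Finset.mem_powersetCard] at he
        simp only [φ', if_pos (hst ▸ he.1)]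
      · have hs' : s ∈ T.erase t := Finset.mem_erase.2 ⟨hst, hs⟩
        rw [← hφ s hs']
        refine Finset.sum_congr rfl fun e he => ?_
        rw [Finset.mem_powersetCard] at he
        exact eqφ e he.2 s hs' he.1) (by
      intro e he
      by_cases het : e ⊆ t
      · simp only [φ', if_pos het]
      · simp only [φ', if_neg het]
        exact hfree e ((fr2 e het).1 he))
    have gconst : ∀ x ∈ t, ∀ y ∈ t, g x = g y := by
      intro x hx y hy
      by_cases hxy : x = y
      · rw [hxy]
      have h := hg1 t ht {x, y} (pair_card hxy) (pair_sub.2 ⟨hx, hy⟩)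
      rw [sum_pair' hxy] at h
      simp only [φ', if_pos (pair_sub.2 ⟨hx, hy⟩)] at h
      exact CharTwo.add_eq_zero.1 h.symm
    rcases hg.fr with ⟨f, hf, hft⟩ | hnf
    · refine ⟨g, fun s hs e he hes => ?_, fun e he x hx => ?_⟩
      · rw [← eqφ e he s hs hes]
        exact hg1 s (sub hs) e he hes
      · by_cases het : e ⊆ t
        · obtain ⟨y, hy⟩ := Finset.card_pos.1 (show 0 < f.card by rw [hf.1]; norm_num)
          rw [gconst x (het hx) y (hft hy)]
          exact hg2 f hf y hy
        · exact hg2 e ((fr2 e het).2 he) x hx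
    · obtain ⟨y, hy⟩ := Finset.card_pos.1 (show 0 < t.card by rw [c3]; norm_num)
      refine ⟨fun x => g x + g y, fun s hs e he hes => ?_, fun e he x hx => ?_⟩
      · rw [← eqφ e he s hs hes, hg1 s (sub hs) e he hes, Finset.sum_add_distrib]
        simp [he, CharTwo.two_eq_zero]
      · have het : e ⊆ t := by
          by_contra h
          exact hnf e ((fr2 e h).2 he)
        show g x + g y = 0
        rw [gconst x (het hx) y hy]
        exact zmod2_add_self _

/-- purity information -/
theorem Good.pure {T : Finset (Finset V)} (hT : Surf T) {t : Finset V} (hg : Good T t) {x : V}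
    (hx : x ∈ t) {s : Finset V} (hs : s ∈ T) (hst : s ≠ t) (hxs : x ∈ s) :
    ∃ e : Finset V, e.card = 2 ∧ e ⊆ t ∧ x ∈ e ∧ ∃ r ∈ T, r ≠ t ∧ e ⊆ r := by
  by_contra hcon
  push Not at hcon
  have := hT.star x (· = t) (by
    intro r hr s hs e he hxe her hes
    constructor
    · rintro rfl
      by_contra h
      exact hcon e he her hxe s hs h hes
    · rintro rfl
      by_contra h
      exact hcon e he hes hxe r hr h her) s hs t hg.mem hxs hx
  exact hst (this.2 rfl)

end comb2

section comb3
variable {V : Type*}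

def Inv (T : Finset (Finset V)) (p : Finset V → Prop) : Prop :=
  ∀ r ∈ T, ∀ s ∈ T, ∀ e : Finset V, e.card = 2 → e ⊆ r → e ⊆ s → (p r ↔ p s)

theorem Inv.not {T : Finset (Finset V)} {p : Finset V → Prop} (h : Inv T p) : Inv T (fun r => ¬ p r) :=
  fun r hr s hs e he her hes => not_congr (h r hr s hs e he her hes)

theorem Inv.of_imp {T : Finset (Finset V)} {p : Finset V → Prop}
    (h : ∀ r ∈ T, ∀ s ∈ T, ∀ e : Finset V, e.card = 2 → e ⊆ r → e ⊆ s → p r → p s) : Inv T p :=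
  fun r hr s hs e he her hes => ⟨h r hr s hs e he her hes, h s hs r hr e he hes her⟩

theorem ind_sum (q e0 : Finset V) (h : e0.card = 2) :
    ∑ e ∈ q.powersetCard 2, (if e = e0 then (1 : ZMod 2) else 0) = if e0 ⊆ q then 1 else 0 := by
  rw [Finset.sum_ite_eq']
  simp [Finset.mem_powersetCard, h]

theorem cobdry_sum {q : Finset V} (hq : q.card = 3) (g : V → ZMod 2) :
    ∑ e ∈ q.powersetCard 2, ∑ x ∈ e, g x = 0 := by
  obtain ⟨a, b, c, hab, hac, hbc, rfl⟩ := Finset.card_eq_three.1 hq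
  have : ({a, b, c} : Finset V).powersetCard 2 = {{a, b}, {a, c}, {b, c}} := by
    symm
    apply Finset.eq_of_subset_of_card_le
    · intro e he
      simp only [Finset.mem_insert, Finset.mem_singleton] at he
      rw [Finset.mem_powersetCard]
      rcases he with rfl | rfl | rfl
      · exact ⟨by simp, pair_card hab⟩
      · exact ⟨by simp, pair_card hac⟩
      · exact ⟨by simp, pair_card hbc⟩
    · rw [Finset.card_powersetCard, hq]
      have : ({{a, b}, {a, c}, {b, c}} : Finset (Finset V)).card = 3 := by
        refine Finset.card_eq_three.2 ⟨_, _, _, ?_, ?_, ?_, rfl⟩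
        · intro h
          have : b ∈ ({a, c} : Finset V) := by rw [← h]; simp
          simp at this; grind
        · intro h
          have : a ∈ ({b, c} : Finset V) := by rw [← h]; simp
          simp at this; grind
        · intro h
          have : a ∈ ({b, c} : Finset V) := by rw [← h]; simp
          simp at this; grind
      rw [this]; rfl
  have d1 : ({a, b} : Finset V) ≠ {a, c} := by
    intro h
    have : b ∈ ({a, c} : Finset V) := by rw [← h]; simp
    simp at this; grind
  have d2 : ({a, b} : Finset V) ≠ {b, c} := by
    intro h
    have : a ∈ ({b, c} : Finset V) := by rw [← h]; simp
    simp at this; grind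
  have d3 : ({a, c} : Finset V) ≠ {b, c} := by
    intro h
    have : a ∈ ({b, c} : Finset V) := by rw [← h]; simp
    simp at this; grind
  rw [this, Finset.sum_insert (by simp [d1, d2]), Finset.sum_pair d3, sum_pair' hab, sum_pair' hac,
    sum_pair' hbc]
  have h2 : (2 : ZMod 2) = 0 := rfl
  linear_combination (g a + g b + g c) * h2

theorem exists_free_out {T Y : Finset (Finset V)} (hT : Surf T) (hY : Surf Y) (hYT : Y ⊆ T)
    (hne : Y ≠ T) (hf : ∃ e, Free T e) : ∃ t ∈ T, t ∉ Y ∧ ∃ e, Free T e ∧ e ⊆ t := by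
  by_contra hcon
  push Not at hcon
  have h1 : ∀ e, Free T e → Free Y e := by
    rintro e he
    obtain ⟨h2, t, ht, het, hu⟩ := id he
    have htY : t ∈ Y := by
      by_contra h
      exact hcon t ht h e he het
    exact ⟨h2, t, htY, het, fun s hs => hu s (hYT hs)⟩
  have h2 : ∀ x y, y ≠ x → Free Y {x, y} → (∃ e, Free T e ∧ x ∈ e) → Free T {x, y} := by
    rintro x y hyx hxy ⟨e, he, hxe⟩
    obtain ⟨z, hz, rfl⟩ := edge_of_mem he.1 hxe
    obtain ⟨w, hw, hwz, hfw⟩ := hT.two_free hz he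
    rcases hY.no3 hyx hz hw hxy (h1 _ he) (h1 _ hfw) with rfl | rfl | rfl
    · exact he
    · exact hfw
    · exact absurd rfl hwz
  let g0 : V → ZMod 2 := fun x => if (∃ e, Free T e ∧ x ∈ e) then 1 else 0
  obtain ⟨g, hg1, hg2⟩ := hY.J (fun e => ∑ x ∈ e, g0 x) (fun t ht => cobdry_sum (hY.card3 t ht) g0) (by
    intro e he
    obtain ⟨x, y, hxy, rfl⟩ := Finset.card_eq_two.1 he.1
    show ∑ x ∈ _, g0 x = 0
    rw [sum_pair' hxy]
    have : g0 x = g0 y := by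
      have : (∃ e, Free T e ∧ x ∈ e) ↔ (∃ e, Free T e ∧ y ∈ e) := by
        constructor
        · intro h
          exact ⟨{x, y}, h2 x y hxy.symm he h, by simp⟩
        · intro h
          exact ⟨{y, x}, h2 y x hxy (by rwa [Finset.pair_comm]) h, by simp⟩
      simp only [g0, this]
    rw [this]; exact zmod2_add_self _)
  have hc : ∀ t ∈ Y, ∀ x ∈ t, ∀ y ∈ t, g0 x + g x = g0 y + g y := by
    intro t ht x hx y hy
    by_cases hxy : x = y
    · rw [hxy]
    have h := hg1 t ht {x, y} (pair_card hxy) (pair_sub.2 ⟨hx, hy⟩)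
    simp only [sum_pair' hxy] at h
    have h2 : (2 : ZMod 2) = 0 := rfl
    linear_combination h + (g x - g0 y) * h2
  have hc2 : ∀ s ∈ Y, ∀ t ∈ Y, ∀ x ∈ s, ∀ y ∈ t, g0 x + g x = g0 y + g y := by
    intro s hs t ht x hx y hy
    have := hY.dual (fun r => ∀ z ∈ r, g0 x + g x = g0 z + g z) (Inv.of_imp (by
      intro r hr r' hr' e he her her' h z hz
      obtain ⟨u, hu⟩ := Finset.card_pos.1 (show 0 < e.card by rw [he]; norm_num)
      rw [h u (her hu)]
      exact hc r' hr' u (her' hu) z hz)) s hs t ht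
    exact this.1 (hc s hs x hx) y hy
  have h3 : ∀ e, Free Y e → Free T e := by
    intro e he
    obtain ⟨f, hf⟩ := hf
    obtain ⟨y, hy⟩ := Finset.card_pos.1 (show 0 < f.card by rw [hf.1]; norm_num)
    obtain ⟨x, hx⟩ := Finset.card_pos.1 (show 0 < e.card by rw [he.1]; norm_num)
    obtain ⟨t, ht, het, -⟩ := he.2
    obtain ⟨s, hs, hfs, -⟩ := (h1 f hf).2
    have h := hc2 t ht s hs x (het hx) y (hfs hy)
    rw [hg2 e he x hx, hg2 f (h1 f hf) y hy] at h
    have hy1 : g0 y = 1 := if_pos ⟨f, hf, hy⟩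
    have hx1 : ∃ e, Free T e ∧ x ∈ e := by
      by_contra hx1
      have : g0 x = 0 := if_neg hx1
      rw [hy1, this] at h
      simp at h
    obtain ⟨z, hz, rfl⟩ := edge_of_mem he.1 hx
    exact h2 x z hz he hx1
  have h4 := hT.dual (· ∈ Y) (Inv.of_imp (by
    intro r hr s hs e he her hes hrY
    by_contra hsY
    have : Free Y e := ⟨he, r, hrY, her, fun q hq heq => by
      rcases hT.deg2 e he q (hYT hq) r hr s hs heq her hes with h | h | h
      · exact h
      · exact absurd (h ▸ hq) hsY
      · exact absurd (h ▸ hrY) hsY⟩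
    obtain ⟨-, w, hw, hew, hu⟩ := h3 e this
    exact hsY ((hu r hr her).trans (hu s hs hes).symm ▸ hrY)))
  apply hne
  obtain ⟨y, hy⟩ := hY.ne
  exact Finset.Subset.antisymm hYT fun t ht => (h4 t ht y (hYT hy)).2 hy

theorem exists_nf {T : Finset (Finset V)} (hT : Surf T) {t s : Finset V} (ht : t ∈ T) (hs : s ∈ T)
    (hst : s ≠ t) : ∃ e : Finset V, e.card = 2 ∧ e ⊆ t ∧ ∃ s ∈ T, s ≠ t ∧ e ⊆ s := by
  by_contra hcon
  push Not at hcon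
  have := hT.dual (· = t) (Inv.of_imp (by
    rintro r hr s hs e he her hes rfl
    by_contra h
    exact hcon e he her s hs h hes)) s hs t ht
  exact hst (this.2 rfl)

def BadW (T : Finset (Finset V)) (t : Finset V) (p : Finset V → Prop) : Prop :=
  Inv (T.erase t) p ∧ ∃ a b c s1 s2, a ≠ b ∧ a ≠ c ∧ b ≠ c ∧ t = {a, b, c} ∧
    (s1 ∈ T ∧ s1 ≠ t ∧ a ∈ s1 ∧ c ∈ s1) ∧ (s2 ∈ T ∧ s2 ≠ t ∧ b ∈ s2 ∧ c ∈ s2) ∧ p s1 ∧ ¬ p s2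

theorem BadW.flip {T : Finset (Finset V)} {t : Finset V} {p : Finset V → Prop} (h : BadW T t p) :
    BadW T t (fun r => ¬ p r) := by
  obtain ⟨hi, a, b, c, s1, s2, hab, hac, hbc, hte, h1, h2, hp1, hp2⟩ := h
  exact ⟨hi.not, b, a, c, s2, s1, hab.symm, hbc, hac, by rw [hte]; ext; simp; tauto, h2, h1, hp2,
    not_not.2 hp1⟩

theorem bad_exists {T : Finset (Finset V)} (hT : Surf T) {t : Finset V} (ht : t ∈ T)
    (hf : ∃ e, Free T e ∧ e ⊆ t) {c : V} (hct : c ∈ t)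
    (hnf : ∀ e : Finset V, e.card = 2 → e ⊆ t → c ∈ e → ∃ s ∈ T, s ≠ t ∧ e ⊆ s)
    {f : Finset V} (hff : Free T f) (hcf : c ∈ f) : ∃ p, BadW T t p := by
  obtain ⟨a, b, hab, hac, hbc, hte⟩ := tri_decomp (hT.card3 t ht) hct
  have hat : a ∈ t := by simp [hte]
  have hbt : b ∈ t := by simp [hte]
  obtain ⟨s1, hs1, hs1t, he1⟩ := hnf {a, c} (pair_card hac) (pair_sub.2 ⟨hat, hct⟩) (by simp)
  obtain ⟨s2, hs2, hs2t, he2⟩ := hnf {b, c} (pair_card hbc) (pair_sub.2 ⟨hbt, hct⟩) (by simp)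
  have h2 : (2 : ZMod 2) = 0 := rfl
  let p : Finset V → Prop := fun r => ∃ ψ : Finset V → ZMod 2,
    (∀ e : Finset V, e.card = 2 → ψ e ≠ 0 → ∃ u ∈ T.erase t, ∃ w ∈ T.erase t, u ≠ w ∧ e ⊆ u ∧ e ⊆ w) ∧
    ∀ q ∈ T, ∑ e ∈ q.powersetCard 2, ψ e = (if q = s1 then 1 else 0) + (if q = r then 1 else 0)
  refine ⟨p, ?_, a, b, c, s1, s2, hab, hac, hbc, hte, ⟨hs1, hs1t, pair_sub.1 he1⟩,
    ⟨hs2, hs2t, pair_sub.1 he2⟩, ?_, ?_⟩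
  · apply Inv.of_imp
    rintro r hr s hs e he her hes ⟨ψ, hψ1, hψ2⟩
    by_cases hrs : r = s
    · rw [← hrs]; exact ⟨ψ, hψ1, hψ2⟩
    refine ⟨fun e' => ψ e' + if e' = e then 1 else 0, ?_, ?_⟩
    · intro e' he' h
      by_cases hee : e' = e
      · rw [hee]
        exact ⟨r, hr, s, hs, hrs, her, hes⟩
      · simp only [if_neg hee, add_zero] at h
        exact hψ1 e' he' h
    · intro q hq
      rw [Finset.sum_add_distrib, ind_sum q e he, hψ2 q hq]
      have : (if e ⊆ q then (1 : ZMod 2) else 0) = (if q = r then 1 else 0) + (if q = s then 1 else 0) := by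
        by_cases heq : e ⊆ q
        · rw [if_pos heq]
          rcases hT.deg2 e he q hq r (Finset.mem_of_mem_erase hr) s (Finset.mem_of_mem_erase hs) heq her hes
            with h | h | h
          · simp [h, hrs]
          · simp [h, Ne.symm hrs]
          · exact absurd h hrs
        · have k1 : q ≠ r := fun h => heq (h ▸ her)
          have k2 : q ≠ s := fun h => heq (h ▸ hes)
          simp [heq, k1, k2]
      rw [this]
      linear_combination (if q = r then (1 : ZMod 2) else 0) * h2
  · refine ⟨fun _ => 0, fun e _ h => absurd rfl h, fun q _ => ?_⟩
    rw [zmod2_add_self]; simp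
  · rintro ⟨ψ, hψ1, hψ2⟩
    have indt : ∀ (x : V) (s : Finset V), x ∈ t → x ≠ c → s ∈ T → s ≠ t → {x, c} ⊆ s → ∀ q ∈ T,
        (if ({x, c} : Finset V) ⊆ q then (1 : ZMod 2) else 0) = (if q = s then 1 else 0) + (if q = t then 1 else 0) := by
      intro x s hx hxc hs hst hxs q hq
      have hxt : {x, c} ⊆ t := pair_sub.2 ⟨hx, hct⟩
      by_cases heq : ({x, c} : Finset V) ⊆ q
      · rw [if_pos heq]
        rcases hT.deg2 _ (pair_card hxc) q hq s hs t ht heq hxs hxt with h | h | h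
        · simp [h, hst]
        · simp [h, Ne.symm hst]
        · exact absurd h hst
      · have k1 : q ≠ s := fun h => heq (h ▸ hxs)
        have k2 : q ≠ t := fun h => heq (h ▸ hxt)
        simp [heq, k1, k2]
    have nfree : ∀ (x : V) (s : Finset V), x ∈ t → s ∈ T → s ≠ t → {x, c} ⊆ s → ¬ Free T {x, c} := by
      rintro x s hx hs hst hxs ⟨-, w, hw, hew, hu⟩
      exact hst ((hu s hs hxs).trans (hu t ht (pair_sub.2 ⟨hx, hct⟩)).symm)
    obtain ⟨g, hg1, hg2⟩ := hT.J (fun e => ψ e + (if e = {a, c} then 1 else 0) + (if e = {b, c} then 1 else 0)) (by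
      intro q hq
      rw [Finset.sum_add_distrib, Finset.sum_add_distrib, ind_sum q _ (pair_card hac),
        ind_sum q _ (pair_card hbc), hψ2 q hq, indt a s1 hat hac hs1 hs1t he1 q hq,
        indt b s2 hbt hbc hs2 hs2t he2 q hq]
      linear_combination ((if q = s1 then (1 : ZMod 2) else 0) + (if q = s2 then 1 else 0) +
        (if q = t then 1 else 0)) * h2) (by
      intro e he
      have k1 : e ≠ {a, c} := fun h => nfree a s1 hat hs1 hs1t he1 (h ▸ he)
      have k2 : e ≠ {b, c} := fun h => nfree b s2 hbt hs2 hs2t he2 (h ▸ he)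
      simp only [if_neg k1, if_neg k2, add_zero]
      by_contra h
      obtain ⟨u, hu, w, hw, huw, heu, hew⟩ := hψ1 e he.1 h
      obtain ⟨-, z, hz, hez, huz⟩ := he
      exact huw ((huz u (Finset.mem_of_mem_erase hu) heu).trans (huz w (Finset.mem_of_mem_erase hw) hew).symm))
    have gc : g c = 0 := hg2 f hff c hcf
    have ga : g a = 0 := by
      obtain ⟨e, he, het⟩ := hf
      have hce : c ∉ e := by
        intro hce
        obtain ⟨s, hs, hst, hes⟩ := hnf e he.1 het hce
        obtain ⟨-, z, hz, hez, huz⟩ := he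
        exact hst ((huz s hs hes).trans (huz t ht het).symm)
      refine hg2 e he a ?_
      by_contra hae
      have : e ⊆ {b} := by
        intro y hy
        have := het hy
        rw [hte] at this
        simp only [Finset.mem_insert, Finset.mem_singleton] at this ⊢
        rcases this with rfl | rfl | rfl
        · exact absurd hy hae
        · rfl
        · exact absurd hy hce
      have := Finset.card_le_card this
      rw [he.1, Finset.card_singleton] at this
      omega
    have h := hg1 t ht {a, c} (pair_card hac) (pair_sub.2 ⟨hat, hct⟩)
    have hne : ({a, c} : Finset V) ≠ {b, c} := by
      intro h
      have : a ∈ ({b, c} : Finset V) := by rw [← h]; simp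
      simp only [Finset.mem_insert, Finset.mem_singleton] at this
      exact this.elim hab hac
    rw [sum_pair' hac, ga, gc] at h
    simp only [if_true, if_neg hne, add_zero] at h
    have hψ0 : ψ {a, c} ≠ 0 := by
      intro h0
      rw [h0, zero_add] at h
      exact one_ne_zero h
    obtain ⟨u, hu, w, hw, huw, heu, hew⟩ := hψ1 _ (pair_card hac) hψ0
    rcases hT.deg2 _ (pair_card hac) u (Finset.mem_of_mem_erase hu) w (Finset.mem_of_mem_erase hw) t ht heu hew
      (pair_sub.2 ⟨hat, hct⟩) with h | h | h
    · exact huw h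
    · exact Finset.ne_of_mem_erase hu h
    · exact Finset.ne_of_mem_erase hw h

theorem good_of_bad {T Y : Finset (Finset V)} (hT : Surf T) (hY : Surf Y) (hYT : Y ⊆ T) :
    ∀ (n : ℕ) (t : Finset V) (p : Finset V → Prop), ((T.erase t).filter p).card = n → t ∈ T → t ∉ Y →
      BadW T t p → (∀ y ∈ Y, ¬ p y) → ∃ t ∈ T, t ∉ Y ∧ Good T t := by
  intro n
  induction n using Nat.strong_induction_on with
  | _ n ih =>
    intro t p hn ht htY hbad hpY
    obtain ⟨hi, a, b, c, s1, s2, hab, hac, hbc, hte, h1, h2, hp1, hp2⟩ := hbad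
    obtain ⟨e, he, hce, q, hq, hqt, hpq, heq⟩ := fan hT ht hab hac hbc hte h1.1 h1.2.1 h1.2.2.1 h1.2.2.2
      h2.1 h2.2.1 h2.2.2.1 h2.2.2.2 p (fun r hr s hs e he _ => hi r hr s hs e he) hp1 hp2
    have hqY : q ∉ Y := fun h => hpY q h hpq
    by_cases hgood : ∀ c ∈ q, (∀ e : Finset V, e.card = 2 → e ⊆ q → c ∈ e → ∃ s ∈ T, s ≠ q ∧ e ⊆ s) →
      ∀ f, Free T f → c ∉ f
    · exact ⟨q, hq, hqY, hq, exists_nf hT hq ht hqt.symm, hgood, Or.inl ⟨e, he, heq⟩⟩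
    push Not at hgood
    obtain ⟨c', hc', hnf, f, hf, hcf⟩ := hgood
    obtain ⟨p', hp'⟩ : ∃ p', BadW T q p' ∧ ¬ p' t := by
      obtain ⟨p', hp'⟩ := bad_exists hT hq ⟨e, he, heq⟩ hc' hnf hf hcf
      by_cases h : p' t
      · exact ⟨_, hp'.flip, not_not.2 h⟩
      · exact ⟨p', hp', h⟩
    obtain ⟨hbad', hp't⟩ := hp'
    have hi' := hbad'.1
    have hw := hT.dual (fun r => r ≠ t ∧ r ≠ q ∧ p' r ∧ ¬ p r) (Inv.of_imp (by
      rintro r hr s hs e he her hes ⟨k1, k2, k3, k4⟩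
      have m1 : r ∈ T.erase t := Finset.mem_erase.2 ⟨k1, hr⟩
      have m2 : r ∈ T.erase q := Finset.mem_erase.2 ⟨k2, hr⟩
      have n1 : s ≠ t := by
        rintro rfl
        exact hp't ((hi' r m2 s (Finset.mem_erase.2 ⟨hqt.symm, hs⟩) e he her hes).1 k3)
      have n2 : s ≠ q := by
        rintro rfl
        exact k4 ((hi r m1 s (Finset.mem_erase.2 ⟨hqt, hs⟩) e he her hes).2 hpq)
      refine ⟨n1, n2, (hi' r m2 s (Finset.mem_erase.2 ⟨n2, hs⟩) e he her hes).1 k3, fun h => k4 ?_⟩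
      exact (hi r m1 s (Finset.mem_erase.2 ⟨n1, hs⟩) e he her hes).2 h))
    have hsub : ∀ r ∈ T, r ≠ t → r ≠ q → p' r → p r := by
      intro r hr hrt hrq hpr
      by_contra h
      exact ((hw r hr t ht).1 ⟨hrt, hrq, hpr, h⟩).1 rfl
    refine ih ((T.erase q).filter p').card ?_ q p' rfl hq hqY hbad' ?_
    · rw [← hn]
      apply Finset.card_lt_card
      rw [Finset.ssubset_iff_of_subset]
      · refine ⟨q, ?_, ?_⟩
        · rw [Finset.mem_filter, Finset.mem_erase]
          exact ⟨⟨hqt, hq⟩, hpq⟩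
        · simp
      · intro r hr
        rw [Finset.mem_filter, Finset.mem_erase] at hr ⊢
        have hrt : r ≠ t := fun h => hp't (h ▸ hr.2)
        exact ⟨⟨hrt, hr.1.2⟩, hsub r hr.1.2 hrt hr.1.1 hr.2⟩
    · intro y hy hpy
      exact hpY y hy (hsub y (hYT hy) (fun h => htY (h ▸ hy)) (fun h => hqY (h ▸ hy)) hpy)

theorem exists_good {T Y : Finset (Finset V)} (hT : Surf T) (hY : Surf Y) (hYT : Y ⊆ T)
    (hne : Y ≠ T) : ∃ t ∈ T, t ∉ Y ∧ Good T t := by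
  obtain ⟨y0, hy0⟩ := hY.ne
  by_cases hf : ∃ e, Free T e
  · obtain ⟨t, ht, htY, e, he, het⟩ := exists_free_out hT hY hYT hne hf
    have hnf := exists_nf hT ht (hYT hy0) (fun h => htY (h ▸ hy0))
    by_cases hgood : ∀ c ∈ t, (∀ e : Finset V, e.card = 2 → e ⊆ t → c ∈ e → ∃ s ∈ T, s ≠ t ∧ e ⊆ s) →
      ∀ f, Free T f → c ∉ f
    · exact ⟨t, ht, htY, ht, hnf, hgood, Or.inl ⟨e, he, het⟩⟩
    push Not at hgood
    obtain ⟨c', hc', hnf, f, hf, hcf⟩ := hgood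
    obtain ⟨p, hp⟩ := bad_exists hT ht ⟨e, he, het⟩ hc' hnf hf hcf
    have hconst : ∀ y ∈ Y, (p y ↔ p y0) := by
      intro y hy
      refine hY.dual p ?_ y hy y0 hy0
      have sub : ∀ r ∈ Y, r ∈ T.erase t := fun r hr =>
        Finset.mem_erase.2 ⟨fun h => htY (h ▸ hr), hYT hr⟩
      exact fun r hr s hs => hp.1 r (sub r hr) s (sub s hs)
    by_cases h0 : p y0
    · exact good_of_bad hT hY hYT _ t _ rfl ht htY hp.flip (fun y hy => not_not.2 ((hconst y hy).2 h0))
    · exact good_of_bad hT hY hYT _ t _ rfl ht htY hp (fun y hy h => h0 ((hconst y hy).1 h))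
  · push Not at hf
    obtain ⟨t, ht, htY⟩ : ∃ t ∈ T, t ∉ Y := by
      by_contra h
      push Not at h
      exact hne (Finset.Subset.antisymm hYT h)
    exact ⟨t, ht, htY, ht, exists_nf hT ht (hYT hy0) (fun h => htY (h ▸ hy0)),
      fun c _ _ f hff => absurd hff (hf f), Or.inr hf⟩

theorem chain {Y : Finset (Finset V)} (hY : Surf Y) (Q : Finset (Finset V) → Prop) (hQ : Q Y)
    (T0 : Finset (Finset V))
    (step : ∀ T, T ⊆ T0 → Y ⊆ T → Surf T → ∀ t ∈ T, t ∉ Y → Good T t → Q (T.erase t) → Q T)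
    (hT0 : Surf T0) (hYT0 : Y ⊆ T0) : Q T0 := by
  have : ∀ (n : ℕ) (T : Finset (Finset V)), T.card = n → T ⊆ T0 → Y ⊆ T → Surf T → Q T := by
    intro n
    induction n with
    | zero =>
      intro T h0 _ _ hT
      obtain ⟨t, ht⟩ := hT.ne
      rw [Finset.card_eq_zero.1 h0] at ht
      simp at ht
    | succ n ih =>
      intro T hn hsub hYT hT
      by_cases hne : Y = T
      · exact hne ▸ hQ
      obtain ⟨t, ht, htY, hg⟩ := exists_good hT hY hYT hne
      refine step T hsub hYT hT t ht htY hg (ih (T.erase t) ?_ ?_ ?_ (hT.remove hg))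
      · rw [Finset.card_erase_of_mem ht, hn]; rfl
      · exact (Finset.erase_subset _ _).trans hsub
      · intro y hy
        exact Finset.mem_erase.2 ⟨fun h => htY (h ▸ hy), hYT hy⟩
  exact this _ T0 rfl (Finset.Subset.refl _) hYT0 hT0

end comb3

section comb4
variable {V : Type*}

theorem tri_sum {a b c : V} (hab : a ≠ b) (hac : a ≠ c) (hbc : b ≠ c) (φ : Finset V → ZMod 2) :
    ∑ e ∈ ({a, b, c} : Finset V).powersetCard 2, φ e = φ {a, b} + φ {a, c} + φ {b, c} := by
  have d1 : ({a, b} : Finset V) ≠ {a, c} := by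
    intro h
    have : b ∈ ({a, c} : Finset V) := by rw [← h]; simp
    simp at this; grind
  have d2 : ({a, b} : Finset V) ≠ {b, c} := by
    intro h
    have : a ∈ ({b, c} : Finset V) := by rw [← h]; simp
    simp at this; grind
  have d3 : ({a, c} : Finset V) ≠ {b, c} := by
    intro h
    have : a ∈ ({b, c} : Finset V) := by rw [← h]; simp
    simp at this; grind
  have : ({a, b, c} : Finset V).powersetCard 2 = {{a, b}, {a, c}, {b, c}} := by
    symm
    apply Finset.eq_of_subset_of_card_le
    · intro e he
      simp only [Finset.mem_insert, Finset.mem_singleton] at he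
      rw [Finset.mem_powersetCard]
      rcases he with rfl | rfl | rfl
      · exact ⟨by simp, pair_card hab⟩
      · exact ⟨by simp, pair_card hac⟩
      · exact ⟨by simp, pair_card hbc⟩
    · rw [Finset.card_powersetCard, Finset.card_eq_three.2 ⟨a, b, c, hab, hac, hbc, rfl⟩,
        Finset.card_eq_three.2 ⟨_, _, _, d1, d2, d3, rfl⟩]
      rfl
  rw [this, Finset.sum_insert (by simp [d1, d2]), Finset.sum_pair d3, add_assoc]

theorem surf_singleton {t : Finset V} (ht : t.card = 3) : Surf ({t} : Finset (Finset V)) := by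
  have hm : ∀ s ∈ ({t} : Finset (Finset V)), s = t := fun s hs => Finset.mem_singleton.1 hs
  refine ⟨fun s hs => hm s hs ▸ ht, ⟨t, by simp⟩, ?_, ?_, ?_, ?_⟩
  · intro e _ r hr s hs _ _ _ _ _
    exact Or.inl ((hm r hr).trans (hm s hs).symm)
  · intro x p _ r hr s hs _ _
    rw [hm r hr, hm s hs]
  · intro p _ r hr s hs
    rw [hm r hr, hm s hs]
  · intro φ _ hf
    refine ⟨fun _ => 0, fun s hs e he hes => ?_, fun _ _ _ _ => rfl⟩
    rw [hf e ⟨he, s, hs, hes, fun r hr _ => (hm r hr).trans (hm s hs).symm⟩]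
    simp

theorem Surf.starSurf {X : Finset (Finset V)} (hX : Surf X) (v : V) (hne : ∃ t ∈ X, v ∈ t) :
    Surf (X.filter (v ∈ ·)) := by
  have sub : ∀ {s}, s ∈ X.filter (v ∈ ·) → s ∈ X := fun h => (Finset.mem_filter.1 h).1
  have hv : ∀ {s}, s ∈ X.filter (v ∈ ·) → v ∈ s := fun h => (Finset.mem_filter.1 h).2
  have dual : ∀ p : Finset V → Prop,
    (∀ s ∈ X.filter (v ∈ ·), ∀ t ∈ X.filter (v ∈ ·), ∀ e : Finset V, e.card = 2 → v ∈ e → e ⊆ s → e ⊆ t →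
      (p s ↔ p t)) → ∀ s ∈ X.filter (v ∈ ·), ∀ t ∈ X.filter (v ∈ ·), (p s ↔ p t) := by
    intro p hp s hs t ht
    refine hX.star v p ?_ s (sub hs) t (sub ht) (hv hs) (hv ht)
    intro r hr s hs e he hve her hes
    exact hp r (Finset.mem_filter.2 ⟨hr, her hve⟩) s (Finset.mem_filter.2 ⟨hs, hes hve⟩) e he hve her hes
  refine ⟨fun s hs => hX.card3 s (sub hs), ?_, ?_, ?_, ?_, ?_⟩
  · obtain ⟨t, ht, hvt⟩ := hne
    exact ⟨t, Finset.mem_filter.2 ⟨ht, hvt⟩⟩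
  · intro e he r hr s hs t ht
    exact hX.deg2 e he r (sub hr) s (sub hs) t (sub ht)
  · intro x p hp s hs t ht hxs hxt
    by_cases hxv : x = v
    · subst hxv
      exact dual p hp s hs t ht
    · exact hp s hs t ht {x, v} (pair_card hxv) (by simp) (pair_sub.2 ⟨hxs, hv hs⟩)
        (pair_sub.2 ⟨hxt, hv ht⟩)
  · intro p hp
    exact dual p (fun r hr s hs e he _ => hp r hr s hs e he)
  · intro φ hφ hfree
    have decomp : ∀ t ∈ X.filter (v ∈ ·), ∃ a b, a ≠ b ∧ a ≠ v ∧ b ≠ v ∧ t = {a, b, v} ∧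
        Free (X.filter (v ∈ ·)) {a, b} ∧ φ {v, a} = φ {v, b} := by
      intro t ht
      obtain ⟨a, b, hab, ha, hb, hte⟩ := tri_decomp (hX.card3 t (sub ht)) (hv ht)
      have hf : Free (X.filter (v ∈ ·)) {a, b} := by
        refine ⟨pair_card hab, t, ht, by rw [hte]; simp [Finset.insert_subset_iff], fun s hs hes => ?_⟩
        symm
        apply Finset.eq_of_subset_of_card_le
        · rw [pair_sub] at hes
          rw [hte]
          simp [Finset.insert_subset_iff, hes, hv hs]
        · rw [hX.card3 t (sub ht), hX.card3 s (sub hs)]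
      refine ⟨a, b, hab, ha, hb, hte, hf, ?_⟩
      have h := hφ t ht
      rw [hte, tri_sum hab ha hb, hfree _ hf, zero_add] at h
      rw [Finset.pair_comm v a, Finset.pair_comm v b]
      exact CharTwo.add_eq_zero.1 h
    obtain ⟨t0, ht0, hvt0⟩ := hne
    have ht0' : t0 ∈ X.filter (v ∈ ·) := Finset.mem_filter.2 ⟨ht0, hvt0⟩
    obtain ⟨a0, b0, hab0, ha0, hb0, hte0, hf0, h0⟩ := decomp t0 ht0'
    have hk : ∀ t ∈ X.filter (v ∈ ·), ∀ x ∈ t, x ≠ v → φ {v, x} = φ {v, a0} := by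
      intro t ht
      refine (dual (fun t => ∀ x ∈ t, x ≠ v → φ {v, x} = φ {v, a0}) ?_ t ht t0 ht0').2 ?_
      · have : ∀ s ∈ X.filter (v ∈ ·), ∀ t ∈ X.filter (v ∈ ·), ∀ e : Finset V, e.card = 2 → v ∈ e →
            e ⊆ s → e ⊆ t → (∀ x ∈ s, x ≠ v → φ {v, x} = φ {v, a0}) →
            (∀ x ∈ t, x ≠ v → φ {v, x} = φ {v, a0}) := by
          intro s hs t ht e he hve hes het h x hx hxv
          obtain ⟨y, hy, rfl⟩ := edge_of_mem he hve
          rw [pair_sub] at hes het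
          rw [← h y hes.2 hy]
          obtain ⟨a, b, hab, ha, hb, hte, -, hh⟩ := decomp t ht
          have hx' := hx
          have hy' := het.2
          rw [hte] at hx' hy'
          simp only [Finset.mem_insert, Finset.mem_singleton] at hx' hy'
          rcases hx' with rfl | rfl | rfl <;> rcases hy' with rfl | rfl | rfl <;>
            first | rfl | exact hh | exact hh.symm | contradiction
        exact fun s hs t ht e he hve hes het => ⟨this s hs t ht e he hve hes het, this t ht s hs e he hve het hes⟩
      · intro x hx hxv
        rw [hte0] at hx
        simp only [Finset.mem_insert, Finset.mem_singleton] at hx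
        rcases hx with rfl | rfl | rfl
        · rfl
        · exact h0.symm
        · contradiction
    refine ⟨fun x => if x = v then φ {v, a0} else 0, ?_, ?_⟩
    · intro t ht e he het
      by_cases hve : v ∈ e
      · obtain ⟨y, hy, rfl⟩ := edge_of_mem he hve
        rw [sum_pair' hy.symm, if_pos rfl, if_neg hy, add_zero]
        exact hk t ht y (pair_sub.1 het).2 hy
      · have hz : ∑ x ∈ e, (if x = v then φ {v, a0} else 0) = 0 :=
          Finset.sum_eq_zero fun x hx => if_neg fun h : x = v => hve (h ▸ hx)
        rw [hz]
        apply hfree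
        refine ⟨he, t, ht, het, fun s hs hes => ?_⟩
        have h1 : ∀ {s}, s ∈ X.filter (v ∈ ·) → e ⊆ s → insert v e = s := by
          intro s hs hes
          apply Finset.eq_of_subset_of_card_le
          · exact Finset.insert_subset (hv hs) hes
          · rw [Finset.card_insert_of_notMem hve, he, hX.card3 s (sub hs)]
        rw [← h1 hs hes, h1 ht het]
    · intro e he x hx
      by_cases hxv : x = v
      · subst hxv
        obtain ⟨y, hy, rfl⟩ := edge_of_mem he.1 hx
        obtain ⟨-, t, ht, het, -⟩ := id he
        show (if x = x then φ {x, a0} else 0) = 0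
        rw [if_pos rfl, ← hk t ht y (pair_sub.1 het).2 hy]
        exact hfree _ he
      · exact if_neg hxv

theorem surf_glue {D X A : Finset (Finset V)} {v : V} (hD : Surf D) (hX : Surf X)
    (hvD : ∀ t ∈ D, v ∉ t) (hA : ∀ e ∈ A, Free D e ∧ insert v e ∈ X)
    (hXA : ∀ t ∈ X, v ∈ t → t ∈ A.image (insert v)) : Surf (D ∪ A.image (insert v)) := by
  have mem : ∀ {s}, s ∈ D ∪ A.image (insert v) ↔ s ∈ D ∨ ∃ e ∈ A, insert v e = s := by
    intro s; rw [Finset.mem_union, Finset.mem_image]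
  have hvA : ∀ e ∈ A, v ∉ e := by
    intro e he hve
    obtain ⟨⟨-, t, ht, het, -⟩, -⟩ := hA e he
    exact hvD t ht (het hve)
  have mD : ∀ {s}, s ∈ D → s ∈ D ∪ A.image (insert v) := fun h => mem.2 (Or.inl h)
  have mA : ∀ {e}, e ∈ A → insert v e ∈ D ∪ A.image (insert v) := fun h => mem.2 (Or.inr ⟨_, h, rfl⟩)
  have eqA : ∀ {e f : Finset V}, e.card = 2 → v ∉ e → f ∈ A → e ⊆ insert v f → e = f := by
    intro e f he hve hf hef
    apply Finset.eq_of_subset_of_card_le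
    · intro x hx
      rcases Finset.mem_insert.1 (hef hx) with rfl | h
      · exact absurd hx hve
      · exact h
    · rw [he, (hA f hf).1.1]
  have mX : ∀ {s}, s ∈ D ∪ A.image (insert v) → v ∈ s → s ∈ X := by
    intro s hs hvs
    rcases mem.1 hs with h | ⟨e, he, rfl⟩
    · exact absurd hvs (hvD s h)
    · exact (hA e he).2
  have Xm : ∀ {s}, s ∈ X → v ∈ s → s ∈ D ∪ A.image (insert v) :=
    fun hs hvs => Finset.mem_union_right _ (hXA _ hs hvs)
  have c3 : ∀ t ∈ D ∪ A.image (insert v), t.card = 3 := by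
    intro t ht
    rcases mem.1 ht with h | ⟨e, he, rfl⟩
    · exact hD.card3 t h
    · rw [Finset.card_insert_of_notMem (hvA e he), (hA e he).1.1]
  -- every cone triangle is adjacent to a triangle of D
  have adj : ∀ e ∈ A, ∃ d ∈ D, e ⊆ d := fun e he => by
    obtain ⟨⟨-, t, ht, het, -⟩, -⟩ := hA e he
    exact ⟨t, ht, het⟩
  refine ⟨c3, ?_, ?_, ?_, ?_, ?_⟩
  · obtain ⟨t, ht⟩ := hD.ne
    exact ⟨t, mD ht⟩
  · intro e he r hr s hs t ht her hes het
    by_cases hve : v ∈ e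
    · exact hX.deg2 e he r (mX hr (her hve)) s (mX hs (hes hve)) t (mX ht (het hve)) her hes het
    have cc : ∀ {f g}, f ∈ A → g ∈ A → e ⊆ insert v f → e ⊆ insert v g → insert v f = insert v g := by
      intro f g hf hg hef heg
      rw [← eqA he hve hf hef, ← eqA he hve hg heg]
    have dd : ∀ {f r s}, f ∈ A → e ⊆ insert v f → r ∈ D → s ∈ D → e ⊆ r → e ⊆ s → r = s := by
      intro f r s hf hef hr hs her hes
      have := (hA f hf).1
      rw [← eqA he hve hf hef] at this
      obtain ⟨-, w, hw, hew, hu⟩ := this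
      exact (hu r hr her).trans (hu s hs hes).symm
    rcases mem.1 hr with h1 | ⟨f1, hf1, rfl⟩ <;> rcases mem.1 hs with h2 | ⟨f2, hf2, rfl⟩ <;>
      rcases mem.1 ht with h3 | ⟨f3, hf3, rfl⟩
    · exact hD.deg2 e he r h1 s h2 t h3 her hes het
    · exact Or.inl (dd hf3 het h1 h2 her hes)
    · exact Or.inr (Or.inl (dd hf2 hes h1 h3 her het))
    · exact Or.inr (Or.inr (cc hf2 hf3 hes het))
    · exact Or.inr (Or.inr (dd hf1 her h2 h3 hes het))
    · exact Or.inr (Or.inl (cc hf1 hf3 her het))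
    · exact Or.inl (cc hf1 hf2 her hes)
    · exact Or.inl (cc hf1 hf2 her hes)
  · intro x p hp s hs t ht hxs hxt
    by_cases hxv : x = v
    · subst hxv
      refine hX.star x p ?_ s (mX hs hxs) t (mX ht hxt) hxs hxt
      intro r hr s hs e he hxe her hes
      exact hp r (Xm hr (her hxe)) s (Xm hs (hes hxe)) e he hxe her hes
    · have red : ∀ s ∈ D ∪ A.image (insert v), x ∈ s → ∃ d ∈ D, x ∈ d ∧ (p s ↔ p d) := by
        intro s hs hxs
        rcases mem.1 hs with h | ⟨e, he, rfl⟩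
        · exact ⟨s, h, hxs, Iff.rfl⟩
        · obtain ⟨d, hd, hed⟩ := adj e he
          have hxe : x ∈ e := (Finset.mem_insert.1 hxs).resolve_left hxv
          exact ⟨d, hd, hed hxe, hp _ hs d (mD hd) e (hA e he).1.1 hxe (Finset.subset_insert _ _) hed⟩
      obtain ⟨d, hd, hxd, h1⟩ := red s hs hxs
      obtain ⟨d', hd', hxd', h2⟩ := red t ht hxt
      rw [h1, h2]
      exact hD.star x p (fun r hr s hs => hp r (mD hr) s (mD hs)) d hd d' hd' hxd hxd'
  · intro p hp s hs t ht
    have red : ∀ s ∈ D ∪ A.image (insert v), ∃ d ∈ D, (p s ↔ p d) := by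
      intro s hs
      rcases mem.1 hs with h | ⟨e, he, rfl⟩
      · exact ⟨s, h, Iff.rfl⟩
      · obtain ⟨d, hd, hed⟩ := adj e he
        exact ⟨d, hd, hp _ hs d (mD hd) e (hA e he).1.1 (Finset.subset_insert _ _) hed⟩
    obtain ⟨d, hd, h1⟩ := red s hs
    obtain ⟨d', hd', h2⟩ := red t ht
    rw [h1, h2]
    exact hD.dual p (fun r hr s hs => hp r (mD hr) s (mD hs)) d hd d' hd'
  · intro φ hφ hfree
    let g0 : V → ZMod 2 := fun x => if (∃ e ∈ A, x ∈ e) then φ {v, x} else 0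
    -- free edges of D not in A are free in the glued complex
    have freeM : ∀ e, Free D e → e ∉ A → Free (D ∪ A.image (insert v)) e := by
      rintro e ⟨he, t, ht, het, hu⟩ heA
      refine ⟨he, t, mD ht, het, fun s hs hes => ?_⟩
      rcases mem.1 hs with h | ⟨f, hf, rfl⟩
      · exact hu s h hes
      · exact absurd (eqA he (fun h => hvD t ht (het h)) hf hes ▸ hf) heA
    have g00 : ∀ e, Free D e → e ∉ A → ∀ x ∈ e, g0 x = 0 := by
      intro e he heA x hx
      by_cases hxA : ∃ e ∈ A, x ∈ e
      swap
      · exact if_neg hxA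
      show (if _ then φ {v, x} else 0) = 0
      rw [if_pos hxA]
      obtain ⟨f, hf, hxf⟩ := hxA
      obtain ⟨y, hy, rfl⟩ := edge_of_mem he.1 hx
      obtain ⟨z, hz, rfl⟩ := edge_of_mem (hA f hf).1.1 hxf
      have hxv : v ≠ x := fun h => hvA _ hf (h ▸ hxf)
      apply hfree
      refine ⟨pair_card hxv, _, mA hf, ?_, ?_⟩
      · rw [pair_sub]; simp
      · intro s hs hes
        rw [pair_sub] at hes
        rcases mem.1 hs with h | ⟨f', hf', rfl⟩
        · exact absurd hes.1 (hvD s h)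
        · have hxf' : x ∈ f' := (Finset.mem_insert.1 hes.2).resolve_left hxv.symm
          obtain ⟨w, hw, rfl⟩ := edge_of_mem (hA f' hf').1.1 hxf'
          rcases hD.no3 hy hz hw he (hA _ hf).1 (hA _ hf').1 with rfl | rfl | rfl
          · exact absurd hf heA
          · exact absurd hf' heA
          · rfl
    have h2 : (2 : ZMod 2) = 0 := rfl
    have tri : ∀ x y, x ≠ y → {x, y} ∈ A → φ {x, y} = φ {v, x} + φ {v, y} := by
      intro x y hxy hA'
      have hv := hvA _ hA'
      simp only [Finset.mem_insert, Finset.mem_singleton, not_or] at hv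
      have h := hφ _ (mA hA')
      rw [tri_sum hv.1 hv.2 hxy] at h
      linear_combination h - (φ {v, x} + φ {v, y}) * h2
    obtain ⟨g', hg1, hg2⟩ := hD.J (fun e => φ e + ∑ x ∈ e, g0 x) (by
      intro t ht
      rw [Finset.sum_add_distrib, hφ t (mD ht), cobdry_sum (hD.card3 t ht), add_zero]) (by
      intro e he
      show φ e + ∑ x ∈ e, g0 x = 0
      by_cases heA : e ∈ A
      · obtain ⟨x, y, hxy, rfl⟩ := Finset.card_eq_two.1 he.1
        have hx : g0 x = φ {v, x} := if_pos ⟨_, heA, by simp⟩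
        have hy : g0 y = φ {v, y} := if_pos ⟨_, heA, by simp⟩
        rw [sum_pair' hxy, hx, hy, tri x y hxy heA]
        exact zmod2_add_self _
      · rw [hfree e (freeM e he heA), Finset.sum_eq_zero (g00 e he heA), add_zero])
    have gD : ∀ x, x ≠ v → (if x = v then 0 else g' x + g0 x) = g' x + g0 x := fun x hx => if_neg hx
    have edgeD : ∀ t ∈ D, ∀ e : Finset V, e.card = 2 → e ⊆ t →
        φ e = ∑ x ∈ e, (if x = v then 0 else g' x + g0 x) := by
      intro t ht e he het
      have : ∑ x ∈ e, (if x = v then 0 else g' x + g0 x) = ∑ x ∈ e, (g' x + g0 x) :=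
        Finset.sum_congr rfl fun x hx => gD x fun h => hvD t ht (h ▸ het hx)
      rw [this, Finset.sum_add_distrib, ← hg1 t ht e he het]
      linear_combination - (∑ x ∈ e, g0 x) * h2
    have gA : ∀ e ∈ A, ∀ x ∈ e, (if x = v then 0 else g' x + g0 x) = φ {v, x} := by
      intro e he x hx
      have hxv : x ≠ v := fun h => hvA e he (h ▸ hx)
      rw [gD x hxv, hg2 e (hA e he).1 x hx, zero_add]
      exact if_pos ⟨e, he, hx⟩
    refine ⟨fun x => if x = v then 0 else g' x + g0 x, ?_, ?_⟩
    · intro t ht e he het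
      rcases mem.1 ht with h | ⟨f, hf, rfl⟩
      · exact edgeD t h e he het
      · by_cases hve : v ∈ e
        · obtain ⟨x, hx, rfl⟩ := edge_of_mem he hve
          have hxf : x ∈ f := (Finset.mem_insert.1 (pair_sub.1 het).2).resolve_left hx
          rw [sum_pair' hx.symm, if_pos rfl, zero_add, gA f hf x hxf]
        · obtain ⟨d, hd, hed⟩ := adj f hf
          exact edgeD d hd e he ((eqA he hve hf het).symm ▸ hed)
    · intro e he x hx
      show (if x = v then 0 else g' x + g0 x) = 0
      by_cases hve : v ∈ e
      · by_cases hxv : x = v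
        · exact if_pos hxv
        obtain ⟨y, hy, rfl⟩ := edge_of_mem he.1 hve
        have hxy : x = y := by
          simp only [Finset.mem_insert, Finset.mem_singleton] at hx
          exact hx.resolve_left hxv
        obtain ⟨-, t, ht, het, -⟩ := id he
        rcases mem.1 ht with h | ⟨f, hf, rfl⟩
        · exact absurd (het hve) (hvD t h)
        · have hxf : x ∈ f := (Finset.mem_insert.1 (het hx)).resolve_left hxv
          rw [gA f hf x hxf, hxy]
          exact hfree _ he
      · have hxv : x ≠ v := fun h => hve (h ▸ hx)
        obtain ⟨h2', t, ht, het, hu⟩ := id he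
        have heA : e ∉ A := by
          intro heA
          obtain ⟨d, hd, hed⟩ := adj e heA
          have := (hu d (mD hd) hed).trans (hu _ (mA heA) (Finset.subset_insert _ _)).symm
          exact hvD d hd (this ▸ Finset.mem_insert_self v e)
        have htD : t ∈ D := by
          rcases mem.1 ht with h | ⟨f, hf, rfl⟩
          · exact h
          · exact absurd (eqA h2' hve hf het ▸ hf) heA
        have hfD : Free D e := ⟨h2', t, htD, het, fun s hs => hu s (mD hs)⟩
        rw [gD x hxv, hg2 e hfD x hx, g00 e hfD heA x hx, add_zero]

end comb4

section topo1
open Set Metric Topology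

theorem open_convex_diff {U : Set ℂ} (hU : IsOpen U) (hc : Convex ℝ U) {s : Set ℂ} (hs : s.Finite) :
    IsPreconnected (U \ s) := by
  rcases (U \ s).eq_empty_or_nonempty with h0 | ⟨a, ha⟩
  · rw [h0]; exact isPreconnected_empty
  refine IsPathConnected.isConnected ⟨a, ha, ?_⟩ |>.isPreconnected
  intro b hb
  rcases eq_or_ne a b with rfl | hab
  · exact JoinedIn.refl ha
  let c := (2 : ℝ)⁻¹ • (a + b)
  let x := (2 : ℝ)⁻¹ • (b - a)
  have Ia : c - x = a := by
    simp only [c, x]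
    module
  have Ib : c + x = b := by
    simp only [c, x]
    module
  have hcU : c ∈ U := by
    have := hc ha.1 hb.1 (show (0:ℝ) ≤ 2⁻¹ by norm_num) (show (0:ℝ) ≤ 2⁻¹ by norm_num) (by norm_num)
    simpa only [c, smul_add] using this
  have x_ne_zero : x ≠ 0 := by simpa [x] using sub_ne_zero.2 hab.symm
  have hrank : 1 < Module.rank ℝ ℂ := by rw [Complex.rank_real_complex]; norm_num
  obtain ⟨y, hy⟩ : ∃ y, LinearIndependent ℝ ![x, y] :=
    exists_linearIndependent_pair_of_one_lt_rank hrank x_ne_zero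
  have A : Set.Countable {t : ℝ | (segment ℝ (c + x) (c + t • y) ∩ s).Nonempty} := by
    apply countable_ofPred_nonempty_of_disjoint _ (fun t ↦ inter_subset_right) hs.countable
    intro t t' htt'
    apply disjoint_iff_inter_eq_empty.2
    have N : {c + x} ∩ s = ∅ := by
      simpa only [singleton_inter_eq_empty, mem_compl_iff, Ib] using hb.2
    rw [inter_assoc, inter_comm s, inter_assoc, inter_self, ← inter_assoc, ← subset_empty_iff, ← N]
    apply inter_subset_inter_left
    apply Eq.subset
    apply segment_inter_eq_endpoint_of_linearIndependent_of_ne hy htt'.symm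
  have B : Set.Countable {t : ℝ | (segment ℝ (c - x) (c + t • y) ∩ s).Nonempty} := by
    apply countable_ofPred_nonempty_of_disjoint _ (fun t ↦ inter_subset_right) hs.countable
    intro t t' htt'
    apply disjoint_iff_inter_eq_empty.2
    have N : {c - x} ∩ s = ∅ := by
      simpa only [singleton_inter_eq_empty, mem_compl_iff, Ia] using ha.2
    rw [inter_assoc, inter_comm s, inter_assoc, inter_self, ← inter_assoc, ← subset_empty_iff, ← N]
    apply inter_subset_inter_left
    rw [sub_eq_add_neg _ x]
    apply Eq.subset
    apply segment_inter_eq_endpoint_of_linearIndependent_of_ne _ htt'.symm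
    convert! hy.units_smul ![-1, 1]
    simp [← List.ofFn_inj]
  have hO : IsOpen {t : ℝ | c + t • y ∈ U} := by
    have : Continuous fun t : ℝ => c + t • y := by fun_prop
    exact hU.preimage this
  obtain ⟨t, ht, htU⟩ := ((A.union B).dense_compl ℝ).exists_mem_open hO ⟨0, by simpa using hcU⟩
  let z := c + t • y
  simp only [compl_union, mem_inter_iff, mem_compl_iff, mem_ofPred_eq, not_nonempty_iff_eq_empty]
    at ht
  have JA : JoinedIn (U \ s) a z := by
    apply JoinedIn.of_segment_subset
    refine subset_sdiff.2 ⟨hc.segment_subset ha.1 htU, ?_⟩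
    rw [disjoint_iff_inter_eq_empty]
    convert! ht.2
    exact Ia.symm
  have JB : JoinedIn (U \ s) b z := by
    apply JoinedIn.of_segment_subset
    refine subset_sdiff.2 ⟨hc.segment_subset hb.1 htU, ?_⟩
    rw [disjoint_iff_inter_eq_empty]
    convert! ht.1
    exact Ib.symm
  exact JA.trans JB.symm

theorem convex_diff {C : Set ℂ} (hc : Convex ℝ C) (hi : (interior C).Nonempty) {s : Set ℂ}
    (hs : s.Finite) : IsPreconnected (C \ s) := by
  have h := open_convex_diff isOpen_interior hc.interior hs
  refine h.subset_closure (sdiff_subset_sdiff_left interior_subset) ?_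
  have h1 : C ⊆ closure (interior C) := by
    rw [hc.closure_interior_eq_closure_of_nonempty_interior hi]
    exact subset_closure
  have h2 : closure (interior C) ⊆ closure (interior C \ s) := by
    apply closure_minimal _ isClosed_closure
    have hd : Dense sᶜ := hs.countable.dense_compl ℝ
    rw [sdiff_eq]
    exact hd.open_subset_closure_inter isOpen_interior
  exact sdiff_subset.trans (h1.trans h2)

theorem ball_inter_interior {z : ℂ} (hz : z ∈ closedBall (0:ℂ) 1) {ε : ℝ} (hε : 0 < ε) :
    (interior (closedBall (0:ℂ) 1 ∩ ball z ε)).Nonempty := by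
  rw [interior_inter, isOpen_ball.interior_eq, interior_closedBall _ one_ne_zero]
  have : z ∈ closure (ball (0:ℂ) 1) := by rwa [closure_ball _ one_ne_zero]
  rw [mem_closure_iff_nhds] at this
  obtain ⟨y, hy⟩ := this (ball z ε) (ball_mem_nhds z hε)
  exact ⟨y, hy.2, hy.1⟩

end topo1

abbrev Eu (N : ℕ) := EuclideanSpace ℝ (Fin N)

section wts
variable {N : ℕ}

/-- barycentric weights -/
def Wt (σ : Finset (Eu N)) (w : Eu N → ℝ) (x : Eu N) : Prop :=
  (∀ i, 0 ≤ w i) ∧ (∀ i, i ∉ σ → w i = 0) ∧ ∑ i ∈ σ, w i = 1 ∧ ∑ i ∈ σ, w i • i = x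

theorem Wt.hull {σ : Finset (Eu N)} {w : Eu N → ℝ} {x : Eu N} (h : Wt σ w x) :
    x ∈ convexHull ℝ (σ : Set (Eu N)) :=
  Finset.mem_convexHull'.2 ⟨w, fun y _ => h.1 y, h.2.2.1, h.2.2.2⟩

theorem exists_Wt {σ : Finset (Eu N)} {x : Eu N} (h : x ∈ convexHull ℝ (σ : Set (Eu N))) :
    ∃ w, Wt σ w x := by
  obtain ⟨w, h1, h2, h3⟩ := Finset.mem_convexHull'.1 h
  refine ⟨fun i => if i ∈ σ then w i else 0, ?_, ?_, ?_, ?_⟩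
  · intro i
    dsimp only
    split_ifs with hi
    · exact h1 i hi
    · exact le_refl _
  · intro i hi
    exact if_neg hi
  · rw [← h2]
    exact Finset.sum_congr rfl fun i hi => if_pos hi
  · rw [← h3]
    exact Finset.sum_congr rfl fun i hi => by simp only [if_pos hi]

theorem Wt.restrict {σ τ : Finset (Eu N)} {w : Eu N → ℝ} {x : Eu N} (h : Wt σ w x) (hτ : τ ⊆ σ)
    (hs : ∀ i ∈ σ, i ∉ τ → w i = 0) : Wt τ w x := by
  refine ⟨h.1, fun i hi => ?_, ?_, ?_⟩
  · by_cases hiσ : i ∈ σ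
    · exact hs i hiσ hi
    · exact h.2.1 i hiσ
  · rw [← h.2.2.1]
    exact Finset.sum_subset hτ fun i hi hi' => hs i hi hi'
  · rw [← h.2.2.2]
    exact Finset.sum_subset hτ fun i hi hi' => by rw [hs i hi hi', zero_smul]

theorem Wt.mono {σ τ : Finset (Eu N)} {w : Eu N → ℝ} {x : Eu N} (h : Wt σ w x) (hτ : σ ⊆ τ) :
    Wt τ w x := by
  refine ⟨h.1, fun i hi => h.2.1 i fun h' => hi (hτ h'), ?_, ?_⟩
  · rw [← h.2.2.1]
    exact (Finset.sum_subset hτ fun i _ hi' => h.2.1 i hi').symm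
  · rw [← h.2.2.2]
    exact (Finset.sum_subset hτ fun i _ hi' => by rw [h.2.1 i hi', zero_smul]).symm

theorem uniq_aux {σ : Finset (Eu N)} (hσ : AffineIndependent ℝ ((↑) : σ → Eu N)) {w w' : Eu N → ℝ}
    {x : Eu N} (h : Wt σ w x) (h' : Wt σ w' x) : w = w' := by
  funext i
  by_cases hi : i ∈ σ
  · have := hσ.eq_of_sum_eq_sum (s := Finset.univ) (w₁ := fun j : σ => w j) (w₂ := fun j : σ => w' j)
      (by
        have e1 := Finset.sum_coe_sort σ w
        have e2 := Finset.sum_coe_sort σ w'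
        rw [e1, e2, h.2.2.1, h'.2.2.1])
      (by
        have e1 := Finset.sum_coe_sort σ (fun j => w j • j)
        have e2 := Finset.sum_coe_sort σ (fun j => w' j • j)
        rw [e1, e2, h.2.2.2, h'.2.2.2])
    exact this ⟨i, hi⟩ (Finset.mem_univ _)
  · rw [h.2.1 i hi, h'.2.1 i hi]

theorem uniq (K : Geometry.SimplicialComplex ℝ (Eu N)) {σ τ : Finset (Eu N)} (hσ : σ ∈ K.faces)
    (hτ : τ ∈ K.faces) {w w' : Eu N → ℝ} {x : Eu N} (h : Wt σ w x) (h' : Wt τ w' x) : w = w' := by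
  have := K.inter_subset_convexHull hσ hτ ⟨h.hull, h'.hull⟩
  rw [← Finset.coe_inter] at this
  obtain ⟨u, hu⟩ := exists_Wt this
  rw [uniq_aux (K.indep hσ) h (hu.mono Finset.inter_subset_left),
    uniq_aux (K.indep hτ) h' (hu.mono Finset.inter_subset_right)]

theorem wt_mem (K : Geometry.SimplicialComplex ℝ (Eu N)) {σ τ : Finset (Eu N)} (hσ : σ ∈ K.faces)
    (hτ : τ ∈ K.faces) {w : Eu N → ℝ} {x : Eu N} (h : Wt σ w x)
    (hx : x ∈ convexHull ℝ (τ : Set (Eu N))) {i : Eu N} (hi : w i ≠ 0) : i ∈ τ := by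
  obtain ⟨u, hu⟩ := exists_Wt hx
  by_contra hiτ
  apply hi
  rw [uniq K hσ hτ h hu]
  exact hu.2.1 i hiτ

end wts

section topo2
open Set Metric Topology
variable {N : ℕ}

structure Dk (K : Geometry.SimplicialComplex ℝ (Eu N)) (M : Set (Finset (Eu N))) (F : Eu N → ℂ)
    (G : ℂ → Eu N) : Prop where
  sub : M ⊆ K.faces
  fin : M.Finite
  cx : IsComplex M
  le3 : ∀ σ ∈ M, σ.card ≤ 3
  Fc : ContinuousOn F (poly M)
  Gc : ContinuousOn G (closedBall 0 1)
  Fm : ∀ x ∈ poly M, F x ∈ closedBall (0:ℂ) 1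
  Gm : ∀ z ∈ closedBall (0:ℂ) 1, G z ∈ poly M
  FG : ∀ z ∈ closedBall (0:ℂ) 1, F (G z) = z
  GF : ∀ x ∈ poly M, G (F x) = x

theorem exists_Dk (K : Geometry.SimplicialComplex ℝ (Eu N)) (hK : K.faces.Finite)
    (M : Set (Finset (Eu N))) (hM : M ⊆ K.faces)
    (hcx : IsComplex M) (h3 : ∀ σ ∈ M, σ.card ≤ 3) (hb : IsBallSet 2 (poly M)) :
    ∃ F G, Dk K M F G := by
  obtain ⟨h⟩ := hb
  obtain ⟨r⟩ : Nonempty (ℂ ≃ₗᵢ[ℝ] EuclideanSpace ℝ (Fin 2)) := ⟨Complex.orthonormalBasisOneI.repr⟩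
  have hr : ∀ z : ℂ, z ∈ closedBall (0:ℂ) 1 → r z ∈ closedBall (0 : EuclideanSpace ℝ (Fin 2)) 1 := by
    intro z hz
    rw [mem_closedBall_zero_iff] at hz ⊢
    rwa [r.norm_map]
  obtain ⟨F, hF⟩ : ∃ F : Eu N → ℂ, ∀ x (hx : x ∈ poly M), F x = r.symm (h ⟨x, hx⟩).1 :=
    ⟨fun x => if hx : x ∈ poly M then r.symm (h ⟨x, hx⟩).1 else 0, fun x hx => dif_pos hx⟩
  obtain ⟨G, hG⟩ : ∃ G : ℂ → Eu N, ∀ z (hz : z ∈ closedBall (0:ℂ) 1), G z = (h.symm ⟨r z, hr z hz⟩).1 :=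
    ⟨fun z => if hz : z ∈ closedBall (0:ℂ) 1 then (h.symm ⟨r z, hr z hz⟩).1 else 0, fun z hz => dif_pos hz⟩
  have hFm : ∀ x ∈ poly M, F x ∈ closedBall (0:ℂ) 1 := by
    intro x hx
    rw [hF x hx, mem_closedBall_zero_iff, r.symm.norm_map]
    exact mem_closedBall_zero_iff.1 (h ⟨x, hx⟩).2
  have hGm : ∀ z ∈ closedBall (0:ℂ) 1, G z ∈ poly M := by
    intro z hz
    rw [hG z hz]
    exact (h.symm _).2
  refine ⟨F, G, hM, hK.subset hM, hcx, h3, ?_, ?_, hFm, hGm, ?_, ?_⟩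
  · rw [continuousOn_iff_continuous_domRestrict]
    have : (poly M).domRestrict F = fun x => r.symm (h x).1 := by
      funext x
      exact hF x.1 x.2
    rw [this]
    exact r.symm.continuous.comp (continuous_subtype_val.comp h.continuous)
  · obtain ⟨k, hk, hkc⟩ : ∃ k : closedBall (0:ℂ) 1 → closedBall (0 : EuclideanSpace ℝ (Fin 2)) 1,
        (∀ z, k z = ⟨r z.1, hr z.1 z.2⟩) ∧ Continuous k :=
      ⟨fun z => ⟨r z.1, hr z.1 z.2⟩, fun z => rfl,
        Continuous.subtype_mk (r.continuous.comp continuous_subtype_val) _⟩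
    rw [continuousOn_iff_continuous_domRestrict]
    have : (closedBall (0:ℂ) 1).domRestrict G = fun z => (h.symm (k z)).1 := by
      funext x
      rw [hk]
      exact hG x.1 x.2
    rw [this]
    exact continuous_subtype_val.comp (h.symm.continuous.comp hkc)
  · intro z hz
    rw [hF _ (hGm z hz)]
    have : (⟨G z, hGm z hz⟩ : poly M) = h.symm ⟨r z, hr z hz⟩ := Subtype.ext (hG z hz)
    rw [this, h.apply_symm_apply]
    exact r.symm_apply_apply z
  · intro x hx
    rw [hG _ (hFm x hx)]
    have : (⟨r (F x), hr _ (hFm x hx)⟩ : closedBall (0 : EuclideanSpace ℝ (Fin 2)) 1) = h ⟨x, hx⟩ := by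
      apply Subtype.ext
      show r (F x) = _
      rw [hF x hx, r.apply_symm_apply]
    rw [this, h.symm_apply_apply]

theorem hull_closed (σ : Finset (Eu N)) : IsClosed (convexHull ℝ (σ : Set (Eu N))) :=
  (Set.Finite.isCompact_convexHull (𝕜 := ℝ) σ.finite_toSet).isClosed

theorem union_closed {A : Set (Finset (Eu N))} (hA : A.Finite) : IsClosed (poly A) :=
  hA.isClosed_biUnion fun σ _ => hull_closed σ

theorem mem_poly {A : Set (Finset (Eu N))} {x : Eu N} :
    x ∈ poly A ↔ ∃ σ ∈ A, x ∈ convexHull ℝ (σ : Set (Eu N)) := by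
  simp [poly]

theorem poly_mono {A B : Set (Finset (Eu N))} (h : A ⊆ B) : poly A ⊆ poly B := by
  intro x hx
  rw [mem_poly] at hx ⊢
  obtain ⟨σ, hσ, hx⟩ := hx
  exact ⟨σ, h hσ, hx⟩

variable {K : Geometry.SimplicialComplex ℝ (Eu N)} {M : Set (Finset (Eu N))} {F : Eu N → ℂ}
    {G : ℂ → Eu N}

theorem Dk.image_diff (d : Dk K M F G) {C : Set ℂ} (hC : C ⊆ closedBall 0 1) (hc : Convex ℝ C)
    (hi : (interior C).Nonempty) {s : Set (Eu N)} (hs : s.Finite) :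
    IsPreconnected (G '' C \ s) := by
  have : G '' C \ s = G '' (C \ F '' (s ∩ poly M)) := by
    ext x
    constructor
    · rintro ⟨⟨z, hz, rfl⟩, hx⟩
      refine ⟨z, ⟨hz, ?_⟩, rfl⟩
      rintro ⟨y, ⟨hy, hyM⟩, rfl⟩
      rw [d.GF y hyM] at hx
      exact hx hy
    · rintro ⟨z, ⟨hz, hz'⟩, rfl⟩
      refine ⟨⟨z, hz, rfl⟩, fun h => hz' ⟨G z, ⟨h, d.Gm z (hC hz)⟩, d.FG z (hC hz)⟩⟩
  rw [this]
  exact (convex_diff hc hi ((hs.inter_of_left _).image F)).image G (d.Gc.mono (sdiff_subset.trans hC))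

theorem Dk.whole (d : Dk K M F G) {s : Set (Eu N)} (hs : s.Finite) : IsPreconnected (poly M \ s) := by
  have : poly M = G '' closedBall 0 1 := by
    ext x
    constructor
    · intro hx; exact ⟨F x, d.Fm x hx, d.GF x hx⟩
    · rintro ⟨z, hz, rfl⟩; exact d.Gm z hz
  rw [this]
  refine d.image_diff subset_rfl (convex_closedBall _ _) ?_ hs
  rw [interior_closedBall _ one_ne_zero]
  exact ⟨0, by simp⟩

theorem Dk.loc (d : Dk K M F G) {m : Eu N} (hm : m ∈ poly M) {C : Set (Eu N)} (hC : IsClosed C)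
    (hmC : m ∉ C) {s : Set (Eu N)} (hs : s.Finite) :
    ∃ W, IsPreconnected W ∧ W ⊆ poly M \ C ∧ Disjoint W s ∧ W.Nonempty ∧
      ∀ᶠ y in 𝓝[poly M] m, y ∉ s → y ∈ W := by
  have h1 : ∀ᶠ z in 𝓝[closedBall 0 1] (F m), G z ∈ Cᶜ := by
    have := (d.Gc (F m) (d.Fm m hm)).tendsto
    rw [d.GF m hm] at this
    exact this.eventually (hC.isOpen_compl.mem_nhds hmC)
  rw [eventually_nhdsWithin_iff, Metric.eventually_nhds_iff] at h1
  obtain ⟨ε, hε, h1⟩ := h1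
  have hi := ball_inter_interior (d.Fm m hm) hε
  have hcv : Convex ℝ (closedBall (0:ℂ) 1 ∩ ball (F m) ε) := (convex_closedBall _ _).inter (convex_ball _ _)
  refine ⟨G '' (closedBall 0 1 ∩ ball (F m) ε) \ s, d.image_diff inter_subset_left hcv hi hs, ?_, ?_, ?_, ?_⟩
  · rintro x ⟨⟨z, hz, rfl⟩, -⟩
    exact ⟨d.Gm z hz.1, h1 hz.2 hz.1⟩
  · exact disjoint_sdiff_left
  · have hinf : (closedBall (0:ℂ) 1 ∩ ball (F m) ε).Infinite := by
      obtain ⟨z, hz⟩ := hi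
      exact infinite_of_mem_nhds z (mem_interior_iff_mem_nhds.1 hz)
    have hinj : InjOn G (closedBall (0:ℂ) 1 ∩ ball (F m) ε) := by
      intro x hx y hy hxy
      rw [← d.FG x hx.1, ← d.FG y hy.1, hxy]
    exact ((hinf.image hinj).sdiff hs).nonempty
  · have h2 : ∀ᶠ y in 𝓝[poly M] m, F y ∈ ball (F m) ε :=
      (d.Fc m hm).tendsto.eventually (ball_mem_nhds _ hε)
    filter_upwards [h2, self_mem_nhdsWithin] with y hy hyM hys
    exact ⟨⟨F y, ⟨d.Fm y hyM, hy⟩, d.GF y hyM⟩, hys⟩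

def Vt (M : Set (Finset (Eu N))) : Set (Eu N) := {x | {x} ∈ M}

theorem Dk.Vt_fin (d : Dk K M F G) : (Vt M).Finite := by
  have : (Vt M) = (fun x => ({x} : Finset (Eu N))) ⁻¹' M := rfl
  rw [this]
  exact d.fin.preimage (Finset.singleton_injective.injOn)

theorem Dk.vt (d : Dk K M F G) {σ : Finset (Eu N)} (hσ : σ ∈ M) {x : Eu N} (hx : x ∈ σ) : x ∈ Vt M :=
  d.cx.2 σ hσ {x} (by simpa using hx) (by simp)

theorem wt_vertex (x : Eu N) : Wt {x} (fun y => if y = x then 1 else 0) x := by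
  refine ⟨fun i => ?_, fun i hi => ?_, by simp, by simp⟩
  · dsimp only
    split_ifs <;> norm_num
  · simp only [Finset.mem_singleton] at hi
    exact if_neg hi

/-- weights on an edge -/
theorem wt_edge {a b : Eu N} (hab : a ≠ b) {s : ℝ} (h0 : 0 ≤ s) (h1 : s ≤ 1) :
    Wt {a, b} (fun y => if y = a then 1 - s else if y = b then s else 0) ((1 - s) • a + s • b) := by
  refine ⟨fun i => ?_, fun i hi => ?_, ?_, ?_⟩
  · dsimp only
    split_ifs <;> linarith
  · simp only [Finset.mem_insert, Finset.mem_singleton, not_or] at hi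
    simp [hi]
  · rw [Finset.sum_pair hab]; simp [hab.symm]
  · rw [Finset.sum_pair hab]; simp [hab.symm]

theorem Dk.not_vt (d : Dk K M F G) {σ : Finset (Eu N)} (hσ : σ ∈ M) {w : Eu N → ℝ} {x a b : Eu N}
    (hw : Wt σ w x) (hab : a ≠ b) (ha : w a ≠ 0) (hb : w b ≠ 0) : x ∉ Vt M := by
  intro hx
  have h1 := wt_mem K (d.sub hσ) (d.sub hx) hw (by simp) ha
  have h2 := wt_mem K (d.sub hσ) (d.sub hx) hw (by simp) hb
  simp only [Finset.mem_singleton] at h1 h2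
  exact hab (h1.trans h2.symm)

/-- a non-vertex in two hulls gives two common vertices -/
theorem Dk.common (d : Dk K M F G) {r s : Finset (Eu N)} (hr : r ∈ M) (hs : s ∈ M) {x : Eu N}
    (hxr : x ∈ convexHull ℝ (r : Set (Eu N))) (hxs : x ∈ convexHull ℝ (s : Set (Eu N)))
    (hx : x ∉ Vt M) : 2 ≤ (r ∩ s).card := by
  have := K.inter_subset_convexHull (d.sub hr) (d.sub hs) ⟨hxr, hxs⟩
  rw [← Finset.coe_inter] at this
  by_contra hcon
  push Not at hcon
  interval_cases h : (r ∩ s).card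
  · rw [Finset.card_eq_zero.1 h] at this
    simp at this
  · obtain ⟨y, hy⟩ := Finset.card_eq_one.1 h
    rw [hy] at this
    simp only [Finset.coe_singleton, convexHull_singleton, mem_singleton_iff] at this
    have hyr : y ∈ r ∩ s := by rw [hy]; simp
    exact hx (this ▸ d.vt hr (Finset.mem_inter.1 hyr).1)

theorem edge_tendsto (a b : Eu N) : Filter.Tendsto (fun s : ℝ => (1 - s) • a + s • b) (𝓝 0) (𝓝 a) := by
  have : Continuous fun s : ℝ => (1 - s) • a + s • b := by fun_prop
  have h := this.tendsto 0
  simpa using h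

/-- points near `a` on the edge towards `b` -/
theorem edge_near {a b : Eu N} (hab : a ≠ b) {A : Set (Finset (Eu N))} {σ : Finset (Eu N)} (hσ : σ ∈ A)
    (ha : a ∈ σ) (hb : b ∈ σ) {P : Eu N → Prop} (hP : ∀ᶠ y in 𝓝[poly A] a, P y) :
    ∃ s : ℝ, 0 < s ∧ s < 1 ∧ P ((1 - s) • a + s • b) ∧
      Wt {a, b} (fun y => if y = a then 1 - s else if y = b then s else 0) ((1 - s) • a + s • b) := by
  rw [eventually_nhdsWithin_iff] at hP
  have h1 := (edge_tendsto a b).eventually hP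
  have h2 := h1.filter_mono (nhdsWithin_le_nhds (s := Ioi (0:ℝ)))
  have h3 : ∀ᶠ s : ℝ in 𝓝[>] 0, s < 1 := by
    apply Filter.Eventually.filter_mono nhdsWithin_le_nhds
    exact eventually_lt_nhds one_pos
  obtain ⟨s, hs, hs1, hs0⟩ := (h2.and (h3.and self_mem_nhdsWithin)).exists
  have hs0 : 0 < s := hs0
  have hw := wt_edge hab hs0.le hs1.le
  refine ⟨s, hs0, hs1, hs ?_, hw⟩
  rw [mem_poly]
  refine ⟨σ, hσ, (hw.mono ?_).hull⟩
  intro y hy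
  simp only [Finset.mem_insert, Finset.mem_singleton] at hy
  rcases hy with rfl | rfl
  · exact ha
  · exact hb

end topo2

section topo3
open Set Metric Topology
variable {N : ℕ}
variable {K : Geometry.SimplicialComplex ℝ (Eu N)} {M : Set (Finset (Eu N))} {F : Eu N → ℂ}
    {G : ℂ → Eu N}

theorem Dk.pure (d : Dk K M F G) {σ : Finset (Eu N)} (hσ : σ ∈ M) : ∃ τ ∈ M, τ.card = 3 ∧ σ ⊆ τ := by
  obtain ⟨τ, hστ, hτ⟩ := d.fin.exists_le_maximal hσ
  have hτM : τ ∈ M := hτ.prop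
  have hmax : ∀ ρ ∈ M, τ ⊆ ρ → ρ = τ := fun ρ hρ h => le_antisymm (hτ.le_of_ge hρ h) h
  refine ⟨τ, hτM, ?_, hστ⟩
  by_contra hne
  have hpos : 0 < τ.card := Finset.card_pos.2 (Finset.nonempty_iff_ne_empty.2 (d.cx.1 τ hτM))
  have hle := d.le3 τ hτM
  have hA : IsClosed (poly {ρ ∈ M | ¬ τ ⊆ ρ}) := union_closed (d.fin.subset (sep_subset _ _))
  have hcov : ∀ y ∈ poly M \ poly {ρ ∈ M | ¬ τ ⊆ ρ}, y ∈ convexHull ℝ (τ : Set (Eu N)) := by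
    rintro y ⟨hy, hy'⟩
    obtain ⟨ρ, hρ, hyρ⟩ := mem_poly.1 hy
    by_cases h : τ ⊆ ρ
    · rwa [hmax ρ hρ h] at hyρ
    · exact (hy' (mem_poly.2 ⟨ρ, ⟨hρ, h⟩, hyρ⟩)).elim
  have hout : ∀ m w, Wt τ w m → (∀ i ∈ τ, w i ≠ 0) → m ∉ poly {ρ ∈ M | ¬ τ ⊆ ρ} := by
    intro m w hw hi hm
    obtain ⟨ρ, ⟨hρ, h⟩, hmρ⟩ := mem_poly.1 hm
    exact h fun i hi' => wt_mem K (d.sub hτM) (d.sub hρ) hw hmρ (hi i hi')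
  interval_cases h : τ.card
  · obtain ⟨x, rfl⟩ := Finset.card_eq_one.1 h
    have hx := wt_vertex x
    obtain ⟨W, -, hW, hdis, ⟨y, hy⟩, -⟩ := d.loc (mem_poly.2 ⟨_, hτM, hx.hull⟩) hA
      (hout _ _ hx (by simp)) (finite_singleton x)
    have := hcov y (hW hy)
    simp only [Finset.coe_singleton, convexHull_singleton, mem_singleton_iff] at this
    exact (disjoint_left.1 hdis hy) this
  · obtain ⟨a, b, hab, rfl⟩ := Finset.card_eq_two.1 h
    have hx := wt_edge hab (s := 1/2) (by norm_num) (by norm_num)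
    obtain ⟨m, hm⟩ : ∃ m, m = (1 - (1/2:ℝ)) • a + (1/2:ℝ) • b := ⟨_, rfl⟩
    rw [← hm] at hx
    obtain ⟨W, hWc, hW, hdis, -, hev⟩ := d.loc (mem_poly.2 ⟨_, hτM, hx.hull⟩) hA
      (hout _ _ hx (by
        intro i hi
        simp only [Finset.mem_insert, Finset.mem_singleton] at hi
        rcases hi with rfl | rfl
        · simp; norm_num
        · simp [hab.symm])) (finite_singleton m)
    have hu : ∀ s : ℝ, inner ℝ (b - a) ((1 - s) • a + s • b - m) = (s - 1/2) * ‖b - a‖ ^ 2 := by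
      intro s
      have : (1 - s) • a + s • b - m = (s - 1/2) • (b - a) := by rw [hm]; module
      rw [this, inner_smul_right, real_inner_self_eq_norm_sq]
    have hpos : 0 < ‖b - a‖ ^ 2 := by
      have := norm_pos_iff.2 (sub_ne_zero.2 hab.symm)
      positivity
    have hc : Continuous fun s : ℝ => (1 - s) • a + s • b := by fun_prop
    have ht : Filter.Tendsto (fun s : ℝ => (1 - s) • a + s • b) (𝓝 (1/2)) (𝓝 m) := by
      rw [hm]; exact hc.tendsto (1/2)
    rw [eventually_nhdsWithin_iff] at hev
    have h1 := ht.eventually hev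
    have h2 : ∀ᶠ s : ℝ in 𝓝 (1/2), 0 < s ∧ s < 1 := by
      exact (eventually_gt_nhds (by norm_num)).and (eventually_lt_nhds (by norm_num))
    have key : ∀ s : ℝ, 0 < s → s < 1 → s ≠ 1/2 → ((1 - s) • a + s • b ∈ poly M → (1 - s) • a + s • b ∉ ({m} : Set (Eu N)) → (1 - s) • a + s • b ∈ W) →
        (1 - s) • a + s • b ∈ W := by
      intro s h0 h1 hs h
      refine h (mem_poly.2 ⟨_, hτM, (wt_edge hab h0.le h1.le).hull⟩) ?_
      intro h'
      rw [mem_singleton_iff] at h'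
      have := hu s
      rw [h', sub_self, inner_zero_right] at this
      have := mul_eq_zero.1 this.symm
      rcases this with h | h
      · exact hs (by linarith)
      · exact hpos.ne' h
    obtain ⟨s, ⟨hs, hs0, hs1⟩, hss⟩ := (((h1.and h2).filter_mono (nhdsWithin_le_nhds (s := Iio (1/2)))).and self_mem_nhdsWithin).exists
    obtain ⟨s', ⟨hs', hs0', hs1'⟩, hss'⟩ := (((h1.and h2).filter_mono (nhdsWithin_le_nhds (s := Ioi (1/2)))).and self_mem_nhdsWithin).exists
    have hss : s < 1/2 := hss
    have hss' : 1/2 < s' := hss'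
    have k1 := key s hs0 hs1 hss.ne hs
    have k2 := key s' hs0' hs1' hss'.ne' hs'
    have hf : ContinuousOn (fun y : Eu N => (inner ℝ (b - a) (y - m) : ℝ)) W := by fun_prop
    obtain ⟨y, hy, hy0⟩ := hWc.intermediate_value k1 k2 hf (show (0:ℝ) ∈ Icc _ _ by
      rw [hu, hu]
      constructor
      · nlinarith
      · nlinarith)
    have hyh := hcov y (hW hy)
    obtain ⟨w, hw⟩ := exists_Wt hyh
    have e1 := hw.2.2.1
    have e2 := hw.2.2.2
    rw [Finset.sum_pair hab] at e1 e2
    have e3 : w a = 1 - w b := by linarith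
    rw [e3] at e2
    dsimp only at hy0
    rw [← e2, hu] at hy0
    have hwb : w b = 1/2 := by
      rcases mul_eq_zero.1 hy0 with h | h
      · linarith
      · exact absurd h hpos.ne'
    refine disjoint_left.1 hdis hy ?_
    rw [mem_singleton_iff, ← e2, hwb, hm]
  · exact hne rfl

theorem Dk.conn (d : Dk K M F G) {W : Set (Eu N)} (hW : IsPreconnected W) (hWM : W ⊆ poly M)
    (hWV : Disjoint W (Vt M)) (p : Finset (Eu N) → Prop)
    (hp : ∀ s ∈ M, s.card = 3 → ∀ t ∈ M, t.card = 3 → ∀ y ∈ W, y ∈ convexHull ℝ (s : Set (Eu N)) →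
      y ∈ convexHull ℝ (t : Set (Eu N)) → 2 ≤ (s ∩ t).card → p s → p t)
    {s t : Finset (Eu N)} (hs : s ∈ M) (hs3 : s.card = 3) (ht : t ∈ M) (ht3 : t.card = 3)
    (hsW : ∃ y ∈ W, y ∈ convexHull ℝ (s : Set (Eu N))) (htW : ∃ y ∈ W, y ∈ convexHull ℝ (t : Set (Eu N)))
    (hps : p s) : p t := by
  by_contra hpt
  have hA : IsClosed (poly {r ∈ M | r.card = 3 ∧ p r}) := union_closed (d.fin.subset (sep_subset _ _))
  have hB : IsClosed (poly {r ∈ M | r.card = 3 ∧ ¬ p r}) := union_closed (d.fin.subset (sep_subset _ _))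
  obtain ⟨y, hyW, hyA, hyB⟩ := (isPreconnected_closed_iff.1 hW) _ _ hA hB (by
      intro y hy
      obtain ⟨σ, hσ, hyσ⟩ := mem_poly.1 (hWM hy)
      obtain ⟨τ, hτ, hτ3, hστ⟩ := d.pure hσ
      have hyτ : y ∈ convexHull ℝ (τ : Set (Eu N)) := convexHull_mono (Finset.coe_subset.2 hστ) hyσ
      by_cases h : p τ
      · exact Or.inl (mem_poly.2 ⟨τ, ⟨hτ, hτ3, h⟩, hyτ⟩)
      · exact Or.inr (mem_poly.2 ⟨τ, ⟨hτ, hτ3, h⟩, hyτ⟩))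
    (by obtain ⟨y, hy, hys⟩ := hsW; exact ⟨y, hy, mem_poly.2 ⟨s, ⟨hs, hs3, hps⟩, hys⟩⟩)
    (by obtain ⟨y, hy, hys⟩ := htW; exact ⟨y, hy, mem_poly.2 ⟨t, ⟨ht, ht3, hpt⟩, hys⟩⟩)
  obtain ⟨r, ⟨hr, hr3, hpr⟩, hyr⟩ := mem_poly.1 hyA
  obtain ⟨q, ⟨hq, hq3, hpq⟩, hyq⟩ := mem_poly.1 hyB
  exact hpq (hp r hr hr3 q hq hq3 y hyW hyr hyq (d.common hr hq hyr hyq (disjoint_left.1 hWV hyW)) hpr)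

theorem Dk.mid (d : Dk K M F G) {s : Finset (Eu N)} (hs : s ∈ M) (hs3 : s.card = 3) :
    ∃ y ∈ poly M \ Vt M, y ∈ convexHull ℝ (s : Set (Eu N)) := by
  obtain ⟨a, b, c, hab, hac, hbc, rfl⟩ := Finset.card_eq_three.1 hs3
  have hx := (wt_edge hab (s := 1/2) (by norm_num) (by norm_num)).mono (τ := {a, b, c}) (by
    intro y; simp only [Finset.mem_insert, Finset.mem_singleton]; tauto)
  refine ⟨_, ⟨mem_poly.2 ⟨_, hs, hx.hull⟩, d.not_vt hs hx hab ?_ ?_⟩, hx.hull⟩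
  · simp; norm_num
  · simp [hab.symm]

theorem Dk.dual (d : Dk K M F G) (p : Finset (Eu N) → Prop)
    (hp : ∀ s ∈ M, s.card = 3 → ∀ t ∈ M, t.card = 3 → ∀ e : Finset (Eu N), e.card = 2 → e ⊆ s → e ⊆ t → (p s ↔ p t))
    {s t : Finset (Eu N)} (hs : s ∈ M) (hs3 : s.card = 3) (ht : t ∈ M) (ht3 : t.card = 3) (h : p s) : p t := by
  refine d.conn (d.whole d.Vt_fin) sdiff_subset disjoint_sdiff_left p ?_ hs hs3 ht ht3 (d.mid hs hs3) (d.mid ht ht3) h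
  intro r hr hr3 q hq hq3 y _ _ _ h2 hpr
  obtain ⟨e, he, he2⟩ := Finset.exists_subset_card_eq h2
  exact (hp r hr hr3 q hq hq3 e he2 (he.trans Finset.inter_subset_left) (he.trans Finset.inter_subset_right)).1 hpr

theorem Dk.star (d : Dk K M F G) (x : Eu N) (p : Finset (Eu N) → Prop)
    (hp : ∀ s ∈ M, s.card = 3 → ∀ t ∈ M, t.card = 3 → ∀ e : Finset (Eu N), e.card = 2 → x ∈ e → e ⊆ s → e ⊆ t → (p s ↔ p t))
    {s t : Finset (Eu N)} (hs : s ∈ M) (hs3 : s.card = 3) (ht : t ∈ M) (ht3 : t.card = 3)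
    (hxs : x ∈ s) (hxt : x ∈ t) (h : p s) : p t := by
  have hxM : {x} ∈ M := d.vt hs hxs
  have hA : IsClosed (poly {ρ ∈ M | x ∉ ρ}) := union_closed (d.fin.subset (sep_subset _ _))
  have hxA : x ∉ poly {ρ ∈ M | x ∉ ρ} := by
    intro hx
    obtain ⟨ρ, ⟨hρ, hxρ⟩, h⟩ := mem_poly.1 hx
    exact hxρ (wt_mem K (d.sub hxM) (d.sub hρ) (wt_vertex x) h (by simp))
  obtain ⟨W, hWc, hW, hdis, -, hev⟩ := d.loc (mem_poly.2 ⟨_, hxM, (wt_vertex x).hull⟩) hA hxA d.Vt_fin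
  have hpt : ∀ r ∈ M, r.card = 3 → x ∈ r → ∃ y ∈ W, y ∈ convexHull ℝ (r : Set (Eu N)) := by
    intro r hr hr3 hxr
    obtain ⟨b, hb, hbx⟩ := Finset.exists_mem_ne (by omega : 1 < r.card) x
    obtain ⟨u, hu0, hu1, hu, hw⟩ := edge_near hbx.symm hr hxr hb hev
    have hw' := hw.mono (τ := r) (by
      intro y hy
      simp only [Finset.mem_insert, Finset.mem_singleton] at hy
      rcases hy with rfl | rfl
      · exact hxr
      · exact hb)
    refine ⟨_, hu (d.not_vt hr hw' hbx.symm ?_ ?_), hw'.hull⟩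
    · simp only [if_true]; linarith
    · simp only [if_neg hbx, if_true]; linarith
  refine d.conn hWc (hW.trans sdiff_subset) hdis p ?_ hs hs3 ht ht3 (hpt s hs hs3 hxs) (hpt t ht ht3 hxt) h
  intro r hr hr3 q hq hq3 y hy hyr hyq h2 hpr
  have hx : ∀ r ∈ M, y ∈ convexHull ℝ (r : Set (Eu N)) → x ∈ r := by
    intro r hr hyr
    by_contra hxr
    exact (hW hy).2 (mem_poly.2 ⟨r, ⟨hr, hxr⟩, hyr⟩)
  obtain ⟨e, hxe, he, he2⟩ := Finset.exists_subsuperset_card_eq (s := {x}) (t := r ∩ q) (n := 2)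
    (by simp [hx r hr hyr, hx q hq hyq]) (by simp) h2
  exact (hp r hr hr3 q hq hq3 e he2 (hxe (by simp)) (he.trans Finset.inter_subset_left) (he.trans Finset.inter_subset_right)).1 hpr

end topo3

section topo4
open Set Metric Topology
variable {N : ℕ}
variable {K : Geometry.SimplicialComplex ℝ (Eu N)} {M : Set (Finset (Eu N))} {F : Eu N → ℂ}
    {G : ℂ → Eu N}

theorem Dk.Finj (d : Dk K M F G) : InjOn F (poly M) := by
  intro x hx y hy h
  rw [← d.GF x hx, ← d.GF y hy, h]

theorem Dk.chart (d : Dk K M F G) (f : ℂ → Eu N) {r : ℝ} (hr : 0 < r) (hf : ContinuousOn f (closedBall 0 r))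
    (hfM : ∀ z ∈ closedBall (0:ℂ) r, f z ∈ poly M) (inj : InjOn f (closedBall 0 r)) :
    ‖F (f 0)‖ < 1 ∧ ∀ᶠ y in 𝓝[poly M] (f 0), ∃ z ∈ closedBall (0:ℂ) r, f z = y := by
  have h := iod (F ∘ f) r hr (d.Fc.comp hf hfM) (d.Finj.comp inj hfM)
  have h0 : (0:ℂ) ∈ closedBall (0:ℂ) r := by simp [hr.le]
  constructor
  · have h1 : closedBall (0:ℂ) 1 ∈ 𝓝 (F (f 0)) := by
      refine Filter.mem_of_superset h ?_
      rintro _ ⟨z, hz, rfl⟩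
      exact d.Fm _ (hfM z hz)
    rw [← mem_interior_iff_mem_nhds, interior_closedBall _ one_ne_zero] at h1
    simpa using h1
  · have h2 := (d.Fc (f 0) (hfM 0 h0)).tendsto.eventually h
    filter_upwards [h2, self_mem_nhdsWithin] with y hy hyM
    obtain ⟨z, hz, hzy⟩ := hy
    exact ⟨z, hz, d.Finj (hfM z hz) hyM hzy⟩

/-- four point weights -/
noncomputable def w4 (a b c e : Eu N) (p q r s : ℝ) : Eu N → ℝ := fun y =>
  if y = a then p else if y = b then q else if y = c then r else if y = e then s else 0

theorem wt3 {a b c : Eu N} (hab : a ≠ b) (hac : a ≠ c) (hbc : b ≠ c) {p q r : ℝ} (hp : 0 ≤ p) (hq : 0 ≤ q)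
    (hr : 0 ≤ r) (h : p + q + r = 1) (e : Eu N) :
    Wt {a, b, c} (w4 a b c e p q r 0) (p • a + q • b + r • c) := by
  refine ⟨fun i => ?_, fun i hi => ?_, ?_, ?_⟩
  · unfold w4
    split_ifs <;> first | assumption | exact le_refl _
  · simp only [Finset.mem_insert, Finset.mem_singleton, not_or] at hi
    simp [w4, hi]
  · rw [Finset.sum_insert (by simp [hab, hac]), Finset.sum_pair hbc]
    simp [w4, hab.symm, hac.symm, hbc.symm]
    linarith
  · rw [Finset.sum_insert (by simp [hab, hac]), Finset.sum_pair hbc]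
    simp [w4, hab.symm, hac.symm, hbc.symm]
    abel

theorem w4_swap {a b c e : Eu N} (hce : c ≠ e) (p q r s : ℝ) : w4 a b c e p q r s = w4 a b e c p q s r := by
  funext y
  unfold w4
  by_cases h1 : y = c
  · subst h1; simp [hce]
  · simp [h1]

theorem re_im_small {z : ℂ} {r : ℝ} (hz : z ∈ closedBall (0:ℂ) r) : |z.re| ≤ r ∧ |z.im| ≤ r := by
  rw [mem_closedBall_zero_iff] at hz
  exact ⟨(Complex.abs_re_le_norm z).trans hz, (Complex.abs_im_le_norm z).trans hz⟩

theorem Dk.tri_in (d : Dk K M F G) {a b c : Eu N} (hab : a ≠ b) (hac : a ≠ c) (hbc : b ≠ c)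
    (ht : {a, b, c} ∈ M) {p q r : ℝ} (hp : 0 < p) (hq : 0 < q)
    (hr : 0 < r) (h : p + q + r = 1) : ‖F (p • a + q • b + r • c)‖ < 1 := by
  let f : ℂ → Eu N := fun z => (p - z.re - z.im) • a + (q + z.re) • b + (r + z.im) • c
  obtain ⟨ε, hε, e1, e2, e3⟩ : ∃ ε : ℝ, 0 < ε ∧ 2 * ε ≤ p ∧ ε ≤ q ∧ ε ≤ r := by
    refine ⟨min (p/2) (min q r), by positivity, ?_, ?_, ?_⟩
    · have := min_le_left (p/2) (min q r); linarith
    · exact (min_le_right _ _).trans (min_le_left _ _)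
    · exact (min_le_right _ _).trans (min_le_right _ _)
  have hw : ∀ z ∈ closedBall (0:ℂ) ε, Wt {a, b, c} (w4 a b c c (p - z.re - z.im) (q + z.re) (r + z.im) 0) (f z) := by
    intro z hz
    obtain ⟨h1, h2⟩ := re_im_small hz
    rw [abs_le] at h1 h2
    exact wt3 hab hac hbc (by linarith) (by linarith) (by linarith) (by linarith) c
  have := d.chart f hε (by fun_prop) (fun z hz => mem_poly.2 ⟨_, ht, (hw z hz).hull⟩) (by
    intro z hz z' hz' hzz
    have h1 := hw z hz
    rw [hzz] at h1
    have h2 := uniq_aux (K.indep (d.sub ht)) h1 (hw z' hz')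
    have h3 := congrFun h2 b
    have h4 := congrFun h2 c
    simp [w4, hab.symm, hac.symm, hbc.symm] at h3 h4
    exact Complex.ext h3 h4)
  simpa [f] using this.1

theorem Dk.edge_in (d : Dk K M F G) {a b c e : Eu N} (hab : a ≠ b) (hac : a ≠ c) (hbc : b ≠ c)
    (hae : a ≠ e) (hbe : b ≠ e) (hce : c ≠ e)
    (ht : {a, b, c} ∈ M) (ht' : {a, b, e} ∈ M) {p q : ℝ} (hp : 0 < p) (hq : 0 < q)
    (h : p + q = 1) : ‖F (p • a + q • b)‖ < 1 ∧ ∀ᶠ y in 𝓝[poly M] (p • a + q • b),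
      y ∈ convexHull ℝ (({a, b, c} : Finset (Eu N)) : Set (Eu N)) ∨ y ∈ convexHull ℝ (({a, b, e} : Finset (Eu N)) : Set (Eu N)) := by
  let f : ℂ → Eu N := fun z => (p - z.re - |z.im|) • a + (q + z.re) • b + (max z.im 0) • c + (max (-z.im) 0) • e
  obtain ⟨ε, hε, e1, e2⟩ : ∃ ε : ℝ, 0 < ε ∧ 2 * ε ≤ p ∧ ε ≤ q := by
    refine ⟨min (p/2) q, by positivity, ?_, ?_⟩
    · have := min_le_left (p/2) q; linarith
    · exact min_le_right _ _
  have hw : ∀ z ∈ closedBall (0:ℂ) ε, ∃ t, (t = {a, b, c} ∨ t = {a, b, e}) ∧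
      Wt t (w4 a b c e (p - z.re - |z.im|) (q + z.re) (max z.im 0) (max (-z.im) 0)) (f z) := by
    intro z hz
    obtain ⟨h1, h2⟩ := re_im_small hz
    rw [abs_le] at h1
    rcases le_total 0 z.im with h0 | h0
    · refine ⟨_, Or.inl rfl, ?_⟩
      have := wt3 hab hac hbc (p := p - z.re - |z.im|) (q := q + z.re) (r := |z.im|) (by linarith) (by linarith) (by positivity) (by linarith) e
      rw [abs_of_nonneg h0] at this
      simpa [f, max_eq_left h0, h0, abs_of_nonneg h0] using this
    · refine ⟨_, Or.inr rfl, ?_⟩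
      have := wt3 hab hae hbe (p := p - z.re - |z.im|) (q := q + z.re) (r := |z.im|) (by linarith) (by linarith) (by positivity) (by linarith) c
      rw [w4_swap hce.symm, abs_of_nonpos h0] at this
      have hm : max (-z.im) 0 = -z.im := max_eq_left (by linarith)
      have hm' : max z.im 0 = 0 := max_eq_right h0
      simpa only [f, hm, hm', abs_of_nonpos h0, zero_smul, add_zero] using this
  have hM : ∀ t, (t = {a, b, c} ∨ t = {a, b, e}) → t ∈ M := by
    rintro t (rfl | rfl)
    · exact ht
    · exact ht'
  have := d.chart f hε (by fun_prop) (fun z hz => by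
    obtain ⟨t, h1, h2⟩ := hw z hz
    exact mem_poly.2 ⟨t, hM t h1, h2.hull⟩) (by
    intro z hz z' hz' hzz
    obtain ⟨t, ht, h1⟩ := hw z hz
    obtain ⟨t', ht', h1'⟩ := hw z' hz'
    rw [hzz] at h1
    have h2 := uniq K (d.sub (hM t ht)) (d.sub (hM t' ht')) h1 h1'
    have h3 := congrFun h2 b
    have h4 := congrFun h2 c
    have h5 := congrFun h2 e
    simp only [w4, hab.symm, hac.symm, hbc.symm, hae.symm, hbe.symm, hce.symm, if_true, if_false, add_right_inj] at h3 h4 h5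
    refine Complex.ext h3 ?_
    have i1 := max_zero_sub_max_neg_zero_eq_self z.im
    have i2 := max_zero_sub_max_neg_zero_eq_self z'.im
    linarith)
  have f0 : f 0 = p • a + q • b := by simp [f]
  rw [f0] at this
  refine ⟨this.1, this.2.mono ?_⟩
  rintro y ⟨z, hz, rfl⟩
  obtain ⟨t, h1, h2⟩ := hw z hz
  rcases h1 with rfl | rfl
  · exact Or.inl h2.hull
  · exact Or.inr h2.hull

theorem Dk.deg2 (d : Dk K M F G) {e : Finset (Eu N)} (he : e.card = 2) {r s t : Finset (Eu N)} (hr : r ∈ M)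
    (hr3 : r.card = 3) (hs : s ∈ M) (hs3 : s.card = 3) (ht : t ∈ M) (ht3 : t.card = 3)
    (her : e ⊆ r) (hes : e ⊆ s) (het : e ⊆ t) : r = s ∨ r = t ∨ s = t := by
  by_contra hcon
  push Not at hcon
  obtain ⟨hrs, hrt, hst⟩ := hcon
  obtain ⟨a, b, hab, rfl⟩ := Finset.card_eq_two.1 he
  have third : ∀ r : Finset (Eu N), r.card = 3 → {a, b} ⊆ r → ∃ c, a ≠ c ∧ b ≠ c ∧ r = {a, b, c} := by
    intro r hr h
    have hc : (r \ {a, b}).card = 1 := by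
      rw [Finset.card_sdiff_of_subset h, hr, he]
    obtain ⟨c, hc⟩ := Finset.card_eq_one.1 hc
    have hcm : c ∈ r \ {a, b} := by rw [hc]; simp
    simp only [Finset.mem_sdiff, Finset.mem_insert, Finset.mem_singleton, not_or] at hcm
    refine ⟨c, fun h => hcm.2.1 h.symm, fun h => hcm.2.2 h.symm, ?_⟩
    rw [← Finset.union_sdiff_of_subset h, hc]
    ext y
    simp only [Finset.mem_union, Finset.mem_insert, Finset.mem_singleton]
    tauto
  obtain ⟨x, hax, hbx, rfl⟩ := third r hr3 her
  obtain ⟨c, hac, hbc, rfl⟩ := third s hs3 hes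
  obtain ⟨f, haf, hbf, rfl⟩ := third t ht3 het
  have hcf : c ≠ f := by rintro rfl; exact hst rfl
  have hxc : x ≠ c := by rintro rfl; exact hrs rfl
  have hxf : x ≠ f := by rintro rfl; exact hrt rfl
  have h := (d.edge_in hab hac hbc haf hbf hcf hs ht (p := 1/2) (q := 1/2) (by norm_num) (by norm_num) (by norm_num)).2
  rw [eventually_nhdsWithin_iff] at h
  have hc : Continuous fun u : ℝ => (1/2 - u/2) • a + (1/2 - u/2) • b + u • x := by fun_prop
  have hT := hc.tendsto 0
  simp only [zero_div, sub_zero, zero_smul, add_zero] at hT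
  have h1 := (hT.eventually h).filter_mono (nhdsWithin_le_nhds (s := Ioi (0:ℝ)))
  have h3 : ∀ᶠ s : ℝ in 𝓝[>] 0, s < 1 := by
    apply Filter.Eventually.filter_mono nhdsWithin_le_nhds
    exact eventually_lt_nhds one_pos
  obtain ⟨u, hu, hu1, hu0⟩ := (h1.and (h3.and self_mem_nhdsWithin)).exists
  have hu0 : 0 < u := hu0
  have hw := wt3 hab hax hbx (p := 1/2 - u/2) (q := 1/2 - u/2) (r := u) (by linarith) (by linarith) (by linarith) (by linarith) x
  have hwx : w4 a b x x (1/2 - u/2) (1/2 - u/2) u 0 x ≠ 0 := by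
    simp [w4, hax.symm, hbx.symm, hu0.ne']
  rcases hu (mem_poly.2 ⟨_, hr, hw.hull⟩) with h | h
  · have := wt_mem K (d.sub hr) (d.sub hs) hw h hwx
    simp [hax.symm, hbx.symm, hxc] at this
  · have := wt_mem K (d.sub hr) (d.sub ht) hw h hwx
    simp [hax.symm, hbx.symm, hxf] at this

theorem Dk.free_out (d : Dk K M F G) {a b c : Eu N} (hab : a ≠ b) (hac : a ≠ c) (hbc : b ≠ c)
    (ht : {a, b, c} ∈ M) (hfree : ∀ s ∈ M, {a, b} ⊆ s → s ⊆ {a, b, c}) {p q : ℝ} (hp : 0 < p) (hq : 0 < q)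
    (h : p + q = 1) : ‖F (p • a + q • b)‖ = 1 := by
  obtain ⟨x, hx⟩ : ∃ x, x = p • a + q • b := ⟨_, rfl⟩
  have hwx : Wt {a, b, c} (w4 a b c c p q 0 0) x := by
    have := wt3 hab hac hbc hp.le hq.le le_rfl (by linarith) c
    rw [zero_smul, add_zero, ← hx] at this
    exact this
  have hxM : x ∈ poly M := mem_poly.2 ⟨_, ht, hwx.hull⟩
  rw [← hx]
  have hle : ‖F x‖ ≤ 1 := by simpa using d.Fm x hxM
  by_contra hne
  have hlt : ‖F x‖ < 1 := lt_of_le_of_ne hle hne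
  have hA : IsClosed (poly {ρ ∈ M | ¬ {a, b} ⊆ ρ}) := union_closed (d.fin.subset (sep_subset _ _))
  have hxA : x ∉ poly {ρ ∈ M | ¬ {a, b} ⊆ ρ} := by
    intro hm
    obtain ⟨ρ, ⟨hρ, h⟩, hmρ⟩ := mem_poly.1 hm
    apply h
    simp only [Finset.insert_subset_iff, Finset.singleton_subset_iff]
    refine ⟨wt_mem K (d.sub ht) (d.sub hρ) hwx hmρ ?_, wt_mem K (d.sub ht) (d.sub hρ) hwx hmρ ?_⟩
    · simp [w4, hp.ne']
    · simp [w4, hab.symm, hq.ne']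
  have hnb : ∀ᶠ z in 𝓝 (F x), z ∈ closedBall (0:ℂ) 1 ∧ G z ∈ convexHull ℝ (({a, b, c} : Finset (Eu N)) : Set (Eu N)) := by
    have h1 : closedBall (0:ℂ) 1 ∈ 𝓝 (F x) := by
      rw [← mem_interior_iff_mem_nhds, interior_closedBall _ one_ne_zero]
      simpa using hlt
    have h2 : ContinuousAt G (F x) := (d.Gc (F x) (d.Fm x hxM)).continuousAt h1
    have h3 := h2.tendsto
    rw [d.GF x hxM] at h3
    have h4 := h3.eventually (hA.isOpen_compl.mem_nhds hxA)
    filter_upwards [h1, h4] with z hz hz'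
    refine ⟨hz, ?_⟩
    obtain ⟨ρ, hρ, hzρ⟩ := mem_poly.1 (d.Gm z hz)
    by_cases hs : {a, b} ⊆ ρ
    · exact convexHull_mono (Finset.coe_subset.2 (hfree ρ hρ hs)) hzρ
    · exact (hz' (mem_poly.2 ⟨ρ, ⟨hρ, hs⟩, hzρ⟩)).elim
  obtain ⟨r, hr, hnb⟩ := Metric.nhds_basis_closedBall.eventually_iff.1 hnb
  let L : ℂ →ₗ[ℝ] Eu N :=
    { toFun := fun z => z.re • (b - a) + z.im • (c - a)
      map_add' := by intro z w; simp only [Complex.add_re, Complex.add_im]; module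
      map_smul' := by
        intro m z
        simp only [Complex.smul_re, Complex.smul_im, smul_eq_mul, RingHom.id_apply]
        module }
  have hL : LinearMap.ker L = ⊥ := by
    rw [LinearMap.ker_eq_bot']
    intro z hz
    have hz : z.re • (b - a) + z.im • (c - a) = 0 := hz
    have hi := affineIndependent_iff.1 (K.indep (d.sub ht)) Finset.univ
      (fun y => w4 a b c c (-z.re - z.im) z.re z.im 0 y)
      (by
        rw [Finset.sum_coe_sort _ (w4 a b c c (-z.re - z.im) z.re z.im 0)]
        rw [Finset.sum_insert (by simp [hab, hac]), Finset.sum_pair hbc]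
        simp [w4, hab.symm, hac.symm, hbc.symm])
      (by
        have := Finset.sum_coe_sort ({a, b, c} : Finset (Eu N)) (fun y => w4 a b c c (-z.re - z.im) z.re z.im 0 y • y)
        refine this.trans ?_
        rw [Finset.sum_insert (by simp [hab, hac]), Finset.sum_pair hbc]
        simp [w4, hab.symm, hac.symm, hbc.symm]
        rw [← hz]
        module)
    have h1 := hi ⟨b, by simp⟩ (Finset.mem_univ _)
    have h2 := hi ⟨c, by simp⟩ (Finset.mem_univ _)
    simp [w4, hab.symm, hac.symm, hbc.symm] at h1 h2
    exact Complex.ext h1 h2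
  obtain ⟨A, hA⟩ := LinearMap.exists_leftInverse_of_injective L hL
  have hAL : ∀ z, A (L z) = z := fun z => by
    have := LinearMap.congr_fun hA z
    simpa using this
  have hAc : Continuous A := LinearMap.continuous_of_finiteDimensional A
  have hy : ∀ y w, Wt {a, b, c} w y → y - a = L ⟨w b, w c⟩ := by
    intro y w hw
    have e1 := hw.2.2.1
    have e2 := hw.2.2.2
    rw [Finset.sum_insert (by simp [hab, hac]), Finset.sum_pair hbc] at e1 e2
    have e3 : w a = 1 - w b - w c := by linarith
    show y - a = w b • (b - a) + w c • (c - a)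
    rw [← e2, e3]
    module
  have hmem : ∀ z ∈ closedBall (0:ℂ) r, F x + z ∈ closedBall (F x) r := by
    intro z hz
    simpa [mem_closedBall, dist_eq_norm] using hz
  let f : ℂ → ℂ := fun z => A (G (F x + z) - a)
  have hfc : ContinuousOn f (closedBall 0 r) := by
    have h1 : ContinuousOn (fun z => G (F x + z)) (closedBall 0 r) :=
      d.Gc.comp (by fun_prop) fun z hz => (hnb (hmem z hz)).1
    exact hAc.comp_continuousOn (h1.sub continuousOn_const)
  have hLA : ∀ z ∈ closedBall (0:ℂ) r, L (f z) = G (F x + z) - a := by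
    intro z hz
    obtain ⟨w, hw⟩ := exists_Wt (hnb (hmem z hz)).2
    show L (A (G (F x + z) - a)) = _
    rw [hy _ w hw, hAL]
  have him := iod f r hr hfc (by
    intro z hz z' hz' hzz
    have h1 := hLA z hz
    rw [hzz, hLA z' hz'] at h1
    have h2 : G (F x + z') = G (F x + z) := by
      have := congrArg (· + a) h1
      simpa using this
    have h3 := d.FG _ (hnb (hmem z hz)).1
    rw [← h2, d.FG _ (hnb (hmem z' hz')).1] at h3
    exact (add_left_cancel h3).symm)
  have f0 : (f 0).im = 0 := by
    show (A (G (F x + 0) - a)).im = 0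
    rw [add_zero, d.GF x hxM, hy _ _ hwx, hAL]
    simp [w4, hac.symm, hbc.symm]
  have hpos : ∀ z ∈ f '' closedBall 0 r, 0 ≤ z.im := by
    rintro _ ⟨z, hz, rfl⟩
    obtain ⟨w, hw⟩ := exists_Wt (hnb (hmem z hz)).2
    show 0 ≤ (A (G (F x + z) - a)).im
    rw [hy _ w hw, hAL]
    exact hw.1 c
  obtain ⟨ε, hε, hsub⟩ := Metric.mem_nhds_iff.1 him
  have := hpos _ (hsub (show f 0 - (ε/2 : ℝ) * Complex.I ∈ ball (f 0) ε by
    rw [mem_ball, dist_eq_norm]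
    simp [abs_of_pos hε]
    linarith))
  simp [f0] at this
  linarith

end topo4

section topo5
open Set Metric Topology
variable {N : ℕ}
variable {K : Geometry.SimplicialComplex ℝ (Eu N)} {M : Set (Finset (Eu N))} {F : Eu N → ℂ}
    {G : ℂ → Eu N}

/-- faces avoiding `x` -/
def Av (M : Set (Finset (Eu N))) (x : Eu N) : Set (Eu N) := poly {ρ ∈ M | x ∉ ρ}

theorem Dk.Av_closed (d : Dk K M F G) (x : Eu N) : IsClosed (Av M x) :=
  union_closed (d.fin.subset (sep_subset _ _))

theorem Dk.not_Av (d : Dk K M F G) {σ : Finset (Eu N)} (hσ : σ ∈ M) {w : Eu N → ℝ} {x y : Eu N} (hw : Wt σ w y)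
    (hx : w x ≠ 0) : y ∈ poly M \ Av M x := by
  refine ⟨mem_poly.2 ⟨σ, hσ, hw.hull⟩, fun h => ?_⟩
  obtain ⟨ρ, ⟨hρ, hxρ⟩, h⟩ := mem_poly.1 h
  exact hxρ (wt_mem K (d.sub hσ) (d.sub hρ) hw h hx)

theorem mem_of_not_Av {σ : Finset (Eu N)} (hσ : σ ∈ M) {x y : Eu N} (hy : y ∈ convexHull ℝ (σ : Set (Eu N)))
    (h : y ∉ Av M x) : x ∈ σ := by
  by_contra hx
  exact h (mem_poly.2 ⟨σ, ⟨hσ, hx⟩, hy⟩)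

theorem Dk.triv (d : Dk K M F G) (c : Eu N → Eu N → ZMod 2) (hc0 : ∀ x, c x x = 0)
    (hc : ∀ t ∈ M, ∀ x ∈ t, ∀ y ∈ t, ∀ z ∈ t, c x y + c y z = c x z) :
    ∃ k : Eu N → Eu N → ZMod 2, (∀ x, ContinuousOn (k x) (poly M \ Av M x)) ∧
      ∀ x y p, p ∈ poly M → p ∉ Av M x → p ∉ Av M y → k y p = k x p + c x y := by
  let H : C(unitInterval × closedBall (0:ℂ) 1, closedBall (0:ℂ) 1) :=
    ⟨fun p => ⟨(p.1.1 : ℂ) * p.2.1, by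
      rw [mem_closedBall_zero_iff, norm_mul, Complex.norm_real, Real.norm_of_nonneg p.1.2.1]
      have := mem_closedBall_zero_iff.1 p.2.2
      exact mul_le_one₀ p.1.2.2 (norm_nonneg _) this⟩, by
      apply Continuous.subtype_mk
      exact (Complex.continuous_ofReal.comp (continuous_subtype_val.comp continuous_fst)).mul
        (continuous_subtype_val.comp continuous_snd)⟩
  have hGc : Continuous fun z : closedBall (0:ℂ) 1 => G z.1 := continuousOn_iff_continuous_domRestrict.1 d.Gc
  obtain ⟨g, hg, hgc⟩ := cover_trivial (B := closedBall (0:ℂ) 1) ⟨0, by simp⟩ H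
    (by intro b; apply Subtype.ext; simp [H]) (by intro b; apply Subtype.ext; simp [H])
    (fun x : Eu N => {z | G z.1 ∉ Av M x})
    (fun x => (d.Av_closed x).isOpen_compl.preimage hGc)
    (by
      intro p
      obtain ⟨σ, hσ, hp⟩ := mem_poly.1 (d.Gm p.1 p.2)
      obtain ⟨w, hw⟩ := exists_Wt hp
      obtain ⟨x, -, hx⟩ := Finset.exists_ne_zero_of_sum_ne_zero (s := σ) (f := w) (by rw [hw.2.2.1]; norm_num)
      exact ⟨x, (d.not_Av hσ hw hx).2⟩) c hc0
    (by
      intro x y z p hx hy hz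
      obtain ⟨σ, hσ, hp⟩ := mem_poly.1 (d.Gm p.1 p.2)
      exact hc σ hσ x (mem_of_not_Av hσ hp hx) y (mem_of_not_Av hσ hp hy) z (mem_of_not_Av hσ hp hz))
  refine ⟨fun x y => if hy : y ∈ poly M then g x ⟨F y, d.Fm y hy⟩ else 0, ?_, ?_⟩
  · intro x
    rw [continuousOn_iff_continuous_domRestrict]
    have h1 : Continuous (fun y : (poly M \ Av M x : Set (Eu N)) => (⟨F y.1, d.Fm y.1 y.2.1⟩ : closedBall (0:ℂ) 1)) := by
      apply Continuous.subtype_mk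
      exact continuousOn_iff_continuous_domRestrict.1 (d.Fc.mono sdiff_subset)
    have h2 := (hg x).comp_continuous h1 (by
      intro y
      show G (F y.1) ∉ Av M x
      rw [d.GF y.1 y.2.1]
      exact y.2.2)
    refine h2.congr ?_
    intro y
    simp only [domRestrict_apply]
    rw [dif_pos y.2.1]
    rfl
  · intro x y p hp hx hy
    simp only [dif_pos hp]
    apply hgc
    · show G (F p) ∉ Av M x
      rwa [d.GF p hp]
    · show G (F p) ∉ Av M y
      rwa [d.GF p hp]

theorem Dk.cob (d : Dk K M F G) (c : Eu N → Eu N → ZMod 2) (hc0 : ∀ x, c x x = 0)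
    (hc : ∀ t ∈ M, ∀ x ∈ t, ∀ y ∈ t, ∀ z ∈ t, c x y + c y z = c x z) :
    ∃ γ : Eu N → ZMod 2, ∀ t ∈ M, ∀ a ∈ t, ∀ b ∈ t, c a b = γ a + γ b := by
  obtain ⟨k, hk, hkc⟩ := d.triv c hc0 hc
  refine ⟨fun x => k x x, ?_⟩
  intro t ht a ha b hb
  by_cases hab : a = b
  · subst hab; rw [hc0, zmod2_add_self]
  have key : ∀ a ∈ t, ∀ b ∈ t, a ≠ b → ∀ s : ℝ, 0 ≤ s → s < 1 → k a ((1 - s) • a + s • b) = k a a := by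
    intro a ha b hb hab s h0 h1
    have hsub : (fun s : ℝ => (1 - s) • a + s • b) '' Ico 0 1 ⊆ poly M \ Av M a := by
      rintro _ ⟨s, hs, rfl⟩
      have hw := (wt_edge hab hs.1 hs.2.le).mono (τ := t) (by simp [Finset.insert_subset_iff, ha, hb])
      refine d.not_Av ht hw ?_
      have := hs.2
      simp; linarith
    have hpc : IsPreconnected ((fun s : ℝ => (1 - s) • a + s • b) '' Ico 0 1) :=
      isPreconnected_Ico.image _ (by fun_prop)
    refine hpc.constant ((hk a).mono hsub) ⟨s, ⟨h0, h1⟩, rfl⟩ ⟨0, by simp, by simp⟩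
  have k1 := key a ha b hb hab (1/2) (by norm_num) (by norm_num)
  have k2 := key b hb a ha (Ne.symm hab) (1/2) (by norm_num) (by norm_num)
  have hm : (1 - (1/2:ℝ)) • b + (1/2:ℝ) • a = (1 - (1/2:ℝ)) • a + (1/2:ℝ) • b := by module
  rw [hm] at k2
  have hw := (wt_edge hab (s := 1/2) (by norm_num) (by norm_num)).mono (τ := t) (by simp [Finset.insert_subset_iff, ha, hb])
  have ma := d.not_Av ht hw (x := a) (by simp; norm_num)
  have mb := d.not_Av ht hw (x := b) (by simp [Ne.symm hab])
  have := hkc a b _ ma.1 ma.2 mb.2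
  rw [k1, k2] at this
  show c a b = k a a + k b b
  rw [this, ← add_assoc, zmod2_add_self, zero_add]

theorem third {V : Type*} {a b : V} (hab : a ≠ b) {r : Finset V} (hr : r.card = 3) (ha : a ∈ r) (hb : b ∈ r) :
    ∃ c, a ≠ c ∧ b ≠ c ∧ r = {a, b, c} := by
  have h : ({a, b} : Finset V) ⊆ r := pair_sub.2 ⟨ha, hb⟩
  have hc : (r \ {a, b}).card = 1 := by
    rw [Finset.card_sdiff_of_subset h, hr, pair_card hab]
  obtain ⟨c, hc⟩ := Finset.card_eq_one.1 hc
  have hcm : c ∈ r \ {a, b} := by rw [hc]; simp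
  simp only [Finset.mem_sdiff, Finset.mem_insert, Finset.mem_singleton, not_or] at hcm
  refine ⟨c, fun h => hcm.2.1 h.symm, fun h => hcm.2.2 h.symm, ?_⟩
  rw [← Finset.union_sdiff_of_subset h, hc]
  ext y
  simp only [Finset.mem_union, Finset.mem_insert, Finset.mem_singleton]
  tauto

theorem Dk.on_free (d : Dk K M F G) {T : Finset (Finset (Eu N))} (hT : ∀ t, t ∈ T ↔ t ∈ M ∧ t.card = 3)
    {x : Eu N} (hx : x ∈ poly M) (hxV : x ∉ Vt M) (h1 : ‖F x‖ = 1) :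
    ∃ e, Free T e ∧ x ∈ convexHull ℝ (e : Set (Eu N)) := by
  obtain ⟨σ, hσ, hxσ⟩ := mem_poly.1 hx
  obtain ⟨t, ht, ht3, hσt⟩ := d.pure hσ
  obtain ⟨w, hw⟩ := exists_Wt (convexHull_mono (Finset.coe_subset.2 hσt) hxσ)
  have hpos : ∀ i, w i ≠ 0 → 0 < w i := fun i hi => lt_of_le_of_ne (hw.1 i) (Ne.symm hi)
  have hwe : Wt (t.filter (w · ≠ 0)) w x := hw.restrict (Finset.filter_subset _ _) (by
    intro i hi hi'
    simpa [hi] using hi')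
  have hle : (t.filter (w · ≠ 0)).card ≤ 3 := ht3 ▸ Finset.card_le_card (Finset.filter_subset _ _)
  interval_cases hcard : (t.filter (w · ≠ 0)).card
  · rw [Finset.card_eq_zero.1 hcard] at hwe
    have := hwe.2.2.1
    simp at this
  · obtain ⟨y, hy⟩ := Finset.card_eq_one.1 hcard
    rw [hy] at hwe
    have hyt : y ∈ t := by
      have : y ∈ t.filter (w · ≠ 0) := by rw [hy]; simp
      exact (Finset.mem_filter.1 this).1
    have e1 := hwe.2.2.1
    have e2 := hwe.2.2.2
    rw [Finset.sum_singleton] at e1 e2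
    rw [e1, one_smul] at e2
    exact (hxV (e2 ▸ d.vt ht hyt)).elim
  · obtain ⟨a, b, hab, he⟩ := Finset.card_eq_two.1 hcard
    have ha : a ∈ t.filter (w · ≠ 0) := by rw [he]; simp
    have hb : b ∈ t.filter (w · ≠ 0) := by rw [he]; simp
    rw [Finset.mem_filter] at ha hb
    refine ⟨_, ⟨hcard, t, (hT t).2 ⟨ht, ht3⟩, Finset.filter_subset _ _, ?_⟩, hwe.hull⟩
    intro s hs hes
    by_contra hst
    rw [hT] at hs
    have has : a ∈ s := hes (by rw [he]; simp)
    have hbs : b ∈ s := hes (by rw [he]; simp)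
    obtain ⟨c, hac, hbc, hc⟩ := third hab ht3 ha.1 hb.1
    obtain ⟨f, haf, hbf, hf⟩ := third hab hs.2 has hbs
    have hcf : c ≠ f := by
      rintro rfl
      exact hst (hf.trans hc.symm)
    rw [he] at hwe
    have e1 := hwe.2.2.1
    have e2 := hwe.2.2.2
    rw [Finset.sum_pair hab] at e1 e2
    have := (d.edge_in hab hac hbc haf hbf hcf (by convert ht; rw [hc]; ext y; simp) (by convert hs.1; rw [hf]; ext y; simp) (hpos a ha.2) (hpos b hb.2) e1).1
    rw [e2] at this
    exact absurd h1 this.ne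
  · have hall : t.filter (w · ≠ 0) = t := Finset.eq_of_subset_of_card_le (Finset.filter_subset _ _) (by rw [hcard, ht3])
    rw [Finset.filter_eq_self] at hall
    obtain ⟨a, b, c, hab, hac, hbc, rfl⟩ := Finset.card_eq_three.1 ht3
    have e1 := hw.2.2.1
    have e2 := hw.2.2.2
    rw [Finset.sum_insert (by simp [hab, hac]), Finset.sum_pair hbc, ← add_assoc] at e1 e2
    have := d.tri_in hab hac hbc ht (hpos a (hall a (by simp))) (hpos b (hall b (by simp))) (hpos c (hall c (by simp))) e1
    rw [e2] at this
    exact absurd h1 this.ne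

theorem Dk.free_conn (d : Dk K M F G) {T : Finset (Finset (Eu N))} (hT : ∀ t, t ∈ T ↔ t ∈ M ∧ t.card = 3)
    (γ : Eu N → ZMod 2) (hγ : ∀ e, Free T e → ∀ a ∈ e, ∀ b ∈ e, γ a = γ b) :
    ∀ e, Free T e → ∀ e', Free T e' → ∀ a ∈ e, ∀ b ∈ e', γ a = γ b := by
  intro e he e' he' a ha b hb
  have hFM : ∀ e, Free T e → e ∈ M := by
    rintro e ⟨h2, t, ht, het, -⟩
    exact d.cx.2 t ((hT t).1 ht).1 e het (by rintro rfl; simp at h2)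
  by_contra hab
  let E : Set (Finset (Eu N)) := {f | Free T f ∧ ∀ x ∈ f, γ x = γ a}
  let E' : Set (Finset (Eu N)) := {f | Free T f ∧ ∀ x ∈ f, γ x ≠ γ a}
  have hE : IsClosed (poly E) := union_closed (d.fin.subset fun f hf => hFM f hf.1)
  have hE' : IsClosed (poly E') := union_closed (d.fin.subset fun f hf => hFM f hf.1)
  have hGc : Continuous fun z : sphere (0:ℂ) 1 => G z.1 :=
    continuousOn_iff_continuous_domRestrict.1 (d.Gc.mono sphere_subset_closedBall)
  have hrank : 1 < Module.rank ℝ ℂ := by rw [Complex.rank_real_complex]; norm_num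
  have : ConnectedSpace (sphere (0:ℂ) 1) := Subtype.connectedSpace (isConnected_sphere hrank 0 zero_le_one)
  have : Nontrivial (sphere (0:ℂ) 1) := ⟨⟨⟨1, by simp⟩, ⟨-1, by simp⟩, by
    intro h
    have := congrArg (fun z : sphere (0:ℂ) 1 => z.1.re) h
    norm_num at this⟩⟩
  let Bd : Set (sphere (0:ℂ) 1) := {z | G z.1 ∈ Vt M}
  have hBd : Bd.Finite := by
    refine Set.Finite.preimage ?_ d.Vt_fin (f := fun z : sphere (0:ℂ) 1 => G z.1)
    intro z _ z' _ h
    have h : G z.1 = G z'.1 := h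
    apply Subtype.ext
    rw [← d.FG z.1 (sphere_subset_closedBall z.2), ← d.FG z'.1 (sphere_subset_closedBall z'.2), h]
  have hdense : Dense (univ \ Bd) := dense_univ.sdiff_finite hBd
  have hcl : IsClosed ({z : sphere (0:ℂ) 1 | G z.1 ∈ poly E} ∪ {z : sphere (0:ℂ) 1 | G z.1 ∈ poly E'}) :=
    (hE.preimage hGc).union (hE'.preimage hGc)
  have hsub : univ \ Bd ⊆ ({z : sphere (0:ℂ) 1 | G z.1 ∈ poly E} ∪ {z : sphere (0:ℂ) 1 | G z.1 ∈ poly E'}) := by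
    rintro z ⟨-, hz⟩
    have hzc := sphere_subset_closedBall z.2
    obtain ⟨f, hf, hzf⟩ := d.on_free hT (d.Gm z.1 hzc) hz (by rw [d.FG z.1 hzc]; simpa using z.2)
    obtain ⟨x, hx⟩ : f.Nonempty := Finset.card_pos.1 (by rw [hf.1]; norm_num)
    by_cases h : γ x = γ a
    · exact Or.inl (mem_poly.2 ⟨f, ⟨hf, fun y hy => (hγ f hf y hy x hx).trans h⟩, hzf⟩)
    · exact Or.inr (mem_poly.2 ⟨f, ⟨hf, fun y hy h' => h ((hγ f hf x hx y hy).trans h')⟩, hzf⟩)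
  have hcov := hcl.closure_subset_iff.2 hsub
  rw [hdense.closure_eq] at hcov
  have hpt : ∀ f, Free T f → ∃ z : sphere (0:ℂ) 1, G z.1 ∈ convexHull ℝ (f : Set (Eu N)) := by
    rintro f ⟨h2, t, ht, hft, hu⟩
    obtain ⟨p, q, hpq, rfl⟩ := Finset.card_eq_two.1 h2
    rw [hT] at ht
    obtain ⟨c, hpc, hqc, hc⟩ := third hpq ht.2 (hft (by simp)) (hft (by simp))
    have hc : t = {p, q, c} := by rw [hc]; ext y; simp
    subst hc
    have h1 := d.free_out hpq hpc hqc ht.1 (by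
      intro s hs hps
      obtain ⟨τ, hτ, hτ3, hsτ⟩ := d.pure hs
      rw [← hu τ ((hT τ).2 ⟨hτ, hτ3⟩) (hps.trans hsτ)]
      exact hsτ) (p := 1 - 1/2) (q := 1/2) (by norm_num) (by norm_num) (by norm_num)
    have hw := wt_edge hpq (s := 1/2) (by norm_num) (by norm_num)
    refine ⟨⟨F ((1 - 1/2 : ℝ) • p + (1/2 : ℝ) • q), by simpa using h1⟩, ?_⟩
    show G (F _) ∈ _
    rw [d.GF _ (mem_poly.2 ⟨_, ht.1, (hw.mono hft).hull⟩)]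
    exact hw.hull
  obtain ⟨z, -, hz, hz'⟩ := isPreconnected_closed_iff.1 (isPreconnected_univ (α := sphere (0:ℂ) 1)) _ _
    (hE.preimage hGc) (hE'.preimage hGc) hcov
    (by
      obtain ⟨z, hz⟩ := hpt e he
      exact ⟨z, mem_univ _, mem_poly.2 ⟨e, ⟨he, fun x hx => hγ e he x hx a ha⟩, hz⟩⟩)
    (by
      obtain ⟨z, hz⟩ := hpt e' he'
      exact ⟨z, mem_univ _, mem_poly.2 ⟨e', ⟨he', fun x hx h => hab (h.symm.trans (hγ e' he' x hx b hb))⟩, hz⟩⟩)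
  obtain ⟨f, ⟨hf, hf1⟩, hzf⟩ := mem_poly.1 hz
  obtain ⟨f', ⟨hf', hf1'⟩, hzf'⟩ := mem_poly.1 hz'
  obtain ⟨w, hw⟩ := exists_Wt hzf
  obtain ⟨x, hxf, hx⟩ := Finset.exists_ne_zero_of_sum_ne_zero (s := f) (f := w) (by rw [hw.2.2.1]; norm_num)
  exact hf1' x (wt_mem K (d.sub (hFM f hf)) (d.sub (hFM f' hf')) hw hzf' hx) (hf1 x hxf)

theorem Dk.J (d : Dk K M F G) {T : Finset (Finset (Eu N))} (hT : ∀ t, t ∈ T ↔ t ∈ M ∧ t.card = 3)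
    (φ : Finset (Eu N) → ZMod 2) (h0 : ∀ t ∈ T, ∑ e ∈ t.powersetCard 2, φ e = 0)
    (hF : ∀ e, Free T e → φ e = 0) :
    ∃ g : Eu N → ZMod 2, (∀ t ∈ T, ∀ e : Finset (Eu N), e.card = 2 → e ⊆ t → φ e = ∑ x ∈ e, g x) ∧
      ∀ e, Free T e → ∀ x ∈ e, g x = 0 := by
  let c : Eu N → Eu N → ZMod 2 := fun x y => if x = y then 0 else φ {x, y}
  have hcs : ∀ x y, c x y = c y x := by
    intro x y
    by_cases h : x = y
    · subst h; rfl
    · simp only [c, if_neg h, if_neg (Ne.symm h), Finset.pair_comm]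
  have hc0 : ∀ x, c x x = 0 := fun x => if_pos rfl
  obtain ⟨γ, hγ⟩ := d.cob c hc0 (by
    intro σ hσ x hx y hy z hz
    by_cases hxy : x = y
    · subst hxy; rw [hc0, zero_add]
    by_cases hyz : y = z
    · subst hyz; rw [hc0, add_zero]
    by_cases hxz : x = z
    · subst hxz; rw [hcs y x, zmod2_add_self, hc0]
    obtain ⟨t, ht, ht3, hσt⟩ := d.pure hσ
    obtain ⟨u, hxu, hyu, hu⟩ := third hxy ht3 (hσt hx) (hσt hy)
    have hzu : z = u := by
      have : z ∈ t := hσt hz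
      rw [hu] at this
      simp only [Finset.mem_insert, Finset.mem_singleton] at this
      rcases this with h | h | h
      · exact absurd h.symm hxz
      · exact absurd h.symm hyz
      · exact h
    subst hzu
    have := h0 t ((hT t).2 ⟨ht, ht3⟩)
    rw [hu, tri_sum hxy hxz hyz] at this
    simp only [c, if_neg hxy, if_neg hxz, if_neg hyz]
    have key : ∀ p q r : ZMod 2, p + q + r = 0 → p + r = q := by decide
    convert key _ _ _ this)
  have hφ : ∀ t ∈ T, ∀ a b, a ≠ b → ({a, b} : Finset (Eu N)) ⊆ t → φ {a, b} = γ a + γ b := by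
    intro t ht a b hab hs
    rw [← hγ t ((hT t).1 ht).1 a (hs (by simp)) b (hs (by simp))]
    exact (if_neg hab).symm
  have hγF : ∀ e, Free T e → ∀ a ∈ e, ∀ b ∈ e, γ a = γ b := by
    rintro e he a ha b hb
    by_cases hab : a = b
    · rw [hab]
    obtain ⟨h2, t, ht, het, -⟩ := id he
    have hpe : ({a, b} : Finset (Eu N)) = e := by
      apply Finset.eq_of_subset_of_card_le
      · simp [Finset.insert_subset_iff, ha, hb]
      · rw [h2, Finset.card_pair hab]
    have h1 := hφ t ht a b hab (hpe ▸ het)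
    rw [hpe, hF e he] at h1
    have key : ∀ p q : ZMod 2, 0 = p + q → p = q := by decide
    exact key _ _ h1
  have hconst := d.free_conn hT γ hγF
  obtain ⟨k, hk⟩ : ∃ k, ∀ e, Free T e → ∀ x ∈ e, γ x = k := by
    by_cases h : ∃ e, Free T e
    · obtain ⟨e, he⟩ := h
      obtain ⟨x, hx⟩ : e.Nonempty := Finset.card_pos.1 (by rw [he.1]; norm_num)
      exact ⟨γ x, fun e' he' y hy => hconst e' he' e he y hy x hx⟩
    · exact ⟨0, fun e he => (h ⟨e, he⟩).elim⟩
  refine ⟨fun x => γ x + k, ?_, ?_⟩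
  · intro t ht e he het
    obtain ⟨a, b, hab, rfl⟩ := Finset.card_eq_two.1 he
    rw [hφ t ht a b hab het, Finset.sum_pair hab]
    have key : ∀ p q k : ZMod 2, p + q = p + k + (q + k) := by decide
    exact key _ _ _
  · intro e he x hx
    dsimp only
    rw [hk e he x hx, zmod2_add_self]

theorem Dk.surf (d : Dk K M F G) {T : Finset (Finset (Eu N))} (hT : ∀ t, t ∈ T ↔ t ∈ M ∧ t.card = 3) :
    Surf T := by
  refine ⟨fun t ht => ((hT t).1 ht).2, ?_, ?_, ?_, ?_, ?_⟩
  · obtain ⟨σ, hσ, -⟩ := mem_poly.1 (d.Gm 0 (by simp))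
    obtain ⟨τ, hτ, hτ3, -⟩ := d.pure hσ
    exact ⟨τ, (hT τ).2 ⟨hτ, hτ3⟩⟩
  · intro e he r hr s hs t ht her hes het
    rw [hT] at hr hs ht
    exact d.deg2 he hr.1 hr.2 hs.1 hs.2 ht.1 ht.2 her hes het
  · intro x p hp s hs t ht hxs hxt
    have hp' : ∀ s ∈ M, s.card = 3 → ∀ t ∈ M, t.card = 3 → ∀ e : Finset (Eu N), e.card = 2 → x ∈ e → e ⊆ s → e ⊆ t → (p s ↔ p t) :=
      fun s hs hs3 t ht ht3 => hp s ((hT s).2 ⟨hs, hs3⟩) t ((hT t).2 ⟨ht, ht3⟩)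
    rw [hT] at hs ht
    exact ⟨d.star x p hp' hs.1 hs.2 ht.1 ht.2 hxs hxt, d.star x p hp' ht.1 ht.2 hs.1 hs.2 hxt hxs⟩
  · intro p hp s hs t ht
    have hp' : ∀ s ∈ M, s.card = 3 → ∀ t ∈ M, t.card = 3 → ∀ e : Finset (Eu N), e.card = 2 → e ⊆ s → e ⊆ t → (p s ↔ p t) :=
      fun s hs hs3 t ht ht3 => hp s ((hT s).2 ⟨hs, hs3⟩) t ((hT t).2 ⟨ht, ht3⟩)
    rw [hT] at hs ht
    exact ⟨d.dual p hp' hs.1 hs.2 ht.1 ht.2, d.dual p hp' ht.1 ht.2 hs.1 hs.2⟩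
  · intro φ h0 hF
    exact d.J hT φ h0 hF

end topo5

section asm
variable {V : Type*}

theorem pure_of {Z : Set (Finset V)} (h0 : Z.Nonempty) (h : ∀ τ ∈ Z, ∃ ρ ∈ Z, ρ.card = 3 ∧ τ ⊆ ρ) :
    PureDim Z 2 := by
  refine ⟨h0, fun σ hσ => ?_⟩
  obtain ⟨ρ, hρ, h3, hs⟩ := h σ hσ.1
  rw [hσ.2 ρ hρ hs, h3]

/-- the intersection complex at a step -/
def Zs (K L : Set (Finset V)) (v : V) (t : Finset V) (S : Set (Finset V)) : Set (Finset V) :=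
  {τ | τ ∈ K ∧ τ ⊆ insert v t ∧ ((∃ s ∈ S, τ ⊆ insert v s) ∨ τ ∈ L)}

def StepOK (K L : Set (Finset V)) (v : V) (t : Finset V) (S : Set (Finset V)) : Prop :=
  (Zs K L v t S).Nonempty ∧ ∀ τ ∈ Zs K L v t S, ∃ ρ ∈ Zs K L v t S, ρ.card = 3 ∧ τ ⊆ ρ

def OKL (K L : Set (Finset V)) (v : V) : List (Finset V) → Prop
  | [] => True
  | t :: l => t ∉ l ∧ StepOK K L v t {s | s ∈ l} ∧ OKL K L v l

def Bld (K L : Set (Finset V)) (v : V) (S : Finset (Finset V)) : Prop :=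
  ∃ l, OKL K L v l ∧ ∀ t, t ∈ l ↔ t ∈ S

theorem Bld.cons {K L : Set (Finset V)} {v : V} {S S' : Finset (Finset V)} {t : Finset V}
    (h : Bld K L v S) (ht : t ∉ S) (hS : ∀ s, s ∈ S' ↔ s = t ∨ s ∈ S)
    (hok : StepOK K L v t {s | s ∈ S}) : Bld K L v S' := by
  obtain ⟨l, hl, hm⟩ := h
  refine ⟨t :: l, ⟨fun h => ht ((hm t).1 h), ?_, hl⟩, ?_⟩
  · have : {s | s ∈ l} = {s | s ∈ S} := by ext s; exact hm s
    rw [this]; exact hok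
  · intro s
    rw [List.mem_cons, hS, hm]

theorem OKL.nodup {K L : Set (Finset V)} {v : V} : ∀ {l : List (Finset V)}, OKL K L v l → l.Nodup
  | [], _ => List.nodup_nil
  | t :: l, h => List.nodup_cons.2 ⟨h.1, OKL.nodup h.2.2⟩

theorem down_of {K L : Set (Finset V)} {v : V} (lL : List (Finset V)) (hlL : L = generatedByL K lL) :
    ∀ l : List (Finset V), OKL K L v l → DownSteps K 3 (l.map (insert v) ++ lL) l.length
  | [], _ => by
    intro i hi
    simp at hi
  | t :: l, h => by
    intro i hi
    cases i with
    | succ i =>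
      have := down_of lL hlL l h.2.2 i (by simpa using hi)
      simpa using this
    | zero =>
      have hZ : generatedByL K [((t :: l).map (insert v) ++ lL).getD 0 ∅] ∩
          generatedByL K (((t :: l).map (insert v) ++ lL).drop (0 + 1)) = Zs K L v t {s | s ∈ l} := by
        ext τ
        have hL : τ ∈ L ↔ τ ∈ K ∧ ∃ θ ∈ lL, τ ⊆ θ := by
          conv_lhs => rw [hlL]
          rfl
        simp only [Zs, Set.mem_ofPred_eq, hL]
        simp [generatedByL]
        constructor
        · rintro ⟨⟨h1, h2⟩, -, θ, h3 | h3, h4⟩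
          · obtain ⟨a, ha, rfl⟩ := h3
            exact ⟨h1, h2, Or.inl ⟨a, ha, h4⟩⟩
          · exact ⟨h1, h2, Or.inr ⟨h1, θ, h3, h4⟩⟩
        · rintro ⟨h1, h2, ⟨s, hs, h3⟩ | ⟨-, θ, h3, h4⟩⟩
          · exact ⟨⟨h1, h2⟩, h1, _, Or.inl ⟨s, hs, rfl⟩, h3⟩
          · exact ⟨⟨h1, h2⟩, h1, θ, Or.inr h3, h4⟩
      rw [hZ]
      exact pure_of h.2.1.1 h.2.1.2

theorem step_ok {K L : Set (Finset V)} {v : V} {T TD : Finset (Finset V)} {t : Finset V} (hT : Surf T)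
    (hg : Good T t) (hvt : v ∉ t)
    (hKt : ∀ τ : Finset V, τ ⊆ insert v t → τ ≠ ∅ → τ ∈ K)
    (h1 : ∀ r ∈ T, v ∉ r → r ∈ TD) (h2 : ∀ r ∈ T, v ∈ r → r ∈ L)
    (hvTD : ∀ r ∈ TD, v ∉ r)
    (h3 : ∀ τ ∈ L, τ ⊆ insert v t → (τ ⊆ t ∧ t ∈ L) ∨ ∃ r ∈ T, r ≠ t ∧ τ.erase v ⊆ r) :
    StepOK K L v t {s | s ∈ T.erase t ∩ TD} := by
  have ht3 := hT.card3 t hg.mem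
  have hmem : ∀ e : Finset V, e.card = 2 → e ⊆ t → (∃ r ∈ T, r ≠ t ∧ e ⊆ r) →
      insert v e ∈ Zs K L v t {s | s ∈ T.erase t ∩ TD} ∧ (insert v e).card = 3 := by
    rintro e he het ⟨r, hr, hrt, her⟩
    have hve : v ∉ e := fun h => hvt (het h)
    have hc : (insert v e).card = 3 := by rw [Finset.card_insert_of_notMem hve, he]
    refine ⟨⟨hKt _ (Finset.insert_subset_insert v het) (by simp), Finset.insert_subset_insert v het, ?_⟩, hc⟩
    by_cases hvr : v ∈ r
    · right
      have : insert v e = r := Finset.eq_of_subset_of_card_le (Finset.insert_subset hvr her) (by rw [hc, hT.card3 r hr])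
      rw [this]
      exact h2 r hr hvr
    · left
      refine ⟨r, ?_, Finset.insert_subset_insert v her⟩
      simp only [Set.mem_ofPred_eq, Finset.mem_inter, Finset.mem_erase]
      exact ⟨⟨hrt, hr⟩, h1 r hr hvr⟩
  obtain ⟨e0, he0, he0t, hr0⟩ := hg.nf
  have hm0 := hmem e0 he0 he0t hr0
  refine ⟨⟨_, hm0.1⟩, ?_⟩
  rintro τ ⟨hτK, hτt, hτ⟩
  have hsub : τ ⊆ insert v (τ.erase v) := by
    intro y hy
    by_cases h : y = v
    · simp [h]
    · simp [h, hy]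
  have hut : τ.erase v ⊆ t := by
    intro y hy
    rw [Finset.mem_erase] at hy
    exact (Finset.mem_insert.1 (hτt hy.2)).resolve_left hy.1
  have fin : ∀ r ∈ T, r ≠ t → τ.erase v ⊆ r → ∃ e : Finset V, e.card = 2 ∧ e ⊆ t ∧ (∃ r ∈ T, r ≠ t ∧ e ⊆ r) ∧ τ.erase v ⊆ e := by
    intro r hr hrt hur
    have hle : (τ.erase v).card ≤ 3 := ht3 ▸ Finset.card_le_card hut
    interval_cases hc : (τ.erase v).card
    · rw [Finset.card_eq_zero.1 hc]
      exact ⟨e0, he0, he0t, hr0, by simp⟩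
    · obtain ⟨x, hx⟩ := Finset.card_eq_one.1 hc
      rw [hx] at hut hur ⊢
      simp only [Finset.singleton_subset_iff] at hut hur ⊢
      obtain ⟨e, he, het, hxe, hr'⟩ := hg.pure hT hut hr hrt hur
      exact ⟨e, he, het, hr', hxe⟩
    · exact ⟨_, hc, hut, ⟨r, hr, hrt, hur⟩, Finset.Subset.refl _⟩
    · exfalso
      have e1 := Finset.eq_of_subset_of_card_le hut (by rw [hc, ht3])
      have e2 := Finset.eq_of_subset_of_card_le hur (by rw [hc, hT.card3 r hr])
      exact hrt (e2.symm.trans e1)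
  have fin' : ∀ r ∈ T, r ≠ t → τ.erase v ⊆ r → ∃ ρ ∈ Zs K L v t {s | s ∈ T.erase t ∩ TD}, ρ.card = 3 ∧ τ ⊆ ρ := by
    intro r hr hrt hur
    obtain ⟨e, he, het, her, hue⟩ := fin r hr hrt hur
    have := hmem e he het her
    exact ⟨_, this.1, this.2, hsub.trans (Finset.insert_subset_insert v hue)⟩
  rcases hτ with ⟨s, hs, hτs⟩ | hτL
  · simp only [Set.mem_ofPred_eq, Finset.mem_inter, Finset.mem_erase] at hs
    refine fin' s hs.1.2 hs.1.1 ?_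
    intro y hy
    rw [Finset.mem_erase] at hy
    exact (Finset.mem_insert.1 (hτs hy.2)).resolve_left hy.1
  · rcases h3 τ hτL hτt with ⟨ha, hb⟩ | ⟨r, hr, hrt, hur⟩
    · refine ⟨t, ⟨hKt t (Finset.subset_insert _ _) (by rintro rfl; simp at ht3), Finset.subset_insert _ _, Or.inr hb⟩, ht3, ha⟩
    · exact fin' r hr hrt hur

theorem card_le_of_pure {K : Set (Finset V)} (hfin : K.Finite) {n : ℕ} (h : PureDim K n) {σ : Finset V}
    (hσ : σ ∈ K) : ∃ τ, IsFacet K τ ∧ τ ∈ K ∧ σ ⊆ τ ∧ τ.card = n + 1 := by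
  obtain ⟨τ, hστ, hτ⟩ := hfin.exists_le_maximal hσ
  have hf : IsFacet K τ := ⟨hτ.prop, fun ρ hρ h => le_antisymm h (hτ.le_of_ge hρ h)⟩
  exact ⟨τ, hf, hτ.prop, hστ, h.2 τ hf⟩

theorem comb_main (K L P D : Set (Finset V)) (v : V) (hfin : K.Finite) (hKpure : PureDim K 3)
    (hKcx : IsComplex K) (hLsub : L ⊆ K) (hPsub : P ⊆ K) (hLcx : IsComplex L) (hPcx : IsComplex P)
    (hLpure : PureDim L 3) (hunion : K = L ∪ P) (hvD : ∀ σ ∈ D, v ∉ σ) (hDcx : IsComplex D)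
    (hP : ∀ σ, σ ∈ P ↔ σ ∈ D ∨ (∃ τ ∈ D, σ = insert v τ) ∨ σ = {v})
    (hbd : L ∩ P ⊆ bdry P 3)
    (hD3 : ∀ σ ∈ D, σ.card ≤ 3) (hX3 : ∀ σ ∈ L ∩ P, σ.card ≤ 3)
    (TD TX : Finset (Finset V)) (hTD : ∀ t, t ∈ TD ↔ t ∈ D ∧ t.card = 3)
    (hTX : ∀ t, t ∈ TX ↔ t ∈ L ∩ P ∧ t.card = 3) (hD : Surf TD) (hX : Surf TX)
    (hDp : ∀ σ ∈ D, ∃ τ ∈ D, τ.card = 3 ∧ σ ⊆ τ) (hXp : ∀ σ ∈ L ∩ P, ∃ τ ∈ L ∩ P, τ.card = 3 ∧ σ ⊆ τ) :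
    ShellsDownTo K 3 L := by
  have hvTD : ∀ t ∈ TD, v ∉ t := fun t ht => hvD t ((hTD t).1 ht).1
  have hins : ∀ t ∈ TD, insert v t ∈ P := fun t ht => (hP _).2 (Or.inr (Or.inl ⟨t, ((hTD t).1 ht).1, rfl⟩))
  have hinsc : ∀ t ∈ TD, (insert v t).card = 4 := fun t ht => by
    rw [Finset.card_insert_of_notMem (hvTD t ht), ((hTD t).1 ht).2]
  have hKt : ∀ t ∈ TD, ∀ τ : Finset V, τ ⊆ insert v t → τ ≠ ∅ → τ ∈ K := fun t ht τ h1 h2 =>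
    hPsub (hPcx.2 _ (hins t ht) τ h1 h2)
  have hinsinj : ∀ s ∈ TD, ∀ t ∈ TD, insert v s = insert v t → s = t := by
    intro s hs t ht h
    have := congrArg (fun x => Finset.erase x v) h
    simpa [Finset.erase_insert (hvTD s hs), Finset.erase_insert (hvTD t ht)] using this
  -- structure of the triangles of the intersection
  have hXv : ∀ t ∈ TX, v ∉ t → t ∈ TD := by
    intro t ht hvt
    rw [hTX] at ht
    rw [hTD]
    refine ⟨?_, ht.2⟩
    rcases (hP t).1 ht.1.2 with h | ⟨τ, -, rfl⟩ | rfl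
    · exact h
    · simp at hvt
    · simp at hvt
  let A : Finset (Finset V) := (TD.biUnion (fun t => t.powersetCard 2)).filter fun e => Free TD e ∧ insert v e ∈ TX
  have hA : ∀ e ∈ A, Free TD e ∧ insert v e ∈ TX := fun e he => (Finset.mem_filter.1 he).2
  have hXA : ∀ t ∈ TX, v ∈ t → t ∈ A.image (insert v) := by
    intro t ht hvt
    have ht' := (hTX t).1 ht
    obtain ⟨e, heD, hte⟩ : ∃ e ∈ D, t = insert v e := by
      rcases (hP t).1 ht'.1.2 with h | h | rfl
      · exact absurd hvt (hvD t h)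
      · exact h
      · have := ht'.2
        simp at this
    have hve := hvD e heD
    have he2 : e.card = 2 := by
      have := ht'.2
      rw [hte, Finset.card_insert_of_notMem hve] at this
      omega
    obtain ⟨τ, hτ, hτ3, heτ⟩ := hDp e heD
    have hτT : τ ∈ TD := (hTD τ).2 ⟨hτ, hτ3⟩
    obtain ⟨-, θ, ⟨-, hθ3, hθu⟩, htθ⟩ := hbd ht'.1
    have htθ : t = θ := Finset.eq_of_subset_of_card_le htθ (by rw [hθ3, ht'.2])
    rw [← htθ] at hθu
    have hfree : Free TD e := by
      refine ⟨he2, τ, hτT, heτ, ?_⟩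
      intro s hs hes
      apply hinsinj s hs τ hτT
      exact hθu.unique ⟨hins s hs, hinsc s hs, hte ▸ Finset.insert_subset_insert v hes⟩
        ⟨hins τ hτT, hinsc τ hτT, hte ▸ Finset.insert_subset_insert v heτ⟩
    refine Finset.mem_image.2 ⟨e, ?_, hte.symm⟩
    refine Finset.mem_filter.2 ⟨Finset.mem_biUnion.2 ⟨τ, hτT, Finset.mem_powersetCard.2 ⟨heτ, he2⟩⟩, hfree, hte ▸ ht⟩
  have hglue := surf_glue hD hX hvTD hA hXA
  have hMv : ∀ r ∈ TD ∪ A.image (insert v), v ∈ r → r ∈ TX := by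
    intro r hr hvr
    rcases Finset.mem_union.1 hr with h | h
    · exact absurd hvr (hvTD r h)
    · obtain ⟨e, he, rfl⟩ := Finset.mem_image.1 h
      exact (hA e he).2
  have hMnv : ∀ r ∈ TD ∪ A.image (insert v), v ∉ r → r ∈ TD := by
    intro r hr hvr
    rcases Finset.mem_union.1 hr with h | h
    · exact h
    · obtain ⟨e, he, rfl⟩ := Finset.mem_image.1 h
      simp at hvr
  have hTXM : TX ⊆ TD ∪ A.image (insert v) := by
    intro t ht
    by_cases hvt : v ∈ t
    · exact Finset.mem_union_right _ (hXA t ht hvt)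
    · exact Finset.mem_union_left _ (hXv t ht hvt)
  have hXL : ∀ t ∈ TX, t ∈ L := fun t ht => ((hTX t).1 ht).1.1
  -- faces of L inside a tetrahedron of P
  have hLX : ∀ t ∈ TD, ∀ τ ∈ L, τ ⊆ insert v t → ∃ r ∈ TX, τ ⊆ r := by
    intro t ht τ hτ hτt
    obtain ⟨r, hr, hr3, hτr⟩ := hXp τ ⟨hτ, hPcx.2 _ (hins t ht) τ hτt (hLcx.1 τ hτ)⟩
    exact ⟨r, (hTX r).2 ⟨hr, hr3⟩, hτr⟩
  -- first stage
  obtain ⟨Y, hYS, hYX, hYv, hYQ⟩ : ∃ Y : Finset (Finset V), Surf Y ∧ Y ⊆ TX ∧ (∀ t ∈ TX, v ∈ t → t ∈ Y) ∧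
      Bld K L v (Y ∩ TD) := by
    by_cases hne : ∃ t ∈ TX, v ∈ t
    · refine ⟨_, hX.starSurf v hne, Finset.filter_subset _ _, fun t ht hv => Finset.mem_filter.2 ⟨ht, hv⟩, [], trivial, ?_⟩
      intro t
      simp only [List.not_mem_nil, Finset.mem_inter, Finset.mem_filter, false_iff]
      rintro ⟨⟨-, h1⟩, h2⟩
      exact hvTD t h2 h1
    · obtain ⟨t, ht⟩ := hX.ne
      have hvt : v ∉ t := fun h => hne ⟨t, ht, h⟩
      have htD := hXv t ht hvt
      refine ⟨{t}, surf_singleton (hX.card3 t ht), by simpa using ht, fun s hs hv => (hne ⟨s, hs, hv⟩).elim, ?_⟩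
      refine Bld.cons (S := ∅) (t := t) ⟨[], trivial, by simp⟩ (by simp) ?_ ?_
      · intro s
        simp only [Finset.mem_inter, Finset.mem_singleton, Finset.notMem_empty, or_false]
        exact ⟨fun h => h.1, fun h => ⟨h, h ▸ htD⟩⟩
      · have htZ : t ∈ Zs K L v t {s | s ∈ (∅ : Finset (Finset V))} :=
          ⟨hLsub (hXL t ht), Finset.subset_insert _ _, Or.inr (hXL t ht)⟩
        refine ⟨⟨t, htZ⟩, ?_⟩
        rintro τ ⟨hτK, hτt, hτ⟩
        have hτL : τ ∈ L := by
          rcases hτ with ⟨s, hs, -⟩ | h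
          · simp at hs
          · exact h
        obtain ⟨r, hr, hτr⟩ := hLX t htD τ hτL hτt
        refine ⟨t, htZ, hX.card3 t ht, ?_⟩
        intro y hy
        refine (Finset.mem_insert.1 (hτt hy)).resolve_left ?_
        rintro rfl
        exact hne ⟨r, hr, hτr hy⟩
  have hcons : ∀ T : Finset (Finset V), ∀ t ∈ T, t ∈ TD → Bld K L v (T.erase t ∩ TD) →
      StepOK K L v t {s | s ∈ T.erase t ∩ TD} → Bld K L v (T ∩ TD) := by
    intro T t ht htD hB hok
    refine hB.cons (t := t) (by simp) ?_ hok
    intro s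
    simp only [Finset.mem_inter, Finset.mem_erase]
    constructor
    · rintro ⟨h1, h2⟩
      by_cases h : s = t
      · exact Or.inl h
      · exact Or.inr ⟨⟨h, h1⟩, h2⟩
    · rintro (rfl | h)
      · exact ⟨ht, htD⟩
      · exact ⟨h.1.2, h.2⟩
  have st1 : Bld K L v (TX ∩ TD) := by
    refine chain hYS (fun T => Bld K L v (T ∩ TD)) hYQ TX ?_ hX hYX
    intro T hTX' hYT hT t ht htY hg hB
    have htX := hTX' ht
    have hvt : v ∉ t := fun h => htY (hYv t htX h)
    have htD := hXv t htX hvt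
    refine hcons T t ht htD hB (step_ok hT hg hvt (hKt t htD) (fun r hr hv => hXv r (hTX' hr) hv)
      (fun r hr _ => hXL r (hTX' hr)) hvTD ?_)
    intro τ hτ hτt
    by_cases hvτ : v ∈ τ
    · right
      obtain ⟨r, hr, hτr⟩ := hLX t htD τ hτ hτt
      refine ⟨r, hYT (hYv r hr (hτr hvτ)), ?_, (Finset.erase_subset _ _).trans hτr⟩
      rintro rfl
      exact hvt (hτr hvτ)
    · left
      refine ⟨?_, hXL t htX⟩
      intro y hy
      refine (Finset.mem_insert.1 (hτt hy)).resolve_left ?_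
      rintro rfl
      exact hvτ hy
  have st2 : Bld K L v ((TD ∪ A.image (insert v)) ∩ TD) := by
    refine chain hX (fun T => Bld K L v (T ∩ TD)) st1 _ ?_ hglue hTXM
    intro T hTM hXT hT t ht htX hg hB
    have hvt : v ∉ t := fun h => htX (hMv t (hTM ht) h)
    have htD := hMnv t (hTM ht) hvt
    refine hcons T t ht htD hB (step_ok hT hg hvt (hKt t htD) (fun r hr hv => hMnv r (hTM hr) hv)
      (fun r hr hv => hXL r (hMv r (hTM hr) hv)) hvTD ?_)
    intro τ hτ hτt
    right
    obtain ⟨r, hr, hτr⟩ := hLX t htD τ hτ hτt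
    refine ⟨r, hXT hr, ?_, (Finset.erase_subset _ _).trans hτr⟩
    rintro rfl
    exact htX hr
  obtain ⟨l, hl, hlm⟩ := st2
  have hlm : ∀ t, t ∈ l ↔ t ∈ TD := by
    intro t
    rw [hlm, Finset.mem_inter, Finset.mem_union]
    tauto
  -- the facets of L
  have hLfin : L.Finite := hfin.subset hLsub
  have hK4 : ∀ σ ∈ K, σ.card ≤ 4 := by
    intro σ hσ
    obtain ⟨τ, -, -, hs, hc⟩ := card_le_of_pure hfin hKpure hσ
    have := Finset.card_le_card hs
    omega
  let lL : List (Finset V) := (hLfin.toFinset.filter (fun σ => σ.card = 4)).toList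
  have hlL : ∀ σ, σ ∈ lL ↔ σ ∈ L ∧ σ.card = 4 := by
    intro σ
    simp [lL]
  have hLgen : L = generatedByL K lL := by
    ext σ
    constructor
    · intro hσ
      obtain ⟨τ, -, hτ, hs, hc⟩ := card_le_of_pure hLfin hLpure hσ
      exact ⟨hLsub hσ, τ, (hlL τ).2 ⟨hτ, hc⟩, hs⟩
    · rintro ⟨hσ, θ, hθ, hs⟩
      exact hLcx.2 θ ((hlL θ).1 hθ).1 σ hs (hKcx.1 σ hσ)
  have hfac : ∀ σ, IsFacet K σ ↔ σ ∈ K ∧ σ.card = 4 := by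
    intro σ
    refine ⟨fun h => ⟨h.1, hKpure.2 σ h⟩, fun h => ⟨h.1, fun τ hτ hs => ?_⟩⟩
    exact Finset.eq_of_subset_of_card_le hs (by rw [h.2]; exact hK4 τ hτ)
  refine ⟨l.map (insert v) ++ lL, l.length, ⟨?_, ?_, ?_, down_of lL hLgen l hl⟩, ?_⟩
  · rw [List.nodup_append']
    refine ⟨?_, Finset.nodup_toList _, ?_⟩
    · refine List.Nodup.map_on ?_ hl.nodup
      intro x hx y hy h
      exact hinsinj x ((hlm x).1 hx) y ((hlm y).1 hy) h
    · intro σ h1 h2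
      obtain ⟨t, ht, rfl⟩ := List.mem_map.1 h1
      have htD := (hlm t).1 ht
      have h2 := (hlL _).1 h2
      have := hX3 _ ⟨h2.1, hins t htD⟩
      omega
  · intro σ
    rw [hfac, List.mem_append, List.mem_map, hlL]
    constructor
    · rintro (⟨t, ht, rfl⟩ | h)
      · have htD := (hlm t).1 ht
        exact ⟨hPsub (hins t htD), hinsc t htD⟩
      · exact ⟨hLsub h.1, h.2⟩
    · rintro ⟨hσ, hc⟩
      rw [hunion] at hσ
      rcases hσ with h | h
      · exact Or.inr ⟨h, hc⟩
      · left
        rcases (hP σ).1 h with h | ⟨τ, hτ, rfl⟩ | rfl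
        · have := hD3 σ h
          omega
        · refine ⟨τ, (hlm τ).2 ((hTD τ).2 ⟨hτ, ?_⟩), rfl⟩
          rw [Finset.card_insert_of_notMem (hvD τ hτ)] at hc
          omega
        · simp at hc
  · obtain ⟨σ, hσ⟩ := hLpure.1
    obtain ⟨τ, -, hτ, hs, hc⟩ := card_le_of_pure hLfin hLpure hσ
    have : 0 < lL.length := List.length_pos_of_mem ((hlL τ).2 ⟨hτ, hc⟩)
    simp only [List.length_append, List.length_map]
    omega
  · have : (l.map (insert v) ++ lL).drop l.length = lL := by
      have h := List.drop_left (l₁ := l.map (insert v)) (l₂ := lL)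
      rwa [List.length_map] at h
    rw [this]
    exact hLgen

theorem cl_card_insert {v : V} {σ : Finset V} (h : v ∉ σ) :
    (insert v σ).card = σ.card + 1 := Finset.card_insert_of_notMem h

end asm

/-- Lemma 6.1 (shelling a canonically triangulated polytope off). -/
theorem shells_to_L_of_cone_over_disk {N : ℕ}
    (K : Geometry.SimplicialComplex ℝ (EuclideanSpace ℝ (Fin N)))
    (hfin : K.faces.Finite)
    (hKpure : PureDim K.faces 3)
    (L P : Set (Finset (EuclideanSpace ℝ (Fin N))))
    (hLsub : L ⊆ K.faces) (hPsub : P ⊆ K.faces)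
    (hLcx : IsComplex L) (hPcx : IsComplex P)
    (hLpure : PureDim L 3) (hPpure : PureDim P 3)
    (hunion : K.faces = L ∪ P)
    (v : EuclideanSpace ℝ (Fin N))
    (D : Set (Finset (EuclideanSpace ℝ (Fin N))))
    (hDcx : IsComplex D)
    (hDdisk : IsBallSet 2 (poly D))
    (hvD : ∀ σ ∈ D, v ∉ σ)
    (hPcone : P = cone v D)
    (hLPdisk : IsBallSet 2 (poly (L ∩ P)))
    (hLPbd : L ∩ P ⊆ bdry P 3) :
    ShellsDownTo K.faces 3 L := by
  have hKcx : IsComplex K.faces := by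
    refine ⟨fun σ hσ => (K.nonempty_of_mem_faces hσ).ne_empty, fun σ hσ τ hτ hne => ?_⟩
    exact K.down_closed hσ hτ (Finset.nonempty_iff_ne_empty.2 hne)
  have hP : ∀ σ, σ ∈ P ↔ σ ∈ D ∨ (∃ τ ∈ D, σ = @insert _ _ (@Finset.instInsert _ (fun a b => Classical.propDecidable (a = b))) v τ) ∨ σ = {v} := by
    intro σ
    rw [hPcone]
    have : ∀ τ : Finset (EuclideanSpace ℝ (Fin N)), @insert _ _ (@Finset.instInsert _ (fun a b => Classical.propDecidable (a = b))) v τ = insert v τ := by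
      intro τ
      ext y
      simp
    simp only [this, cone, Set.mem_union, Set.mem_image, Set.mem_singleton_iff, or_assoc]
    constructor
    · rintro (h | ⟨τ, h1, h2⟩ | h)
      · exact Or.inl h
      · exact Or.inr (Or.inl ⟨τ, h1, h2.symm⟩)
      · exact Or.inr (Or.inr h)
    · rintro (h | ⟨τ, h1, h2⟩ | h)
      · exact Or.inl h
      · exact Or.inr (Or.inl ⟨τ, h1, h2.symm⟩)
      · exact Or.inr (Or.inr h)
  have hDK : D ⊆ K.faces := fun σ hσ => hPsub ((hP σ).2 (Or.inl hσ))
  have hD3 : ∀ σ ∈ D, σ.card ≤ 3 := by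
    intro σ hσ
    have h1 := hPsub ((hP _).2 (Or.inr (Or.inl ⟨σ, hσ, rfl⟩)))
    obtain ⟨τ, -, -, hs, hc⟩ := card_le_of_pure hfin hKpure h1
    have h2 := Finset.card_le_card hs
    have h3 := cl_card_insert (hvD σ hσ)
    rw [h3] at h2
    omega
  have hX3 : ∀ σ ∈ L ∩ P, σ.card ≤ 3 := by
    intro σ hσ
    obtain ⟨-, θ, ⟨-, hθ3, -⟩, hs⟩ := hLPbd hσ
    have := Finset.card_le_card hs
    omega
  have hXcx : IsComplex (L ∩ P) :=
    ⟨fun σ hσ => hLcx.1 σ hσ.1, fun σ hσ τ hτ hne => ⟨hLcx.2 σ hσ.1 τ hτ hne, hPcx.2 σ hσ.2 τ hτ hne⟩⟩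
  have hXK : L ∩ P ⊆ K.faces := fun σ hσ => hLsub hσ.1
  obtain ⟨F, G, d⟩ := exists_Dk K hfin D hDK hDcx hD3 hDdisk
  obtain ⟨F', G', d'⟩ := exists_Dk K hfin (L ∩ P) hXK hXcx hX3 hLPdisk
  have h1 : ∀ t, t ∈ d.fin.toFinset.filter (fun σ => σ.card = 3) ↔ t ∈ D ∧ t.card = 3 := by
    intro t; simp
  have h2 : ∀ t, t ∈ d'.fin.toFinset.filter (fun σ => σ.card = 3) ↔ t ∈ L ∩ P ∧ t.card = 3 := by
    intro t; simp
  exact comb_main K.faces L P D v hfin hKpure hKcx hLsub hPsub hLcx hPcx hLpure hunion hvD hDcx hP hLPbd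
    hD3 hX3 _ _ h1 h2 (d.surf h1) (d'.surf h2) (fun σ hσ => d.pure hσ) (fun σ hσ => d'.pure hσ)

end PaperFormal
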